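/- For x → ∞, the sum ∑_{n ≤ x} ⌊x/n⌋ equals x·log x + (2γ − 1)x + O(x^{1/3}), where γ is the Euler–Mascheroni constant. -/

import Mathlib

open Filter Finset

namespace DivisorProblem

/-- The additive character `t ↦ exp (2πit)`. -/
noncomputable def e (t : ℝ) : ℂ := Complex.exp ((2 * Real.pi * t : ℝ) * Complex.I)

lemma norm_e (t : ℝ) : ‖e t‖ = 1 := Complex.norm_exp_ofReal_mul_I _

lemma e_add (s t : ℝ) : e (s + t) = e s * e t := by
  simp only [e, ← Complex.exp_add]
  congr 1
  push_cast
  ring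

lemma e_zero : e 0 = 1 := by simp [e]

lemma conj_e (t : ℝ) : (starRingEnd ℂ) (e t) = e (-t) := by
  rw [e, e, ← Complex.exp_conj, map_mul, Complex.conj_ofReal, Complex.conj_I]
  congr 1
  push_cast
  ring

lemma e_int (k : ℤ) : e k = 1 := by
  rw [e, Complex.exp_eq_one_iff]
  exact ⟨k, by push_cast; ring⟩

lemma e_eq (t : ℝ) : e t = Real.cos (2 * Real.pi * t) + Real.sin (2 * Real.pi * t) * Complex.I := by
  rw [e, Complex.exp_mul_I, Complex.ofReal_cos, Complex.ofReal_sin]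

lemma norm_sum_e_le (s : Finset ℕ) (f : ℕ → ℝ) : ‖∑ n ∈ s, e (f n)‖ ≤ s.card := by
  refine (norm_sum_le _ _).trans ?_
  simp [norm_e]

/-! ### The Kusmin–Landau inequality -/

/-- The value of `1 / (e t - 1)`, written with a cotangent. -/
noncomputable def invEsub (t : ℝ) : ℂ :=
  -(1 / 2) - ((Real.cos (Real.pi * t) / Real.sin (Real.pi * t) / 2 : ℝ) : ℂ) * Complex.I

lemma invEsub_mul {t : ℝ} (h : Real.sin (Real.pi * t) ≠ 0) : invEsub t * (e t - 1) = 1 := by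
  have hc : e t = (2 * (Real.cos (Real.pi * t) : ℂ) ^ 2 - 1) +
      2 * (Real.sin (Real.pi * t) : ℂ) * Real.cos (Real.pi * t) * Complex.I := by
    rw [e_eq, mul_assoc 2 Real.pi t, Real.cos_two_mul, Real.sin_two_mul]
    push_cast
    ring
  have h1 : (Real.sin (Real.pi * t) : ℂ) ^ 2 + (Real.cos (Real.pi * t) : ℂ) ^ 2 = 1 := by
    exact_mod_cast Real.sin_sq_add_cos_sq (Real.pi * t)
  have h' : (Real.sin (Real.pi * t) : ℂ) ≠ 0 := by exact_mod_cast h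
  rw [hc, invEsub]
  simp only [Complex.ofReal_div, Complex.ofReal_ofNat]
  generalize (Real.sin (Real.pi * t) : ℂ) = s at *
  generalize (Real.cos (Real.pi * t) : ℂ) = c at *
  have hI := Complex.I_sq
  field_simp
  linear_combination (-2 * c * Complex.I) * h1 + (-2 * s * c ^ 2) * hI

lemma two_mul_le_sin_pi {θ t : ℝ} (hθ : 0 < θ) (h1 : θ ≤ t) (h2 : t ≤ 1 - θ) :
    2 * θ ≤ Real.sin (Real.pi * t) := by
  have hpi := Real.pi_pos
  rcases le_total t (1 / 2) with h | h
  · have := Real.mul_le_sin (x := Real.pi * t) (by nlinarith) (by nlinarith)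
    have h3 : 2 / Real.pi * (Real.pi * t) = 2 * t := by field_simp
    linarith
  · have := Real.mul_le_sin (x := Real.pi * (1 - t)) (by nlinarith) (by nlinarith)
    have h3 : 2 / Real.pi * (Real.pi * (1 - t)) = 2 * (1 - t) := by field_simp
    have h4 : Real.sin (Real.pi * (1 - t)) = Real.sin (Real.pi * t) := by
      rw [mul_sub, mul_one, Real.sin_pi_sub]
    linarith

lemma abs_cot_le {θ t : ℝ} (hθ : 0 < θ) (h1 : θ ≤ t) (h2 : t ≤ 1 - θ) :
    |Real.cos (Real.pi * t) / Real.sin (Real.pi * t)| ≤ 1 / (2 * θ) := by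
  have h := two_mul_le_sin_pi hθ h1 h2
  rw [abs_div, abs_of_pos (a := Real.sin _) (by linarith)]
  exact div_le_div₀ zero_le_one (Real.abs_cos_le_one _) (by positivity) h

lemma norm_invEsub_le {θ t : ℝ} (hθ : 0 < θ) (h1 : θ ≤ t) (h2 : t ≤ 1 - θ) :
    ‖invEsub t‖ ≤ 1 / θ := by
  have h := abs_cot_le hθ h1 h2
  refine (norm_sub_le _ _).trans ?_
  rw [norm_mul, Complex.norm_real, Complex.norm_I, Real.norm_eq_abs, abs_div, mul_one]
  have h3 : ‖(-(1 / 2) : ℂ)‖ = 1 / 2 := by simp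
  have h4 : (1 : ℝ) / 2 ≤ 1 / (2 * θ) := by
    apply one_div_le_one_div_of_le <;> linarith
  have h5 : 1 / θ = 1 / (2 * θ) + 1 / (2 * θ) := by field_simp; norm_num
  rw [h3, abs_two]
  have h6 := abs_nonneg (Real.cos (Real.pi * t) / Real.sin (Real.pi * t))
  linarith

lemma norm_invEsub_sub_le {θ s t : ℝ} (hθ : 0 < θ) (h1 : θ ≤ s) (hst : s ≤ t) (h2 : t ≤ 1 - θ) :
    ‖invEsub s - invEsub t‖ = (Real.cos (Real.pi * s) / Real.sin (Real.pi * s)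
      - Real.cos (Real.pi * t) / Real.sin (Real.pi * t)) / 2 := by
  have hs := two_mul_le_sin_pi hθ h1 (hst.trans h2)
  have ht := two_mul_le_sin_pi hθ (h1.trans hst) h2
  have h3 : invEsub s - invEsub t = ((-((Real.cos (Real.pi * s) / Real.sin (Real.pi * s)
      - Real.cos (Real.pi * t) / Real.sin (Real.pi * t)) / 2) : ℝ) : ℂ) * Complex.I := by
    simp only [invEsub]
    push_cast
    ring
  rw [h3, norm_mul, Complex.norm_I, mul_one, Complex.norm_real, norm_neg, Real.norm_eq_abs,
    abs_of_nonneg]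
  have hs0 : 0 < Real.sin (Real.pi * s) := by linarith
  have ht0 : 0 < Real.sin (Real.pi * t) := by linarith
  rw [div_sub_div _ _ hs0.ne' ht0.ne']
  have h4 : Real.cos (Real.pi * s) * Real.sin (Real.pi * t)
      - Real.sin (Real.pi * s) * Real.cos (Real.pi * t) = Real.sin (Real.pi * (t - s)) := by
    rw [mul_sub, Real.sin_sub]
    ring
  rw [h4]
  have h5 : 0 ≤ Real.sin (Real.pi * (t - s)) := by
    have := Real.pi_pos
    apply Real.sin_nonneg_of_nonneg_of_le_pi <;> nlinarith
  positivity

/-- **Kusmin–Landau inequality**: if the increments of `f` are monotone and keep a distance `θ`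
from the integers, the sum of the `e (f n)` is at most `3 / θ`. -/
lemma kusmin_landau {f : ℕ → ℝ} {p q : ℕ} {k : ℤ} {θ : ℝ} (hθ : 0 < θ)
    (hlo : ∀ n ∈ Ico p q, k + θ ≤ f (n + 1) - f n)
    (hhi : ∀ n ∈ Ico p q, f (n + 1) - f n ≤ k + 1 - θ)
    (hmono : ∀ n, p ≤ n → n + 1 < q → f (n + 1) - f n ≤ f (n + 2) - f (n + 1)) :
    ‖∑ n ∈ Ico p q, e (f n)‖ ≤ 3 / θ := by
  rcases le_or_gt q p with hqp | hqp
  · rw [Ico_eq_empty_of_le hqp]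
    simp only [sum_empty, norm_zero]
    positivity
  set d : ℕ → ℝ := fun n => f (n + 1) - f n - k with hd
  have hd1 : ∀ n ∈ Ico p q, θ ≤ d n := fun n hn => by have := hlo n hn; simp only [hd]; linarith
  have hd2 : ∀ n ∈ Ico p q, d n ≤ 1 - θ := fun n hn => by
    have := hhi n hn; simp only [hd]; linarith
  have hed : ∀ n, e (f (n + 1)) = e (f n) * e (d n) := by
    intro n
    have h : f (n + 1) = f n + d n + k := by simp only [hd]; ring
    rw [h, e_add, e_int, mul_one, e_add]
  have hterm : ∀ n ∈ Ico p q, e (f n) = invEsub (d n) * (e (f (n + 1)) - e (f n)) := by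
    intro n hn
    have h := two_mul_le_sin_pi hθ (hd1 n hn) (hd2 n hn)
    have h2 := invEsub_mul (t := d n) (by linarith)
    rw [hed]
    linear_combination -e (f n) * h2
  have key : ∀ m, p + m < q → ‖∑ n ∈ Ico p (p + m + 1), e (f n) -
      invEsub (d (p + m)) * e (f (p + m + 1))‖ ≤ 1 / θ +
      (Real.cos (Real.pi * d p) / Real.sin (Real.pi * d p)
      - Real.cos (Real.pi * d (p + m)) / Real.sin (Real.pi * d (p + m))) / 2 := by
    intro m
    induction m with
    | zero =>
      intro hm
      simp only [add_zero, Nat.Ico_succ_singleton, sum_singleton, sub_self, zero_div]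
      have hp : p ∈ Ico p q := by simp; lia
      rw [hterm p hp, mul_sub]
      simp only [sub_sub_cancel_left, norm_neg, norm_mul, norm_e, mul_one]
      exact norm_invEsub_le hθ (hd1 p hp) (hd2 p hp)
    | succ m ih =>
      intro hm
      have hm1 : p + m ∈ Ico p q := by simp; lia
      have hm2 : p + m + 1 ∈ Ico p q := by simp; lia
      have ih := ih (by lia)
      rw [show p + (m + 1) = p + m + 1 by ring, sum_Ico_succ_top (by lia), hterm _ hm2]
      have h3 := norm_invEsub_sub_le hθ (hd1 _ hm1)
        (by simp only [hd]; have := hmono (p + m) (by lia) (by lia); linarith) (hd2 _ hm2)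
      have h4 : ∀ S a b E F : ℂ, S + b * (F - E) - b * F = (S - a * E) + (a - b) * E := by
        intros; ring
      rw [h4 _ (invEsub (d (p + m)))]
      refine (norm_add_le _ _).trans ?_
      rw [norm_mul, norm_e, mul_one, h3]
      linarith
  obtain ⟨m, rfl⟩ : ∃ m, q = p + m + 1 := ⟨q - p - 1, by lia⟩
  have hp : p ∈ Ico p (p + m + 1) := by simp
  have hm : p + m ∈ Ico p (p + m + 1) := by simp
  have h1 := key m (by lia)
  have h2 := norm_invEsub_le hθ (hd1 _ hm) (hd2 _ hm)
  have h3 := abs_cot_le hθ (hd1 _ hm) (hd2 _ hm)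
  have h4 := abs_cot_le hθ (hd1 _ hp) (hd2 _ hp)
  have h5 : ‖∑ n ∈ Ico p (p + m + 1), e (f n)‖ ≤ ‖∑ n ∈ Ico p (p + m + 1), e (f n) -
      invEsub (d (p + m)) * e (f (p + m + 1))‖ + ‖invEsub (d (p + m)) * e (f (p + m + 1))‖ := by
    simpa using norm_add_le (∑ n ∈ Ico p (p + m + 1), e (f n) -
      invEsub (d (p + m)) * e (f (p + m + 1))) (invEsub (d (p + m)) * e (f (p + m + 1)))
  rw [norm_mul, norm_e, mul_one] at h5
  have h6 : 1 / θ = 1 / (2 * θ) + 1 / (2 * θ) := by field_simp; norm_num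
  have h7 : 3 / θ = 1 / θ + 1 / θ + 1 / θ := by ring
  rw [abs_le] at h3 h4
  linarith [h3.1, h4.2]

/-! ### The second difference test -/

lemma exists_threshold {g : ℕ → ℝ} {p q : ℕ} (hpq : p ≤ q)
    (hg : ∀ n, p ≤ n → n + 1 < q → g n ≤ g (n + 1)) (c : ℝ) :
    ∃ r, p ≤ r ∧ r ≤ q ∧ (∀ n ∈ Ico p r, g n < c) ∧ ∀ n ∈ Ico r q, c ≤ g n := by
  induction q, hpq using Nat.le_induction with
  | base => exact ⟨p, le_rfl, le_rfl, by simp, by simp⟩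
  | succ q hpq ih =>
    obtain ⟨r, h1, h2, h3, h4⟩ := ih fun n hn hn' => hg n hn (by lia)
    rcases lt_or_ge (g q) c with h | h
    · have hrq : r = q := by
        by_contra hne
        have hq := h4 (q - 1) (by simp; lia)
        have hm := hg (q - 1) (by lia) (by lia)
        rw [show q - 1 + 1 = q by lia] at hm
        linarith
      refine ⟨q + 1, by lia, le_rfl, fun n hn => ?_, by simp⟩
      rcases (show n ≤ q by simp at hn; lia).lt_or_eq with h' | rfl
      · exact h3 n (by simp at hn ⊢; lia)
      · exact h
    · refine ⟨r, h1, by lia, h3, fun n hn => ?_⟩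
      rcases (show n ≤ q by simp at hn; lia).lt_or_eq with h' | rfl
      · exact h4 n (by simp at hn ⊢; lia)
      · exact h

lemma sum_increments_ge {g : ℕ → ℝ} {p q : ℕ} {l : ℝ}
    (hg : ∀ n, p ≤ n → n + 1 < q → l ≤ g (n + 1) - g n) (m : ℕ) (hm : p + m < q) :
    m * l ≤ g (p + m) - g p := by
  induction m with
  | zero => simp
  | succ m ih =>
    have h1 := ih (by lia)
    have h2 := hg (p + m) (by lia) (by lia)
    rw [show p + (m + 1) = p + m + 1 by ring]
    push_cast
    linarith

/-- A stretch on which the increments of `f` grow by at least `l` at each step while staying in an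
interval of length `w` has at most `w / l + 1` terms. -/
lemma length_le_of_increments {g : ℕ → ℝ} {p q : ℕ} {l w c : ℝ} (hl : 0 < l) (hw : 0 ≤ w)
    (hpq : p ≤ q) (hg : ∀ n, p ≤ n → n + 1 < q → l ≤ g (n + 1) - g n)
    (hlo : ∀ n ∈ Ico p q, c ≤ g n) (hhi : ∀ n ∈ Ico p q, g n ≤ c + w) :
    ((q - p : ℕ) : ℝ) ≤ w / l + 1 := by
  rcases hpq.eq_or_lt with rfl | h
  · simp only [tsub_self, Nat.cast_zero]; positivity
  obtain ⟨m, rfl⟩ : ∃ m, q = p + m + 1 := ⟨q - p - 1, by lia⟩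
  have h1 := sum_increments_ge hg m (by lia)
  have h2 := hlo p (by simp)
  have h3 := hhi (p + m) (by simp)
  rw [show p + m + 1 - p = m + 1 by lia]
  push_cast
  have : (m : ℝ) ≤ w / l := by rw [le_div_iff₀ hl]; linarith
  linarith

lemma norm_sum_le_of_increments_mem {f : ℕ → ℝ} {p q : ℕ} {k : ℤ} {l : ℝ} (hl : 0 < l)
    (hl1 : l ≤ 1) (hpq : p ≤ q)
    (hf : ∀ n, p ≤ n → n + 1 < q → l ≤ (f (n + 2) - f (n + 1)) - (f (n + 1) - f n))
    (hlo : ∀ n ∈ Ico p q, k ≤ f (n + 1) - f n) (hhi : ∀ n ∈ Ico p q, f (n + 1) - f n < k + 1) :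
    ‖∑ n ∈ Ico p q, e (f n)‖ ≤ 9 / √l := by
  set s := √l with hs
  have hs0 : 0 < s := Real.sqrt_pos.2 hl
  have hs1 : s ≤ 1 := Real.sqrt_le_one.2 hl1
  have hsl : s * s = l := Real.mul_self_sqrt hl.le
  set g : ℕ → ℝ := fun n => f (n + 1) - f n with hg
  have hgl : ∀ n, p ≤ n → n + 1 < q → l ≤ g (n + 1) - g n := fun n h1 h2 => hf n h1 h2
  have hgm : ∀ n, p ≤ n → n + 1 < q → g n ≤ g (n + 1) := fun n h1 h2 => by
    have := hgl n h1 h2; linarith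
  obtain ⟨r, hr1, hr2, hr3, hr4⟩ := exists_threshold hpq hgm (k + s / 2)
  obtain ⟨t, ht1, ht2, ht3, ht4⟩ := exists_threshold hr2
    (fun n h1 h2 => hgm n (hr1.trans h1) h2) (k + 1 - s / 2)
  have hA : ‖∑ n ∈ Ico p r, e (f n)‖ ≤ 1 / (2 * s) + 1 := by
    refine (norm_sum_e_le _ _).trans ?_
    rw [Nat.card_Ico]
    have := length_le_of_increments (g := g) (c := k) (w := s / 2) hl (by positivity) hr1
      (fun n h1 h2 => hgl n h1 (by lia)) (fun n hn => hlo n (by simp at hn ⊢; lia))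
      (fun n hn => (hr3 n hn).le)
    rwa [← hsl, show s / 2 / (s * s) = 1 / (2 * s) by field_simp] at this
  have hC : ‖∑ n ∈ Ico t q, e (f n)‖ ≤ 1 / (2 * s) + 1 := by
    refine (norm_sum_e_le _ _).trans ?_
    rw [Nat.card_Ico]
    have := length_le_of_increments (g := g) (c := k + 1 - s / 2) (w := s / 2) hl (by positivity)
      ht2 (fun n h1 h2 => hgl n (by lia) (by lia)) (fun n hn => ht4 n hn)
      (fun n hn => by
        have := hhi n (by simp at hn ⊢; lia)
        simp only [hg]; linarith)
    rwa [← hsl, show s / 2 / (s * s) = 1 / (2 * s) by field_simp] at this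
  have hB : ‖∑ n ∈ Ico r t, e (f n)‖ ≤ 3 / (s / 2) :=
    kusmin_landau (k := k) (by positivity) (fun n hn => hr4 n (by simp at hn ⊢; lia))
      (fun n hn => (ht3 n hn).le) (fun n h1 h2 => hgm n (by lia) (by lia))
  rw [← sum_Ico_consecutive _ hr1 hr2, ← sum_Ico_consecutive _ ht1 ht2]
  have h1 : 1 ≤ 1 / s := by rw [le_div_iff₀ hs0]; linarith
  have h2 : 1 / (2 * s) = 1 / s / 2 := by field_simp
  have h3 : 3 / (s / 2) = 6 * (1 / s) := by field_simp; norm_num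
  have h4 : 9 / s = 9 * (1 / s) := by ring
  refine (norm_add_le _ _).trans ?_
  have := norm_add_le (∑ n ∈ Ico r t, e (f n)) (∑ n ∈ Ico t q, e (f n))
  linarith

lemma norm_sum_le_of_increments_range {f : ℕ → ℝ} {q : ℕ} {l : ℝ} (hl : 0 < l)
    (hl1 : l ≤ 1) (J : ℕ) : ∀ (p : ℕ) (k : ℤ), p ≤ q →
    (∀ n, p ≤ n → n + 1 < q → l ≤ (f (n + 2) - f (n + 1)) - (f (n + 1) - f n)) →
    (∀ n ∈ Ico p q, k ≤ f (n + 1) - f n) → (∀ n ∈ Ico p q, f (n + 1) - f n < k + J) →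
    ‖∑ n ∈ Ico p q, e (f n)‖ ≤ J * (9 / √l) := by
  induction J with
  | zero =>
    intro p k hpq hf hlo hhi
    rcases hpq.eq_or_lt with rfl | h
    · simp
    · have h1 := hlo p (by simp [h])
      have h2 := hhi p (by simp [h])
      simp only [Nat.cast_zero, add_zero] at h2
      linarith
  | succ J ih =>
    intro p k hpq hf hlo hhi
    obtain ⟨r, hr1, hr2, hr3, hr4⟩ := exists_threshold (g := fun n => f (n + 1) - f n) hpq
      (fun n h1 h2 => by have := hf n h1 h2; linarith) (k + 1)
    have h1 := norm_sum_le_of_increments_mem (k := k) hl hl1 hr1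
      (fun n h1 h2 => hf n h1 (by lia)) (fun n hn => hlo n (by simp at hn ⊢; lia)) hr3
    have h2 := ih r (k + 1) hr2 (fun n h1 h2 => hf n (by lia) h2)
      (fun n hn => by push_cast; exact hr4 n hn)
      (fun n hn => by
        have := hhi n (by simp at hn ⊢; lia)
        push_cast at this ⊢; linarith)
    rw [← sum_Ico_consecutive _ hr1 hr2]
    refine (norm_add_le _ _).trans ?_
    push_cast
    linarith

/-- **Second difference test** for exponential sums. -/
lemma second_difference_test {α : ℝ} {f : ℕ → ℝ} {L : ℕ} {l : ℝ} (hl : 0 < l)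
    (hl1 : l ≤ 1) (hα : 0 ≤ α) (hf : ∀ n < L, l ≤ (fwdDiff 1)^[2] f n ∧
      (fwdDiff 1)^[2] f n ≤ α * l) :
    ‖∑ n ∈ range L, e (f n)‖ ≤ 9 * (α + 2) * (L * √l + 1 / √l) := by
  have hD : ∀ n, (fwdDiff 1)^[2] f n = (f (n + 2) - f (n + 1)) - (f (n + 1) - f n) := by
    intro n; simp [fwdDiff]
  have hup : ∀ n, n ≤ L → f (n + 1) - f n ≤ (f 1 - f 0) + n * (α * l) := by
    intro n
    induction n with
    | zero => simp
    | succ n ih =>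
      intro hn
      have h1 := ih (by lia)
      have h2 := (hf n (by lia)).2
      rw [hD] at h2
      push_cast
      linarith
  have hdown : ∀ n, n ≤ L → f 1 - f 0 ≤ f (n + 1) - f n := by
    intro n
    induction n with
    | zero => simp
    | succ n ih =>
      intro hn
      have h1 := ih (by lia)
      have h2 := (hf n (by lia)).1
      rw [hD] at h2
      rw [show n + 1 + 1 = n + 2 by ring]
      linarith
  have hα0 : 0 ≤ L * (α * l) := by positivity
  have key := norm_sum_le_of_increments_range (f := f) (q := L) hl hl1 (⌊L * (α * l)⌋₊ + 2) 0
    ⌊f 1 - f 0⌋ (Nat.zero_le _) (fun n _ h2 => by rw [← hD]; exact (hf n (by lia)).1)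
    (fun n hn => (Int.floor_le _).trans (hdown n (by simp at hn; lia)))
    (fun n hn => by
      have hn' : n ≤ L := by simp at hn; lia
      have h1 := hup n hn'
      have h2 := Int.lt_floor_add_one (f 1 - f 0)
      have h3 := Nat.lt_floor_add_one (L * (α * l))
      have h4 : n * (α * l) ≤ L * (α * l) := by gcongr
      push_cast
      linarith)
  rw [range_eq_Ico]
  refine key.trans ?_
  have hs0 : 0 < √l := Real.sqrt_pos.2 hl
  have h1 := Nat.floor_le hα0
  push_cast
  calc ((⌊L * (α * l)⌋₊ : ℝ) + 2) * (9 / √l) ≤ (L * (α * l) + 2) * (9 / √l) := by gcongr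
    _ = 9 * (α * (L * (l / √l)) + 2 * (1 / √l)) := by ring
    _ = 9 * (α * (L * √l) + 2 * (1 / √l)) := by rw [Real.div_sqrt]
    _ ≤ _ := by
      have h2 : 0 ≤ L * √l := by positivity
      have h3 : 0 ≤ 1 / √l := by positivity
      nlinarith [mul_nonneg hα h3]

/-! ### Weyl–van der Corput differencing -/

lemma sum_natDist_le {T : ℕ → ℝ} (hT : ∀ r, 0 ≤ T r) {Q q : ℕ} (hq : q < Q) :
    ∑ q' ∈ range Q, T ((q - q') + (q' - q)) ≤ 2 * ∑ r ∈ range Q, T r := by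
  have h1 : ∑ q' ∈ range Q with q' ≤ q, T ((q - q') + (q' - q)) ≤ ∑ r ∈ range Q, T r := by
    rw [← sum_image (f := T) (g := fun q' => (q - q') + (q' - q))
      (s := {q' ∈ range Q | q' ≤ q})]
    · refine sum_le_sum_of_subset_of_nonneg ?_ fun _ _ _ => hT _
      intro r hr
      simp only [mem_image, mem_filter, mem_range] at hr ⊢
      lia
    · intro a ha b hb hab
      simp at ha hb hab
      lia
  have h2 : ∑ q' ∈ range Q with ¬ q' ≤ q, T ((q - q') + (q' - q)) ≤ ∑ r ∈ range Q, T r := by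
    rw [← sum_image (f := T) (g := fun q' => (q - q') + (q' - q))
      (s := {q' ∈ range Q | ¬ q' ≤ q})]
    · refine sum_le_sum_of_subset_of_nonneg ?_ fun _ _ _ => hT _
      intro r hr
      simp only [mem_image, mem_filter, mem_range] at hr ⊢
      lia
    · intro a ha b hb hab
      simp at ha hb hab
      lia
  rw [← sum_filter_add_sum_filter_not (range Q) (fun q' => q' ≤ q)]
  linarith

/-- The **van der Corput inequality**. -/
lemma van_der_corput_inequality (a : ℕ → ℂ) (l Q : ℕ) :
    (Q : ℝ) * ‖∑ n ∈ range l, a n‖ ^ 2 ≤ 2 * (l + Q) *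
      ∑ r ∈ range Q, ‖∑ n ∈ range (l - r), a (n + r) * (starRingEnd ℂ) (a n)‖ := by
  rcases Q.eq_zero_or_pos with rfl | hQ
  · simp
  set T : ℕ → ℝ := fun r => ‖∑ n ∈ range (l - r), a (n + r) * (starRingEnd ℂ) (a n)‖ with hT
  set c : ℕ → ℕ → ℂ := fun q m => if q ≤ m ∧ m < q + l then a (m - q) else 0 with hc
  set S := ∑ n ∈ range l, a n with hS
  have hrow : ∀ q ∈ range Q, ∑ m ∈ range (l + Q), c q m = S := by
    intro q hq
    rw [mem_range] at hq
    rw [← sum_filter, hS]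
    symm
    refine sum_bij' (fun n _ => n + q) (fun m _ => m - q) ?_ ?_ ?_ ?_ ?_ <;>
      simp only [mem_filter, mem_range] <;> intros <;> first | lia | simp
  have hcorr : ∀ q r, q + r < Q →
      ∑ m ∈ range (l + Q), c q m * (starRingEnd ℂ) (c (q + r) m) =
        ∑ n ∈ range (l - r), a (n + r) * (starRingEnd ℂ) (a n) := by
    intro q r hqr
    have : ∀ m, c q m * (starRingEnd ℂ) (c (q + r) m) = if q + r ≤ m ∧ m < q + l then
        a (m - q) * (starRingEnd ℂ) (a (m - (q + r))) else 0 := by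
      intro m
      simp only [hc]
      split_ifs <;> first | rfl | (exfalso; lia) | simp
    simp only [this]
    rw [← sum_filter]
    symm
    refine sum_bij' (fun n _ => n + (q + r)) (fun m _ => m - (q + r)) ?_ ?_ ?_ ?_ ?_ <;>
      simp only [mem_filter, mem_range]
    · intros; lia
    · intros; lia
    · intros; lia
    · intros; lia
    · intro n hn
      rw [show n + (q + r) - q = n + r by lia, show n + (q + r) - (q + r) = n by lia]
  have hcorr' : ∀ q ∈ range Q, ∀ q' ∈ range Q,
      ‖∑ m ∈ range (l + Q), c q m * (starRingEnd ℂ) (c q' m)‖ = T ((q - q') + (q' - q)) := by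
    intro q hq q' hq'
    rw [mem_range] at hq hq'
    rcases le_total q q' with h | h
    · obtain ⟨r, rfl⟩ := Nat.exists_eq_add_of_le h
      rw [hcorr q r hq', hT, show q - (q + r) + (q + r - q) = r by lia]
    · obtain ⟨r, rfl⟩ := Nat.exists_eq_add_of_le h
      rw [show q' + r - q' + (q' - (q' + r)) = r by lia]
      simp only [hT]
      rw [← hcorr q' r hq, ← Complex.norm_conj,
        map_sum]
      congr 1
      refine sum_congr rfl fun m _ => ?_
      rw [map_mul, Complex.conj_conj, mul_comm]
  have hQS : (Q : ℂ) * S = ∑ m ∈ range (l + Q), ∑ q ∈ range Q, c q m := by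
    rw [sum_comm, sum_congr rfl hrow]
    simp
  have hCS : ((Q : ℝ) * ‖S‖) ^ 2 ≤
      (l + Q) * ∑ m ∈ range (l + Q), ‖∑ q ∈ range Q, c q m‖ ^ 2 := by
    have h1 : (Q : ℝ) * ‖S‖ ≤ ∑ m ∈ range (l + Q), ‖∑ q ∈ range Q, c q m‖ := by
      rw [← Complex.norm_natCast, ← norm_mul, hQS]
      exact norm_sum_le _ _
    refine (pow_le_pow_left₀ (by positivity) h1 2).trans ?_
    have := sq_sum_le_card_mul_sum_sq (s := range (l + Q))
      (f := fun m => ‖∑ q ∈ range Q, c q m‖)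
    simpa using this
  have hexp : ∑ m ∈ range (l + Q), ‖∑ q ∈ range Q, c q m‖ ^ 2 ≤
      ∑ q ∈ range Q, ∑ q' ∈ range Q, T ((q - q') + (q' - q)) := by
    have h1 : ((∑ m ∈ range (l + Q), ‖∑ q ∈ range Q, c q m‖ ^ 2 : ℝ) : ℂ) =
        ∑ q ∈ range Q, ∑ q' ∈ range Q,
          ∑ m ∈ range (l + Q), c q m * (starRingEnd ℂ) (c q' m) := by
      push_cast
      simp_rw [← Complex.mul_conj', map_sum, sum_mul_sum]
      rw [sum_comm]
      exact sum_congr rfl fun q _ => sum_comm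
    have h2 : ∑ m ∈ range (l + Q), ‖∑ q ∈ range Q, c q m‖ ^ 2 =
        ‖((∑ m ∈ range (l + Q), ‖∑ q ∈ range Q, c q m‖ ^ 2 : ℝ) : ℂ)‖ := by
      rw [Complex.norm_real, Real.norm_eq_abs, abs_of_nonneg (by positivity)]
    rw [h2, h1]
    refine (norm_sum_le _ _).trans (sum_le_sum fun q hq => (norm_sum_le _ _).trans ?_)
    exact sum_le_sum fun q' hq' => (hcorr' q hq q' hq').le
  have hfin : ∑ q ∈ range Q, ∑ q' ∈ range Q, T ((q - q') + (q' - q)) ≤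
      Q * (2 * ∑ r ∈ range Q, T r) := by
    refine (sum_le_sum fun q hq => sum_natDist_le (T := T) (fun _ => norm_nonneg _)
      (mem_range.1 hq)).trans ?_
    simp
  have hQ0 : (0 : ℝ) < Q := by exact_mod_cast hQ
  have h3 : (Q : ℝ) * (Q * ‖S‖ ^ 2) ≤ Q * (2 * (l + Q) * ∑ r ∈ range Q, T r) := by
    calc (Q : ℝ) * (Q * ‖S‖ ^ 2) = (Q * ‖S‖) ^ 2 := by ring
      _ ≤ _ := hCS
      _ ≤ (l + Q) * (Q * (2 * ∑ r ∈ range Q, T r)) := by gcongr; exact hexp.trans hfin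
      _ = _ := by ring
  exact le_of_mul_le_mul_left h3 hQ0

lemma fwdDiff_iter_shift_sub (f : ℕ → ℝ) (k r n : ℕ) :
    (fwdDiff 1)^[k] (fun n => f (n + r) - f n) n =
      ∑ i ∈ range r, (fwdDiff 1)^[k + 1] f (n + i) := by
  have h : ∀ n, (fwdDiff 1)^[k] (fun n => f (n + r) - f n) n =
      (fwdDiff 1)^[k] f (n + r) - (fwdDiff 1)^[k] f n := by
    induction k with
    | zero => simp
    | succ k ih =>
      intro n
      simp only [Function.iterate_succ_apply', fwdDiff] at ih ⊢
      rw [ih, ih, show n + 1 + r = n + r + 1 by ring]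
      ring
  rw [h]
  have h2 : ∀ i, (fwdDiff 1)^[k + 1] f (n + i) =
      (fwdDiff 1)^[k] f (n + (i + 1)) - (fwdDiff 1)^[k] f (n + i) := by
    intro i
    rw [Function.iterate_succ_apply']
    rfl
  simp_rw [h2]
  rw [sum_range_sub (fun i => (fwdDiff 1)^[k] f (n + i))]
  simp

lemma sum_Ico_inv_sqrt_le (Q : ℕ) : ∑ r ∈ Ico 1 Q, 1 / √(r : ℝ) ≤ 2 * √Q := by
  have h : ∑ r ∈ Ico 1 (Q + 1), 1 / √(r : ℝ) ≤ 2 * √Q := by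
    induction Q with
    | zero => simp
    | succ Q ih =>
      rw [sum_Ico_succ_top (by lia)]
      have h1 : 0 < √((Q + 1 : ℕ) : ℝ) := Real.sqrt_pos.2 (by positivity)
      have h3 := Real.mul_self_sqrt (Nat.cast_nonneg (α := ℝ) Q)
      have h4 := Real.mul_self_sqrt (Nat.cast_nonneg (α := ℝ) (Q + 1))
      have h5 : 1 / √((Q + 1 : ℕ) : ℝ) ≤ 2 * (√((Q + 1 : ℕ) : ℝ) - √(Q : ℝ)) := by
        rw [div_le_iff₀ h1]
        push_cast at h4 ⊢
        nlinarith [sq_nonneg (√((Q : ℝ) + 1) - √(Q : ℝ))]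
      linarith
  refine le_trans (sum_le_sum_of_subset_of_nonneg ?_ fun _ _ _ => by positivity) h
  exact Ico_subset_Ico_right (Nat.le_succ Q)

/-- Estimate for exponential sums by `j` differencing steps of the same length `Q`, followed by the
second difference test. -/
lemma iterated_difference_test {α : ℝ} (hα : 0 ≤ α) (j : ℕ) : ∃ C : ℝ, 0 ≤ C ∧
    ∀ (f : ℕ → ℝ) (l Q : ℕ) (L d : ℝ), (l : ℝ) ≤ L → 1 ≤ Q → (Q : ℝ) ≤ L → 0 < d →
    (∀ n < l, d ≤ (fwdDiff 1)^[j + 2] f n ∧ (fwdDiff 1)^[j + 2] f n ≤ α * d) →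
    ‖∑ n ∈ range l, e (f n)‖ ^ (2 ^ j) ≤
      C * L ^ (2 ^ j) * (1 / Q + √(Q ^ j * d) + 1 / (√(Q ^ j * d) * L)) := by
  induction j with
  | zero =>
    refine ⟨9 * (α + 2), by positivity, fun f l Q L d hlL hQ hQL hd hf => ?_⟩
    have hQ0 : (1 : ℝ) ≤ Q := by exact_mod_cast hQ
    have hL : 0 < L := by linarith
    have hs : 0 < √d := Real.sqrt_pos.2 hd
    simp only [pow_zero, pow_one, one_mul]
    rcases le_total d 1 with hd1 | hd1
    · refine (second_difference_test hd hd1 hα hf).trans ?_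
      rw [mul_assoc _ L]
      have : L * (1 / Q + √d + 1 / (√d * L)) = L / Q + (L * √d + 1 / √d) := by
        field_simp
        ring
      rw [this]
      have h1 : 0 ≤ L / Q := by positivity
      have h2 : l * √d ≤ L * √d := by gcongr
      have h3 : l * √d + 1 / √d ≤ L / Q + (L * √d + 1 / √d) := by linarith
      gcongr
    · refine (norm_sum_e_le _ _).trans ?_
      rw [card_range]
      have h1 : 1 ≤ √d := Real.one_le_sqrt.2 hd1
      have h2 : 1 ≤ 1 / Q + √d + 1 / (√d * L) := by
        have : 0 ≤ 1 / (Q : ℝ) := by positivity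
        have : 0 ≤ 1 / (√d * L) := by positivity
        linarith
      calc (l : ℝ) ≤ 1 * L * 1 := by linarith
        _ ≤ _ := by
          gcongr
          linarith
  | succ j ih =>
    obtain ⟨C, hC, ih⟩ := ih
    refine ⟨4 ^ (2 ^ j) * (1 + 2 * C), by positivity, fun f l Q L d hlL hQ hQL hd hf => ?_⟩
    have hQ0 : (0 : ℝ) < Q := by exact_mod_cast hQ
    have hL : 0 < L := by linarith
    set p := 2 ^ j with hp
    set T : ℕ → ℝ := fun r => ‖∑ n ∈ range (l - r), e (f (n + r) - f n)‖ with hT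
    have hvdc := van_der_corput_inequality (fun n => e (f n)) l Q
    simp only [conj_e, ← e_add, ← sub_eq_add_neg] at hvdc
    have hsq : ‖∑ n ∈ range l, e (f n)‖ ^ 2 ≤ 4 * L * ∑ r ∈ range Q, 1 / (Q : ℝ) * T r := by
      rw [← mul_sum]
      have h0 : 0 ≤ ∑ r ∈ range Q, T r := sum_nonneg fun _ _ => norm_nonneg _
      have h1 : (Q : ℝ) * ‖∑ n ∈ range l, e (f n)‖ ^ 2 ≤ 4 * L * ∑ r ∈ range Q, T r := by
        refine hvdc.trans ?_
        have h2 : 2 * ((l : ℝ) + Q) ≤ 4 * L := by linarith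
        exact mul_le_mul_of_nonneg_right h2 h0
      rw [show 4 * L * (1 / (Q : ℝ) * ∑ r ∈ range Q, T r) =
        (4 * L * ∑ r ∈ range Q, T r) / Q by ring, le_div_iff₀ hQ0]
      linarith
    have hmean : (∑ r ∈ range Q, 1 / (Q : ℝ) * T r) ^ p ≤
        ∑ r ∈ range Q, 1 / (Q : ℝ) * T r ^ p :=
      Real.pow_arith_mean_le_arith_mean_pow _ _ _ (fun _ _ => by positivity)
        (by simp [hQ0.ne']) (fun _ _ => norm_nonneg _) p
    have hT0 : T 0 ^ p ≤ L ^ p := by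
      refine pow_le_pow_left₀ (norm_nonneg _) ?_ _
      refine (norm_sum_e_le (range (l - 0)) _).trans ?_
      simpa using hlL
    have hTr : ∀ r ∈ Ico 1 Q, T r ^ p ≤ C * L ^ p * (1 / Q + √(Q ^ (j + 1) * d) +
        1 / (√(Q ^ j * d) * L) * (1 / √r)) := by
      intro r hr
      rw [mem_Ico] at hr
      have hr0 : (0 : ℝ) < r := by exact_mod_cast (show 0 < r by lia)
      have := ih (fun n => f (n + r) - f n) (l - r) Q L (r * d)
        (by refine le_trans ?_ hlL; exact_mod_cast Nat.sub_le _ _) hQ hQL (by positivity)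
        (fun n hn => by
          rw [fwdDiff_iter_shift_sub]
          constructor
          · have h := card_nsmul_le_sum (range r) (fun i => (fwdDiff 1)^[j + 2 + 1] f (n + i)) d
              (fun i hi => (hf (n + i) (by simp at hi; lia)).1)
            simpa using h
          · have h := sum_le_card_nsmul (range r) (fun i => (fwdDiff 1)^[j + 2 + 1] f (n + i))
              (α * d) (fun i hi => (hf (n + i) (by simp at hi; lia)).2)
            rw [card_range, nsmul_eq_mul] at h
            linarith)
      refine this.trans ?_
      have h1 : √(Q ^ j * (r * d)) ≤ √(Q ^ (j + 1) * d) := by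
        apply Real.sqrt_le_sqrt
        rw [pow_succ, mul_assoc]
        have : (r : ℝ) ≤ Q := by exact_mod_cast hr.2.le
        gcongr
      have h2 : √(Q ^ j * (r * d)) = √(Q ^ j * d) * √r := by
        rw [← Real.sqrt_mul (by positivity)]
        congr 1
        ring
      have h3 : 1 / (√(Q ^ j * (r * d)) * L) = 1 / (√(Q ^ j * d) * L) * (1 / √r) := by
        rw [h2]
        have : 0 < √(r : ℝ) := Real.sqrt_pos.2 hr0
        have : 0 < √(Q ^ j * d) := Real.sqrt_pos.2 (by positivity)
        field_simp
      rw [h3]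
      gcongr
    have hsum : ∑ r ∈ range Q, 1 / (Q : ℝ) * T r ^ p ≤ L ^ p * (1 + 2 * C) *
        (1 / Q + √(Q ^ (j + 1) * d) + 1 / (√(Q ^ (j + 1) * d) * L)) := by
      rw [← mul_sum, range_eq_Ico, sum_eq_sum_Ico_succ_bot (by lia), zero_add]
      have h1 := sum_le_sum hTr
      rw [← mul_sum, sum_add_distrib, ← mul_sum, sum_const, Nat.card_Ico, nsmul_eq_mul] at h1
      have h2 := sum_Ico_inv_sqrt_le Q
      set X := 1 / (Q : ℝ) + √(Q ^ (j + 1) * d) with hX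
      have hs : 0 < √(Q ^ j * d) := Real.sqrt_pos.2 (by positivity)
      have hsQ : 0 < √(Q : ℝ) := Real.sqrt_pos.2 hQ0
      have h3 : √(Q ^ (j + 1) * d) = √(Q ^ j * d) * √Q := by
        rw [← Real.sqrt_mul (by positivity)]
        congr 1
        ring
      have hX0 : 0 ≤ X := by positivity
      have h4 : ((Q - 1 : ℕ) : ℝ) * X + 1 / (√(Q ^ j * d) * L) * ∑ r ∈ Ico 1 Q, 1 / √(r : ℝ) ≤
          Q * (X + 2 * (1 / (√(Q ^ (j + 1) * d) * L))) := by
        have h5 : ((Q - 1 : ℕ) : ℝ) ≤ Q := by exact_mod_cast Nat.sub_le _ _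
        have h6 : 1 / (√(Q ^ j * d) * L) * (2 * √Q) =
            Q * (2 * (1 / (√(Q ^ (j + 1) * d) * L))) := by
          rw [h3]
          have := Real.mul_self_sqrt hQ0.le
          field_simp
          nlinarith
        rw [mul_add (Q : ℝ), ← h6]
        gcongr
      set Y := 1 / (√(Q ^ (j + 1) * d) * L) with hY
      have hY0 : 0 ≤ Y := by positivity
      have h7 : ∑ r ∈ Ico 1 Q, T r ^ p ≤ C * L ^ p * (Q * (X + 2 * Y)) :=
        h1.trans (by gcongr)
      have h8 : 1 / (Q : ℝ) ≤ X := by rw [hX]; linarith [Real.sqrt_nonneg (Q ^ (j + 1) * d)]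
      calc 1 / (Q : ℝ) * (T 0 ^ p + ∑ r ∈ Ico 1 Q, T r ^ p) ≤
          1 / (Q : ℝ) * (L ^ p + C * L ^ p * (Q * (X + 2 * Y))) := by gcongr
        _ = L ^ p * (1 / Q + C * (X + 2 * Y)) := by field_simp
        _ ≤ L ^ p * (X + Y + 2 * C * (X + Y)) := by
          gcongr ?_ * ?_
          nlinarith [mul_nonneg hC hX0]
        _ = _ := by ring
    calc ‖∑ n ∈ range l, e (f n)‖ ^ 2 ^ (j + 1) = (‖∑ n ∈ range l, e (f n)‖ ^ 2) ^ p := by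
          rw [← pow_mul, hp, pow_succ, mul_comm]
      _ ≤ (4 * L * ∑ r ∈ range Q, 1 / (Q : ℝ) * T r) ^ p := by gcongr
      _ = (4 * L) ^ p * (∑ r ∈ range Q, 1 / (Q : ℝ) * T r) ^ p := mul_pow _ _ _
      _ ≤ (4 * L) ^ p * (L ^ p * (1 + 2 * C) *
        (1 / Q + √(Q ^ (j + 1) * d) + 1 / (√(Q ^ (j + 1) * d) * L))) := by
          gcongr
          exact hmean.trans hsum
      _ = _ := by
          rw [mul_pow, pow_succ 2 j, ← hp, mul_comm p 2, two_mul, pow_add]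
          ring

/-! ### Exponential sums with a square root phase -/

lemma exists_fwdDiff_iter_eq (k : ℕ) : ∀ {F : ℕ → ℝ → ℝ},
    (∀ i t, 0 < t → HasDerivAt (F i) (F (i + 1) t) t) → ∀ {x : ℝ}, 0 < x →
    ∃ ξ, x ≤ ξ ∧ ξ ≤ x + k ∧ (fwdDiff 1)^[k] (F 0) x = F k ξ := by
  induction k with
  | zero => intro F _ x _; exact ⟨x, le_rfl, by simp, by simp⟩
  | succ k ih =>
    intro F hF x hx
    obtain ⟨ξ, h1, h2, h3⟩ := ih (F := fun i t => F i (t + 1) - F i t)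
      (fun i t ht => by
        have := ((hF i (t + 1) (by linarith)).comp_add_const t 1).sub (hF i t ht)
        exact this) hx
    have hξ : 0 < ξ := by linarith
    obtain ⟨c, hc, hc'⟩ := exists_hasDerivAt_eq_slope (F k) (F (k + 1)) (a := ξ) (b := ξ + 1)
      (by linarith)
      (fun t ht => (hF k t (by linarith [ht.1])).continuousAt.continuousWithinAt)
      (fun t ht => hF k t (by linarith [ht.1]))
    refine ⟨c, by linarith [hc.1], by push_cast; linarith [hc.2], ?_⟩
    rw [hc', Function.iterate_succ_apply]
    change (fwdDiff 1)^[k] (fun t => F 0 (t + 1) - F 0 t) x = _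
    rw [h3]
    ring

lemma fwdDiff_iter_comp_natCast (g : ℝ → ℝ) (x : ℝ) (k n : ℕ) :
    (fwdDiff 1)^[k] (fun n : ℕ => g (x + n)) n = (fwdDiff 1)^[k] g (x + n) := by
  simp only [fwdDiff_iter_eq_sum_shift]
  refine sum_congr rfl fun i _ => ?_
  congr 2
  simp
  ring

/-- The successive derivatives of `t ↦ 2 √(A t)`. -/
noncomputable def sqrtDeriv (A : ℝ) (i : ℕ) (t : ℝ) : ℝ :=
  2 * √A * (∏ m ∈ range i, (1 / 2 - (m : ℝ))) * t ^ (1 / 2 - (i : ℝ))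

lemma hasDerivAt_sqrtDeriv (A : ℝ) (i : ℕ) {t : ℝ} (ht : 0 < t) :
    HasDerivAt (sqrtDeriv A i) (sqrtDeriv A (i + 1) t) t := by
  have h := (Real.hasDerivAt_rpow_const (p := 1 / 2 - (i : ℝ)) (Or.inl ht.ne')).const_mul
    (2 * √A * (∏ m ∈ range i, (1 / 2 - (m : ℝ))))
  refine h.congr_deriv ?_
  simp only [sqrtDeriv, prod_range_succ]
  rw [show (1 / 2 - ((i + 1 : ℕ) : ℝ)) = 1 / 2 - (i : ℝ) - 1 by push_cast; ring]
  ring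

lemma sqrtDeriv_zero {A t : ℝ} (hA : 0 ≤ A) : sqrtDeriv A 0 t = 2 * √(A * t) := by
  simp only [sqrtDeriv]
  rw [Real.sqrt_mul hA, Real.sqrt_eq_rpow t]
  simp
  ring

lemma sqrtDeriv_five (A t : ℝ) : sqrtDeriv A 5 t = 105 / 16 * √A * t ^ (-(9 / 2) : ℝ) := by
  have h : (1 / 2 - ((5 : ℕ) : ℝ)) = -(9 / 2) := by norm_num
  simp only [sqrtDeriv, prod_range_succ, h]
  norm_num only [prod_range_zero, Nat.cast_ofNat]
  ring

/-- Estimate for `∑ e(2 √(A ν))` over `ν ≍ m`, in terms of `u` and `w` with `A = u ^ 80 * m ^ 9`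
and `w ^ 8 = m`. -/
lemma exists_norm_sum_e_sqrt_le : ∃ C : ℝ, 0 ≤ C ∧ ∀ (m u w : ℝ) (ν l : ℕ), 1 ≤ m → 0 < u → 0 < w →
    w ^ 8 = m → m / 16 ≤ ν → ν + l ≤ m + 1 →
    ‖∑ n ∈ range l, e (2 * √(u ^ 80 * m ^ 9 * (ν + n)))‖ ≤ C * m * (u + 1 / (u * w)) := by
  obtain ⟨C, hC, hmain⟩ := iterated_difference_test (α := (112 : ℝ) ^ (9 / 2 : ℝ)) (by positivity) 3
  set β : ℝ := 105 / 16 * (7 : ℝ) ^ (-(9 / 2) : ℝ) with hβ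
  have hβ0 : 0 < β := by positivity
  set K : ℝ := C * 2 ^ 8 * (1 + √(8 * β) + 1 / √β) with hK
  have hK0 : 0 ≤ K := by positivity
  refine ⟨2 + (K + 1), by positivity, fun m u w ν l hm hu hw hwm hν hl => ?_⟩
  have hm0 : 0 < m := by linarith
  have hl2 : (l : ℝ) ≤ 2 * m := by
    have : (0 : ℝ) ≤ ν := by positivity
    linarith
  have htriv : ‖∑ n ∈ range l, e (2 * √(u ^ 80 * m ^ 9 * (ν + n)))‖ ≤ 2 * m := by
    refine (norm_sum_e_le _ (fun n : ℕ => 2 * √(u ^ 80 * m ^ 9 * (ν + n)))).trans ?_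
    simpa using hl2
  have htriv' : 1 ≤ u + 1 / (u * w) →
      ‖∑ n ∈ range l, e (2 * √(u ^ 80 * m ^ 9 * (ν + n)))‖ ≤
        (2 + (K + 1)) * m * (u + 1 / (u * w)) := by
    intro h
    refine htriv.trans ?_
    have : 2 * m ≤ (2 + (K + 1)) * m := by nlinarith
    nlinarith [mul_pos hm0 hm0]
  by_cases hu1 : 1 ≤ u
  · exact htriv' (by have : 0 < 1 / (u * w) := by positivity
                     linarith)
  push Not at hu1
  by_cases huw : u * w ≤ 1
  · refine htriv' ?_
    have : 1 ≤ 1 / (u * w) := by rw [le_div_iff₀ (by positivity)]; linarith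
    linarith
  push Not at huw
  set Q : ℕ := ⌈1 / u ^ 8⌉₊ with hQ
  have hu8 : 0 < u ^ 8 := by positivity
  have hu8' : u ^ 8 < 1 := pow_lt_one₀ hu.le hu1 (by norm_num)
  have hQ1 : 1 / u ^ 8 ≤ Q := Nat.le_ceil _
  have hQ2 : (Q : ℝ) ≤ 2 / u ^ 8 := by
    have h1 : (Q : ℝ) < 1 / u ^ 8 + 1 := Nat.ceil_lt_add_one (by positivity)
    have h2 : 1 ≤ 1 / u ^ 8 := by rw [le_div_iff₀ hu8]; linarith
    have h3 : 2 / u ^ 8 = 1 / u ^ 8 + 1 / u ^ 8 := by ring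
    linarith
  have hQ0 : 1 ≤ Q := Nat.one_le_iff_ne_zero.mpr (by
    intro h
    rw [h] at hQ1
    have : 0 < 1 / u ^ 8 := by positivity
    simp at hQ1
    linarith [pow_nonneg hu.le 8])
  have hum : 1 < u ^ 8 * m := by
    rw [← hwm, ← mul_pow]; exact one_lt_pow₀ huw (by norm_num)
  have hQL : (Q : ℝ) ≤ 2 * m := by
    refine hQ2.trans ?_
    rw [div_le_iff₀ hu8]
    nlinarith
  set d : ℝ := β * u ^ 40 with hd
  have hd0 : 0 < d := by positivity
  have hA : 0 ≤ u ^ 80 * m ^ 9 := by positivity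
  have hsq : √(u ^ 80 * m ^ 9) = u ^ 40 * m ^ (9 / 2 : ℝ) := by
    rw [Real.sqrt_eq_iff_mul_self_eq hA (by positivity)]
    have : m ^ (9 / 2 : ℝ) * m ^ (9 / 2 : ℝ) = m ^ 9 := by
      rw [← Real.rpow_add hm0, ← Real.rpow_natCast]; norm_num
    linear_combination (-u ^ 80) * this
  have hdiff : ∀ n < l, d ≤ (fwdDiff 1)^[3 + 2]
        (fun n : ℕ => 2 * √(u ^ 80 * m ^ 9 * (ν + n))) n ∧
      (fwdDiff 1)^[3 + 2] (fun n : ℕ => 2 * √(u ^ 80 * m ^ 9 * (ν + n))) n ≤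
        112 ^ (9 / 2 : ℝ) * d := by
    intro n hn
    have hn' : (n : ℝ) + 1 ≤ l := by exact_mod_cast hn
    have hν0 : 0 < (ν : ℝ) := by linarith
    obtain ⟨ξ, h1, h2, h3⟩ := exists_fwdDiff_iter_eq 5 (F := sqrtDeriv (u ^ 80 * m ^ 9))
      (fun i t ht => hasDerivAt_sqrtDeriv _ i ht) (x := ν + n) (by positivity)
    have h0 : (fun n : ℕ => 2 * √(u ^ 80 * m ^ 9 * (ν + n))) =
        fun n : ℕ => sqrtDeriv (u ^ 80 * m ^ 9) 0 (ν + n) := by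
      funext n; rw [sqrtDeriv_zero hA]
    rw [h0, fwdDiff_iter_comp_natCast, h3, sqrtDeriv_five, hsq]
    have hξ : 0 < ξ := by linarith [Nat.cast_nonneg (α := ℝ) n]
    have hξ1 : m / 16 ≤ ξ := by linarith [Nat.cast_nonneg (α := ℝ) n]
    have hξ2 : ξ ≤ 7 * m := by push_cast at h2; linarith
    have e1 : m ^ (9 / 2 : ℝ) * m ^ (-(9 / 2) : ℝ) = 1 := by
      rw [← Real.rpow_add hm0]; norm_num
    have up : ξ ^ (-(9 / 2) : ℝ) ≤ (m / 16) ^ (-(9 / 2) : ℝ) :=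
      Real.rpow_le_rpow_of_nonpos (by positivity) hξ1 (by norm_num)
    have lo : (7 * m) ^ (-(9 / 2) : ℝ) ≤ ξ ^ (-(9 / 2) : ℝ) :=
      Real.rpow_le_rpow_of_nonpos hξ hξ2 (by norm_num)
    rw [Real.mul_rpow (by norm_num) hm0.le] at lo
    rw [div_eq_mul_inv m, Real.mul_rpow hm0.le (by norm_num), Real.inv_rpow (by norm_num),
      Real.rpow_neg (x := 16) (by norm_num) (9 / 2 : ℝ), inv_inv] at up
    have e7 : (112 : ℝ) ^ (9 / 2 : ℝ) * 7 ^ (-(9 / 2) : ℝ) = 16 ^ (9 / 2 : ℝ) := by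
      rw [show (112 : ℝ) = 16 * 7 by norm_num, Real.mul_rpow (by norm_num) (by norm_num),
        mul_assoc, ← Real.rpow_add (by norm_num)]
      norm_num
    constructor
    · calc d = 105 / 16 * (u ^ 40 * m ^ (9 / 2 : ℝ)) *
            (7 ^ (-(9 / 2) : ℝ) * m ^ (-(9 / 2) : ℝ)) := by
            rw [hd, hβ]
            linear_combination (-(105 / 16) * 7 ^ (-(9 / 2) : ℝ) * u ^ 40) * e1
        _ ≤ _ := by gcongr
    · calc _ ≤ 105 / 16 * (u ^ 40 * m ^ (9 / 2 : ℝ)) *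
            (m ^ (-(9 / 2) : ℝ) * 16 ^ (9 / 2 : ℝ)) := by gcongr
        _ = _ := by
            rw [hd, hβ]
            linear_combination (105 / 16 * 16 ^ (9 / 2 : ℝ) * u ^ 40) * e1 -
              105 / 16 * u ^ 40 * e7
  have hfin := hmain (fun n : ℕ => 2 * √(u ^ 80 * m ^ 9 * (ν + n))) l Q (2 * m) d hl2 hQ0 hQL hd0
    hdiff
  have b1 : 1 / (Q : ℝ) ≤ u ^ 8 := by
    rw [div_le_iff₀ (by positivity)]
    rw [div_le_iff₀ hu8] at hQ1
    linarith
  have b2 : √((Q : ℝ) ^ 3 * d) ≤ √(8 * β) * u ^ 8 := by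
    rw [← Real.sqrt_sq hu8.le, ← Real.sqrt_mul (by positivity)]
    refine Real.sqrt_le_sqrt ?_
    calc (Q : ℝ) ^ 3 * d ≤ (2 / u ^ 8) ^ 3 * d := by gcongr
      _ = _ := by rw [hd]; field_simp; norm_num
  have b3 : √β * u ^ 8 ≤ √((Q : ℝ) ^ 3 * d) := by
    rw [← Real.sqrt_sq hu8.le, ← Real.sqrt_mul (by positivity)]
    refine Real.sqrt_le_sqrt ?_
    calc _ = (1 / u ^ 8) ^ 3 * d := by rw [hd]; field_simp
      _ ≤ _ := by gcongr
  have hsβ : 0 < √β := Real.sqrt_pos.mpr hβ0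
  have b4 : 1 / (√((Q : ℝ) ^ 3 * d) * (2 * m)) ≤ 1 / √β * (1 / (u * w) ^ 8) := by
    calc _ ≤ 1 / (√β * u ^ 8 * m) := by gcongr; linarith
      _ = _ := by rw [mul_pow, hwm]; field_simp
  have hsum : ‖∑ n ∈ range l, e (2 * √(u ^ 80 * m ^ 9 * (ν + n)))‖ ^ 8 ≤
      K * m ^ 8 * (u ^ 8 + (1 / (u * w)) ^ 8) := by
    refine (show _ ≤ _ from hfin).trans ?_
    norm_num only
    have hc : 0 ≤ C * (2 * m) ^ 8 := by positivity
    have hx : (0:ℝ) ≤ 1 / (u * w) ^ 8 := by positivity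
    have hs : 0 ≤ √(8 * β) := Real.sqrt_nonneg _
    calc C * (2 * m) ^ 8 * (1 / (Q : ℝ) + √((Q : ℝ) ^ 3 * d) + 1 / (√((Q : ℝ) ^ 3 * d) * (2 * m)))
        ≤ C * (2 * m) ^ 8 * (u ^ 8 + √(8 * β) * u ^ 8 + 1 / √β * (1 / (u * w) ^ 8)) := by
          gcongr
      _ ≤ C * (2 * m) ^ 8 * ((1 + √(8 * β) + 1 / √β) * (u ^ 8 + 1 / (u * w) ^ 8)) := by
          gcongr
          have : 0 ≤ 1 / √β := by positivity
          nlinarith [mul_nonneg hs hx, mul_nonneg this hu8.le]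
      _ = _ := by rw [hK, one_div_pow]; ring
  have hx0 : 0 ≤ 1 / (u * w) := by positivity
  have h8 : ‖∑ n ∈ range l, e (2 * √(u ^ 80 * m ^ 9 * (ν + n)))‖ ^ 8 ≤
      ((K + 1) * m * (u + 1 / (u * w))) ^ 8 := by
    refine hsum.trans ?_
    rw [mul_pow, mul_pow]
    have k1 : K ≤ (K + 1) ^ 8 := by
      have := le_self_pow₀ (show 1 ≤ K + 1 by linarith) (n := 8) (by norm_num)
      linarith
    have k2 : u ^ 8 + (1 / (u * w)) ^ 8 ≤ (u + 1 / (u * w)) ^ 8 := by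
      exact pow_add_pow_le hu.le hx0 (by norm_num)
    gcongr
  have h9 := le_of_pow_le_pow_left₀ (by norm_num) (by positivity) h8
  refine h9.trans ?_
  have : 0 ≤ m * (u + 1 / (u * w)) := by positivity
  linarith

/-! ### Oscillatory integrals -/

open MeasureTheory intervalIntegral

lemma continuous_e : Continuous e := by unfold e; fun_prop

lemma hasDerivAt_e_comp {φ : ℝ → ℝ} {φ' u : ℝ} (h : HasDerivAt φ φ' u) :
    HasDerivAt (fun u => e (φ u)) (2 * Real.pi * Complex.I * φ' * e (φ u)) u := by
  have h1 : HasDerivAt (fun u => ((2 * Real.pi * φ u : ℝ) : ℂ) * Complex.I)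
      (((2 * Real.pi * φ' : ℝ) : ℂ) * Complex.I) u :=
    ((h.const_mul (2 * Real.pi)).ofReal_comp).mul_const _
  refine h1.cexp.congr_deriv ?_
  rw [e]
  push_cast
  ring

section

variable {a b : ℝ} {H H' φ φ' : ℝ → ℝ}

/-- Integration by parts against `e ∘ φ`. -/
lemma integral_mul_deriv_e (hab : a ≤ b) (hH : ∀ u ∈ Set.Icc a b, HasDerivAt H (H' u) u)
    (hφ : ∀ u ∈ Set.Icc a b, HasDerivAt φ (φ' u) u) (cH : ContinuousOn H' (Set.Icc a b))
    (cφ : ContinuousOn φ' (Set.Icc a b)) :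
    2 * Real.pi * Complex.I * ∫ u in a..b, (H u * φ' u : ℝ) * e (φ u) =
      H b * e (φ b) - H a * e (φ a) - ∫ u in a..b, H' u * e (φ u) := by
  have huIcc : Set.uIcc a b = Set.Icc a b := Set.uIcc_of_le hab
  have ce : ContinuousOn (fun u => e (φ u)) (Set.Icc a b) := fun u hu =>
    (hasDerivAt_e_comp (hφ u hu)).continuousAt.continuousWithinAt
  have h := integral_mul_deriv_eq_deriv_mul (a := a) (b := b) (u := fun u => (H u : ℂ))
    (v := fun u => e (φ u)) (u' := fun u => (H' u : ℂ))
    (v' := fun u => 2 * Real.pi * Complex.I * φ' u * e (φ u))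
    (fun u hu => (hH u (huIcc ▸ hu)).ofReal_comp)
    (fun u hu => hasDerivAt_e_comp (hφ u (huIcc ▸ hu)))
    (ContinuousOn.intervalIntegrable (by
      rw [huIcc]; exact Complex.continuous_ofReal.comp_continuousOn cH))
    (ContinuousOn.intervalIntegrable (by
      rw [huIcc]
      exact (continuousOn_const.mul (Complex.continuous_ofReal.comp_continuousOn cφ)).mul ce))
  rw [← h, ← intervalIntegral.integral_const_mul]
  refine intervalIntegral.integral_congr fun u _ => ?_
  push_cast
  ring

lemma norm_two_pi_I : ‖(2 * Real.pi * Complex.I : ℂ)‖ = 2 * Real.pi := by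
  simp [abs_of_pos Real.pi_pos]

/-- First derivative test for oscillatory integrals. -/
lemma norm_integral_mul_deriv_e_le {M : ℝ} (hab : a ≤ b)
    (hH : ∀ u ∈ Set.Icc a b, HasDerivAt H (H' u) u)
    (hφ : ∀ u ∈ Set.Icc a b, HasDerivAt φ (φ' u) u) (cH : ContinuousOn H' (Set.Icc a b))
    (cφ : ContinuousOn φ' (Set.Icc a b)) (hM : ∀ u ∈ Set.Icc a b, |H u| ≤ M)
    (hmono : (∀ u ∈ Set.Icc a b, 0 ≤ H' u) ∨ (∀ u ∈ Set.Icc a b, H' u ≤ 0)) :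
    ‖∫ u in a..b, (H u * φ' u : ℝ) * e (φ u)‖ ≤ M := by
  have huIcc : Set.uIcc a b = Set.Icc a b := Set.uIcc_of_le hab
  have hH'i : IntervalIntegrable H' volume a b :=
    ContinuousOn.intervalIntegrable (by rwa [huIcc])
  have hftc : ∫ u in a..b, H' u = H b - H a :=
    integral_eq_sub_of_hasDerivAt (fun u hu => hH u (huIcc ▸ hu)) hH'i
  have hMa := hM a ⟨le_rfl, hab⟩
  have hMb := hM b ⟨hab, le_rfl⟩
  have hvar : ‖∫ u in a..b, H' u * e (φ u)‖ ≤ 2 * M := by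
    refine (intervalIntegral.norm_integral_le_integral_norm hab).trans ?_
    have h1 : ∀ u, ‖(H' u : ℂ) * e (φ u)‖ = |H' u| := fun u => by
      rw [norm_mul, norm_e, mul_one, Complex.norm_real, Real.norm_eq_abs]
    simp only [h1]
    rcases hmono with h | h
    · rw [intervalIntegral.integral_congr (g := H')
        (fun u hu => abs_of_nonneg (h u (huIcc ▸ hu))), hftc]
      linarith [abs_le.mp hMa, abs_le.mp hMb]
    · rw [intervalIntegral.integral_congr (g := fun u => -H' u)
        (fun u hu => abs_of_nonpos (h u (huIcc ▸ hu))), intervalIntegral.integral_neg, hftc]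
      linarith [abs_le.mp hMa, abs_le.mp hMb]
  have key := congrArg norm (integral_mul_deriv_e hab hH hφ cH cφ)
  rw [norm_mul, norm_two_pi_I] at key
  have h2 : ‖(H b : ℂ) * e (φ b) - H a * e (φ a) - ∫ u in a..b, H' u * e (φ u)‖ ≤
      M + M + 2 * M := by
    refine (norm_sub_le _ _).trans (add_le_add ((norm_sub_le _ _).trans (add_le_add ?_ ?_)) hvar)
    · rwa [norm_mul, norm_e, mul_one, Complex.norm_real, Real.norm_eq_abs]
    · rwa [norm_mul, norm_e, mul_one, Complex.norm_real, Real.norm_eq_abs]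
  have hM0 : 0 ≤ M := (abs_nonneg _).trans hMa
  nlinarith [Real.pi_gt_three, norm_nonneg (∫ u in a..b, (H u * φ' u : ℝ) * e (φ u))]

end

/-- The Fresnel integral `∫₀ᵀ e(t²) dt`. -/
noncomputable def fresnel (T : ℝ) : ℂ := ∫ t in (0 : ℝ)..T, e (t ^ 2)

lemma intervalIntegrable_e_sq (a b : ℝ) :
    IntervalIntegrable (fun t : ℝ => e (t ^ 2)) volume a b :=
  (continuous_e.comp (by fun_prop)).intervalIntegrable _ _

lemma fresnel_sub (S T : ℝ) : fresnel T - fresnel S = ∫ t in S..T, e (t ^ 2) :=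
  integral_interval_sub_left (intervalIntegrable_e_sq _ _) (intervalIntegrable_e_sq _ _)

lemma fresnel_neg (T : ℝ) : fresnel (-T) = -fresnel T := by
  have h := intervalIntegral.integral_comp_neg (f := fun t : ℝ => e (t ^ 2)) (a := 0) (b := T)
  simp only [neg_sq, neg_zero] at h
  rw [fresnel, fresnel, h, ← integral_symm]

lemma norm_fresnel_sub_le {S T : ℝ} (hS : 0 < S) (hST : S ≤ T) :
    ‖fresnel T - fresnel S‖ ≤ 1 / S := by
  rw [fresnel_sub]
  have h := norm_integral_mul_deriv_e_le (a := S) (b := T) (M := 1 / S)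
    (H := fun t => (2 * t)⁻¹) (H' := fun t => -2 / (2 * t) ^ 2) (φ := fun t => t ^ 2)
    (φ' := fun t => 2 * t) hST
    (fun u hu => by
      have hu0 : 2 * u ≠ 0 := by linarith [hu.1, hS]
      have := ((hasDerivAt_id u).const_mul 2).inv hu0
      exact this.congr_deriv (by simp))
    (fun u _ => by simpa using hasDerivAt_pow 2 u)
    (ContinuousOn.div (by fun_prop) (by fun_prop) fun u hu => by
      have := lt_of_lt_of_le hS hu.1
      positivity)
    (by fun_prop)
    (fun u hu => by
      have hu0 := lt_of_lt_of_le hS hu.1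
      rw [abs_of_pos (by positivity), one_div]
      exact inv_anti₀ hS (by linarith [hu.1]))
    (Or.inr fun u hu => by
      have hu0 := lt_of_lt_of_le hS hu.1
      rw [neg_div]
      have : 0 < 2 / (2 * u) ^ 2 := by positivity
      linarith)
  convert h using 2
  refine intervalIntegral.integral_congr fun u hu => ?_
  rw [Set.uIcc_of_le hST] at hu
  have hu0 := lt_of_lt_of_le hS hu.1
  have : ((2 * u)⁻¹ * (2 * u) : ℝ) = 1 := by field_simp
  simp only [this]
  simp

lemma norm_fresnel_le {T : ℝ} (hT : 0 ≤ T) : ‖fresnel T‖ ≤ T := by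
  have h := intervalIntegral.norm_integral_le_of_norm_le_const (a := 0) (b := T) (C := 1)
    (f := fun t : ℝ => e (t ^ 2)) (fun t _ => (norm_e _).le)
  rwa [sub_zero, abs_of_nonneg hT, one_mul] at h

lemma exists_fresnel_limit : ∃ κ : ℂ, ‖κ‖ ≤ 2 ∧ ∀ T, 0 < T → ‖fresnel T - κ‖ ≤ 1 / T := by
  have hc : CauchySeq fun n : ℕ => fresnel (n + 1) := by
    refine cauchySeq_of_le_tendsto_0' (fun n : ℕ => 1 / ((n : ℝ) + 1)) (fun n m hnm => ?_)
      tendsto_one_div_add_atTop_nhds_zero_nat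
    rw [dist_comm, dist_eq_norm]
    exact norm_fresnel_sub_le (by positivity) (by gcongr)
  obtain ⟨κ, hκ⟩ := cauchySeq_tendsto_of_complete hc
  have hlim : ∀ T, 0 < T → ‖fresnel T - κ‖ ≤ 1 / T := by
    intro T hT
    have h1 : Tendsto (fun n : ℕ => ‖fresnel T - fresnel (n + 1)‖) atTop
        (nhds ‖fresnel T - κ‖) := (tendsto_const_nhds.sub hκ).norm
    refine le_of_tendsto h1 ?_
    filter_upwards [eventually_ge_atTop ⌈T⌉₊] with n hn
    rw [norm_sub_rev]
    exact norm_fresnel_sub_le hT (by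
      have := Nat.le_ceil T
      have : (⌈T⌉₊ : ℝ) ≤ n := by exact_mod_cast hn
      linarith)
  refine ⟨κ, ?_, hlim⟩
  have h1 := hlim 1 one_pos
  have h2 := norm_fresnel_le (T := 1) zero_le_one
  calc ‖κ‖ = ‖fresnel 1 - (fresnel 1 - κ)‖ := by congr 1; ring
    _ ≤ 2 := (norm_sub_le _ _).trans (by linarith)

/-- The limit of `fresnel T` as `T → ∞`. -/
noncomputable def fresnelLim : ℂ := exists_fresnel_limit.choose

lemma norm_fresnelLim_le : ‖fresnelLim‖ ≤ 2 := exists_fresnel_limit.choose_spec.1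

/-- The sign function with value `1` at `0`. -/
noncomputable def sgn (T : ℝ) : ℂ := if 0 ≤ T then 1 else -1

lemma norm_fresnel_sub_sgn_le (T : ℝ) : ‖fresnel T - fresnelLim * sgn T‖ ≤ 3 ∧
    |T| * ‖fresnel T - fresnelLim * sgn T‖ ≤ 1 := by
  have hpos : ∀ T : ℝ, 0 ≤ T → ‖fresnel T - fresnelLim‖ ≤ 3 ∧
      T * ‖fresnel T - fresnelLim‖ ≤ 1 := by
    intro T hT
    have hlim : 0 < T → ‖fresnel T - fresnelLim‖ ≤ 1 / T := exists_fresnel_limit.choose_spec.2 T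
    constructor
    · rcases le_total T 1 with h | h
      · have := norm_sub_le (fresnel T) fresnelLim
        linarith [norm_fresnel_le hT, norm_fresnelLim_le]
      · refine (hlim (by linarith)).trans ?_
        rw [div_le_iff₀ (by linarith)]
        linarith
    · rcases hT.eq_or_lt with h | h
      · rw [← h]; simp
      · have := hlim h
        rwa [le_div_iff₀ h, mul_comm] at this
  rcases le_or_gt 0 T with h | h
  · simpa [sgn, h, abs_of_nonneg h] using hpos T h
  · have h1 := hpos (-T) (by linarith)
    have h2 : ‖fresnel T - fresnelLim * sgn T‖ = ‖fresnel (-T) - fresnelLim‖ := by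
      rw [fresnel_neg, ← norm_neg]
      simp only [sgn, not_le.mpr h, if_false]
      congr 1
      ring
    rwa [h2, abs_of_neg h]


lemma hasDerivAt_fresnel (T : ℝ) : HasDerivAt fresnel (e (T ^ 2)) T :=
  integral_hasDerivAt_right (intervalIntegrable_e_sq _ _)
    (continuous_e.comp (by fun_prop)).stronglyMeasurable.stronglyMeasurableAtFilter
    (continuous_e.comp (by fun_prop : Continuous fun t : ℝ => t ^ 2)).continuousAt

/-- Stationary phase for `u ↦ A / u + ν u` with `A = r² c⁴` and `ν = r²`. -/
lemma norm_integral_e_sub_fresnel_le {r c α β : ℝ} (hr : 0 < r) (hc : 0 < c) (hα : 0 < α)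
    (hαβ : α ≤ β) :
    ‖(∫ u in α..β, e (r ^ 2 * c ^ 4 / u + r ^ 2 * u)) -
      (c / r : ℝ) * e (2 * (r ^ 2 * c ^ 2)) *
        (fresnel (r * (√β - c ^ 2 / √β)) - fresnel (r * (√α - c ^ 2 / √α)))‖ ≤ 1 / r ^ 2 := by
  have huIcc : Set.uIcc α β = Set.Icc α β := Set.uIcc_of_le hαβ
  have hpos : ∀ u ∈ Set.Icc α β, 0 < u := fun u hu => hα.trans_le hu.1
  set φ : ℝ → ℝ := fun u => r ^ 2 * c ^ 4 / u + r ^ 2 * u with hφ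
  set φ' : ℝ → ℝ := fun u => -(r ^ 2 * c ^ 4) / u ^ 2 + r ^ 2 with hφ'
  set t : ℝ → ℝ := fun u => r * (√u - c ^ 2 / √u) with ht
  set t' : ℝ → ℝ := fun u => r * (1 / (2 * √u) + c ^ 2 * (1 / (2 * √u)) / √u ^ 2) with ht'
  set q : ℝ → ℝ := fun u => (√u / (√u + c) + u / (u + c ^ 2)) / (2 * r ^ 2) with hq
  set q' : ℝ → ℝ := fun u => (c * (1 / (2 * √u)) / (√u + c) ^ 2 +
    c ^ 2 / (u + c ^ 2) ^ 2) / (2 * r ^ 2) with hq'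
  have dφ : ∀ u ∈ Set.Icc α β, HasDerivAt φ (φ' u) u := fun u hu => by
    have hu0 := hpos u hu
    have := (((hasDerivAt_id u).inv hu0.ne').const_mul (r ^ 2 * c ^ 4)).add
      ((hasDerivAt_id u).const_mul (r ^ 2))
    refine this.congr_deriv ?_
    simp only [hφ', id]
    ring
  have dt : ∀ u ∈ Set.Icc α β, HasDerivAt t (t' u) u := fun u hu => by
    have hu0 := hpos u hu
    have hs : 0 < √u := Real.sqrt_pos.mpr hu0
    have hd := Real.hasDerivAt_sqrt hu0.ne'
    have := (hd.sub ((hd.inv hs.ne').const_mul (c ^ 2))).const_mul r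
    refine this.congr_deriv ?_
    simp only [ht']
    ring
  have dq : ∀ u ∈ Set.Icc α β, HasDerivAt q (q' u) u := fun u hu => by
    have hu0 := hpos u hu
    have hs : 0 < √u := Real.sqrt_pos.mpr hu0
    have hd := Real.hasDerivAt_sqrt hu0.ne'
    have := ((hd.div (hd.add_const c) (by positivity)).add
      ((hasDerivAt_id u).div ((hasDerivAt_id u).add_const (c ^ 2))
        (by simp only [id]; positivity))).div_const (2 * r ^ 2)
    refine this.congr_deriv ?_
    simp only [hq', id]
    congr 2
    · ring
    · ring
  have csq : ContinuousOn (fun u : ℝ => √u) (Set.Icc α β) := by fun_prop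
  have nesq : ∀ u ∈ Set.Icc α β, √u ≠ 0 := fun u hu => (Real.sqrt_pos.mpr (hpos u hu)).ne'
  have cφ : ContinuousOn φ' (Set.Icc α β) :=
    (continuousOn_const.div (by fun_prop) fun u hu => by have := hpos u hu; positivity).add
      continuousOn_const
  have cinv : ContinuousOn (fun u : ℝ => 1 / (2 * √u)) (Set.Icc α β) :=
    continuousOn_const.div (by fun_prop) fun u hu => mul_ne_zero two_ne_zero (nesq u hu)
  have ct : ContinuousOn t' (Set.Icc α β) :=
    continuousOn_const.mul (cinv.add ((continuousOn_const.mul cinv).div (by fun_prop)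
      fun u hu => pow_ne_zero _ (nesq u hu)))
  have cq : ContinuousOn q' (Set.Icc α β) := by
    refine ContinuousOn.div_const (ContinuousOn.add ?_ ?_) _
    · refine (continuousOn_const.mul cinv).div (by fun_prop) fun u hu => ?_
      have := Real.sqrt_nonneg u
      positivity
    · refine continuousOn_const.div (by fun_prop) fun u hu => ?_
      have := hpos u hu
      positivity
  have ce : ContinuousOn (fun u => e (φ u)) (Set.Icc α β) := fun u hu =>
    (hasDerivAt_e_comp (dφ u hu)).continuousAt.continuousWithinAt
  have hmain : ∫ u in α..β, ((t' u : ℝ) : ℂ) * e (t u ^ 2) = fresnel (t β) - fresnel (t α) := by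
    refine integral_eq_sub_of_hasDerivAt (f := fun u => fresnel (t u)) (fun u hu => ?_) ?_
    · have := (hasDerivAt_fresnel (t u)).scomp u (dt u (huIcc ▸ hu))
      exact this.congr_deriv (by simp)
    · refine ContinuousOn.intervalIntegrable ?_
      rw [huIcc]
      refine (Complex.continuous_ofReal.comp_continuousOn ct).mul
        (continuous_e.comp_continuousOn ?_)
      exact ContinuousOn.pow (fun u hu => (dt u hu).continuousAt.continuousWithinAt) 2
  have hsplit : (∫ u in α..β, e (φ u)) - (c / r : ℝ) * e (2 * (r ^ 2 * c ^ 2)) *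
      (fresnel (t β) - fresnel (t α)) = ∫ u in α..β, (q u * φ' u : ℝ) * e (φ u) := by
    rw [← hmain, ← intervalIntegral.integral_const_mul, ← intervalIntegral.integral_sub]
    · refine intervalIntegral.integral_congr fun u hu => ?_
      have hu0 := hpos u (huIcc ▸ hu)
      have hs : 0 < √u := Real.sqrt_pos.mpr hu0
      have hsu : √u ^ 2 = u := Real.sq_sqrt hu0.le
      have e1 : e (φ u) = e (2 * (r ^ 2 * c ^ 2)) * e (t u ^ 2) := by
        rw [← e_add]
        congr 1
        simp only [hφ, ht]
        rw [← hsu, Real.sqrt_sq hs.le]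
        field_simp
        ring
      have e2 : 1 - c / r * t' u = q u * φ' u := by
        simp only [ht', hq, hφ']
        rw [← hsu, Real.sqrt_sq hs.le]
        field_simp
        ring
      rw [← e2, e1]
      push_cast
      ring
    · exact ContinuousOn.intervalIntegrable (by rwa [huIcc])
    · refine ContinuousOn.intervalIntegrable ?_
      rw [huIcc]
      refine continuousOn_const.mul ((Complex.continuous_ofReal.comp_continuousOn ct).mul
        (continuous_e.comp_continuousOn ?_))
      exact ContinuousOn.pow (fun u hu => (dt u hu).continuousAt.continuousWithinAt) 2
  change ‖(∫ u in α..β, e (φ u)) - (c / r : ℝ) * e (2 * (r ^ 2 * c ^ 2)) *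
      (fresnel (t β) - fresnel (t α))‖ ≤ _
  rw [hsplit]
  refine norm_integral_mul_deriv_e_le hαβ dq dφ cq cφ (fun u hu => ?_) (Or.inl fun u hu => ?_)
  · have hu0 := hpos u hu
    have hs : 0 < √u := Real.sqrt_pos.mpr hu0
    have h1 : √u / (√u + c) ≤ 1 := by rw [div_le_one (by positivity)]; linarith
    have h2 : u / (u + c ^ 2) ≤ 1 := by rw [div_le_one (by positivity)]; nlinarith
    have h3 : 0 ≤ q u := by positivity
    rw [abs_of_nonneg h3]
    simp only [hq]
    rw [div_le_div_iff₀ (by positivity) (by positivity)]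
    nlinarith [sq_nonneg r]
  · have hu0 := hpos u hu
    have hs : 0 < √u := Real.sqrt_pos.mpr hu0
    positivity

/-! ### Summing the stationary phase approximation -/

/-- The error in replacing `fresnel T` by its limit at `±∞`, for `T` arising from the
endpoint `γ`. -/
noncomputable def fresnelError (A γ ν : ℝ) : ℝ :=
  √√(A / ν) / √ν * ‖fresnel (√ν * (√γ - √√(A / ν) ^ 2 / √γ)) -
    fresnelLim * sgn (√ν * (√γ - √√(A / ν) ^ 2 / √γ))‖

lemma fresnelError_le {A γ ν : ℝ} (hA : 0 < A) (hγ : 0 < γ) (hν : 0 < ν) (hne : ν ≠ A / γ ^ 2) :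
    fresnelError A γ ν ≤ 2 / ν + 2 / |ν - A / γ ^ 2| := by
  set r := √ν with hr
  set c := √√(A / ν) with hc
  set s := √γ with hs
  have hr0 : 0 < r := Real.sqrt_pos.mpr hν
  have hs0 : 0 < s := Real.sqrt_pos.mpr hγ
  have hc0 : 0 < c := Real.sqrt_pos.mpr (Real.sqrt_pos.mpr (by positivity))
  have hr2 : r ^ 2 = ν := Real.sq_sqrt hν.le
  have hs2 : s ^ 2 = γ := Real.sq_sqrt hγ.le
  have hc4 : c ^ 4 = A / ν := by
    rw [show 4 = 2 * 2 by norm_num, pow_mul, hc, Real.sq_sqrt (Real.sqrt_nonneg _),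
      Real.sq_sqrt (by positivity)]
  have hA' : A = r ^ 2 * c ^ 4 := by rw [hc4, hr2]; field_simp
  have hm : ν - A / γ ^ 2 = r ^ 2 / s ^ 4 * (s ^ 4 - c ^ 4) := by
    rw [hA', ← hr2, ← hs2]; field_simp
  have hcs : s ^ 4 - c ^ 4 ≠ 0 := by
    intro h
    rw [h, mul_zero] at hm
    exact hne (by linarith)
  set X := ‖fresnel (r * (s - c ^ 2 / s)) - fresnelLim * sgn (r * (s - c ^ 2 / s))‖ with hX
  have hX0 : 0 ≤ X := norm_nonneg _
  have h1 : |r * (s - c ^ 2 / s)| * X ≤ 1 := (norm_fresnel_sub_sgn_le _).2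
  have habs : |r * (s - c ^ 2 / s)| * (s * (s ^ 2 + c ^ 2)) = r * |s ^ 4 - c ^ 4| := by
    rw [← abs_of_pos (show 0 < s * (s ^ 2 + c ^ 2) by positivity), ← abs_mul,
      show r * |s ^ 4 - c ^ 4| = |r * (s ^ 4 - c ^ 4)| by rw [abs_mul, abs_of_pos hr0]]
    congr 1
    field_simp
    ring
  have hD : 0 < |s ^ 4 - c ^ 4| := abs_pos.mpr hcs
  have h2 : r * |s ^ 4 - c ^ 4| * X ≤ s * (s ^ 2 + c ^ 2) := by
    rw [← habs]
    have : 0 < s * (s ^ 2 + c ^ 2) := by positivity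
    nlinarith
  have h3 : c * (s * (s ^ 2 + c ^ 2)) ≤ 2 * (|s ^ 4 - c ^ 4| + s ^ 4) := by
    rcases le_total c s with h | h
    · have : c * (s * (s ^ 2 + c ^ 2)) ≤ s * (s * (s ^ 2 + s ^ 2)) := by gcongr
      nlinarith
    · have : c * (s * (s ^ 2 + c ^ 2)) ≤ c * (c * (c ^ 2 + c ^ 2)) := by gcongr
      nlinarith [neg_abs_le (s ^ 4 - c ^ 4)]
  have hrhs : 2 / ν + 2 / |ν - A / γ ^ 2| =
      2 * (|s ^ 4 - c ^ 4| + s ^ 4) / (r ^ 2 * |s ^ 4 - c ^ 4|) := by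
    rw [hm, abs_mul, abs_of_pos (show 0 < r ^ 2 / s ^ 4 by positivity), ← hr2]
    field_simp
  rw [hrhs, le_div_iff₀ (by positivity)]
  change c / r * X * (r ^ 2 * |s ^ 4 - c ^ 4|) ≤ _
  calc c / r * X * (r ^ 2 * |s ^ 4 - c ^ 4|) = c * (r * |s ^ 4 - c ^ 4| * X) := by field_simp
    _ ≤ c * (s * (s ^ 2 + c ^ 2)) := by gcongr
    _ ≤ _ := h3

lemma fresnelError_le_sqrt {A γ ν : ℝ} (hγ : 0 < γ) (hν : 1 ≤ ν)
    (h : A / γ ^ 2 ≤ 3 * ν) : fresnelError A γ ν ≤ 6 * √γ := by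
  have hr : 1 ≤ √ν := by rw [← Real.sqrt_one]; exact Real.sqrt_le_sqrt hν
  have hc : √√(A / ν) ≤ 2 * √γ := by
    rw [show (2 : ℝ) * √γ = √(4 * γ) by
      rw [Real.sqrt_mul (by norm_num), show (4 : ℝ) = 2 ^ 2 by norm_num,
        Real.sqrt_sq (by norm_num)]]
    refine Real.sqrt_le_sqrt ?_
    rw [Real.sqrt_le_left (by positivity), div_le_iff₀ (by linarith)]
    rw [div_le_iff₀ (by positivity)] at h
    have : 0 < ν * γ ^ 2 := by have : 0 < ν := by linarith
                               positivity
    nlinarith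
  have h3 := (norm_fresnel_sub_sgn_le (√ν * (√γ - √√(A / ν) ^ 2 / √γ))).1
  calc fresnelError A γ ν ≤ √√(A / ν) / √ν * 3 := by unfold fresnelError; gcongr
    _ ≤ √√(A / ν) * 3 := by gcongr; exact div_le_self (Real.sqrt_nonneg _) hr
    _ ≤ _ := by linarith

lemma sum_Icc_le_of_injOn {V : ℕ} {s : Finset ℕ} {g : ℕ → ℕ} (hg : Set.InjOn g s)
    (hs : ∀ ν ∈ s, 1 ≤ g ν ∧ g ν ≤ V) :
    ∑ ν ∈ s, 1 / (g ν : ℝ) ≤ ∑ ν ∈ Icc 1 V, 1 / (ν : ℝ) := by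
  rw [← sum_image (f := fun n : ℕ => 1 / (n : ℝ)) hg]
  refine sum_le_sum_of_subset_of_nonneg (fun n hn => ?_) fun n _ _ => by positivity
  obtain ⟨ν, hν, rfl⟩ := Finset.mem_image.mp hn
  exact Finset.mem_Icc.mpr (hs ν hν)

lemma sum_fresnelError_le {A γ : ℝ} (hA : 0 < A) (hγ : 0 < γ) {V : ℕ} (hV : A / γ ^ 2 ≤ V) :
    ∑ ν ∈ Icc 1 V, fresnelError A γ ν ≤ 18 * √γ + 6 * ∑ ν ∈ Icc 1 V, 1 / (ν : ℝ) := by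
  set m := A / γ ^ 2 with hm
  have hm0 : 0 < m := by positivity
  set k := ⌊m⌋₊ with hk
  have hk1 : (k : ℝ) ≤ m := Nat.floor_le hm0.le
  have hk2 : m < k + 1 := Nat.lt_floor_add_one m
  have hkV : k ≤ V := by exact_mod_cast hk1.trans hV
  have hpt : ∀ ν ∈ Icc 1 V, fresnelError A γ ν ≤
      (if ν ∈ Icc (k - 1) (k + 1) then 6 * √γ else 0) + 2 * (1 / (ν : ℝ)) +
      (2 * (if k + 2 ≤ ν then 1 / ((ν - (k + 1) : ℕ) : ℝ) else 0) +
      2 * (if ν + 2 ≤ k then 1 / ((k - ν : ℕ) : ℝ) else 0)) := by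
    intro ν hν
    have hν1 : 1 ≤ ν := (Finset.mem_Icc.mp hν).1
    have hν1' : (1 : ℝ) ≤ ν := by exact_mod_cast hν1
    have hν0 : 0 ≤ 2 * (1 / (ν : ℝ)) := by positivity
    rcases lt_trichotomy (ν + 1) k with h | h | h
    · have hc : (ν : ℝ) + 2 ≤ k := by exact_mod_cast h
      rw [if_neg (by simp; lia), if_neg (by lia), if_pos (by lia), Nat.cast_sub (by lia)]
      refine (fresnelError_le hA hγ (by linarith) (by linarith)).trans ?_
      rw [abs_of_neg (by linarith)]
      have : 2 / -(ν - m) ≤ 2 / ((k : ℝ) - ν) :=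
        div_le_div_of_nonneg_left (by norm_num) (by linarith) (by linarith)
      have e1 : 2 * (1 / ((k : ℝ) - ν)) = 2 / ((k : ℝ) - ν) := by ring
      have e2 : 2 * (1 / (ν : ℝ)) = 2 / ν := by ring
      rw [e1, e2]
      linarith
    · have hc : (ν : ℝ) + 1 = k := by exact_mod_cast h
      rw [if_pos (by simp; lia), if_neg (by lia), if_neg (by lia)]
      have := fresnelError_le_sqrt (A := A) hγ hν1' (by linarith)
      linarith
    · by_cases h' : ν ≤ k + 1
      · have hc : (k : ℝ) ≤ ν := by exact_mod_cast (by lia : k ≤ ν)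
        rw [if_pos (by simp; lia), if_neg (by lia), if_neg (by lia)]
        have := fresnelError_le_sqrt (A := A) hγ hν1' (by linarith)
        linarith
      · have hc : (k : ℝ) + 2 ≤ ν := by exact_mod_cast (by lia : k + 2 ≤ ν)
        rw [if_neg (by simp; lia), if_pos (by lia), if_neg (by lia), Nat.cast_sub (by lia)]
        refine (fresnelError_le hA hγ (by linarith) (by linarith)).trans ?_
        rw [abs_of_pos (by linarith)]
        push_cast
        have : 2 / (ν - m) ≤ 2 / ((ν : ℝ) - (k + 1)) :=
          div_le_div_of_nonneg_left (by norm_num) (by linarith) (by linarith)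
        have e1 : 2 * (1 / ((ν : ℝ) - (k + 1))) = 2 / ((ν : ℝ) - (k + 1)) := by ring
        have e2 : 2 * (1 / (ν : ℝ)) = 2 / ν := by ring
        rw [e1, e2]
        linarith
  refine (sum_le_sum hpt).trans ?_
  rw [sum_add_distrib, sum_add_distrib, sum_add_distrib, ← mul_sum, ← mul_sum, ← mul_sum,
    ← sum_filter, ← sum_filter, ← sum_filter]
  have h1 : ∑ ν ∈ Icc 1 V with ν ∈ Icc (k - 1) (k + 1), 6 * √γ ≤ 18 * √γ := by
    rw [sum_const, nsmul_eq_mul]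
    have hcard : (#{ν ∈ Icc 1 V | ν ∈ Icc (k - 1) (k + 1)} : ℝ) ≤ 3 := by
      have : #{ν ∈ Icc 1 V | ν ∈ Icc (k - 1) (k + 1)} ≤ #(Icc (k - 1) (k + 1)) :=
        card_le_card fun ν hν => (Finset.mem_filter.mp hν).2
      rw [Nat.card_Icc] at this
      exact_mod_cast this.trans (by lia)
    nlinarith [Real.sqrt_nonneg γ]
  have h2 : ∑ ν ∈ Icc 1 V with k + 2 ≤ ν, 1 / ((ν - (k + 1) : ℕ) : ℝ) ≤
      ∑ ν ∈ Icc 1 V, 1 / (ν : ℝ) := by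
    refine sum_Icc_le_of_injOn (fun x hx y hy h => ?_) fun ν hν => ?_
    · simp only [coe_filter, Finset.mem_Icc, Set.mem_ofPred_eq] at hx hy h
      lia
    · simp only [Finset.mem_filter, Finset.mem_Icc] at hν
      lia
  have h3 : ∑ ν ∈ Icc 1 V with ν + 2 ≤ k, 1 / ((k - ν : ℕ) : ℝ) ≤
      ∑ ν ∈ Icc 1 V, 1 / (ν : ℝ) := by
    refine sum_Icc_le_of_injOn (fun x hx y hy h => ?_) fun ν hν => ?_
    · simp only [coe_filter, Finset.mem_Icc, Set.mem_ofPred_eq] at hx hy h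
      lia
    · simp only [Finset.mem_filter, Finset.mem_Icc] at hν
      lia
  linarith

lemma sgn_mul_sub_eq {A γ ν : ℝ} (hγ : 0 < γ) (hν : 0 < ν) :
    sgn (√ν * (√γ - √√(A / ν) ^ 2 / √γ)) = if A / γ ^ 2 ≤ ν then 1 else -1 := by
  unfold sgn
  have hs : 0 < √γ := Real.sqrt_pos.mpr hγ
  have hr : 0 < √ν := Real.sqrt_pos.mpr hν
  congr 1
  rw [mul_nonneg_iff_of_pos_left hr, sub_nonneg, div_le_iff₀ hs, Real.mul_self_sqrt hγ.le,
    Real.sq_sqrt (Real.sqrt_nonneg _), Real.sqrt_le_left hγ.le, div_le_iff₀ hν,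
    div_le_iff₀ (by positivity), mul_comm]

lemma norm_sum_integral_le {A α β : ℝ} (hA : 0 < A) (hα : 0 < α) (hαβ : α ≤ β) {V : ℕ}
    (hV : A / α ^ 2 ≤ V) :
    ‖∑ ν ∈ Icc 1 V, ∫ u in α..β, e (A / u + ν * u)‖ ≤
      36 * √β + 13 * ∑ ν ∈ Icc 1 V, 1 / (ν : ℝ) +
      4 * ‖∑ ν ∈ Ico ⌈A / β ^ 2⌉₊ ⌈A / α ^ 2⌉₊, (√√(A / ν) / √ν : ℝ) * e (2 * √(A * ν))‖ := by
  have hβ : 0 < β := hα.trans_le hαβ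
  have hpt : ∀ ν ∈ Icc 1 V, ‖(∫ u in α..β, e (A / u + ν * u)) -
      (√√(A / ν) / √ν : ℝ) * e (2 * √(A * ν)) * (fresnelLim *
        (if ν ∈ Ico ⌈A / β ^ 2⌉₊ ⌈A / α ^ 2⌉₊ then 2 else 0))‖ ≤
      1 / (ν : ℝ) + (fresnelError A β ν + fresnelError A α ν) := by
    intro ν hν
    have hν1 : 1 ≤ ν := (Finset.mem_Icc.mp hν).1
    have hν0 : (0 : ℝ) < ν := by exact_mod_cast hν1
    have hr : 0 < √(ν : ℝ) := Real.sqrt_pos.mpr hν0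
    have hc : 0 < √√(A / ν) := Real.sqrt_pos.mpr (Real.sqrt_pos.mpr (by positivity))
    have hr2 : √(ν : ℝ) ^ 2 = ν := Real.sq_sqrt hν0.le
    have hc2 : √√(A / ν) ^ 2 = √(A / ν) := Real.sq_sqrt (Real.sqrt_nonneg _)
    have hc4 : √√(A / ν) ^ 4 = A / ν := by
      rw [show 4 = 2 * 2 by norm_num, pow_mul, hc2, Real.sq_sqrt (by positivity)]
    have hB : √(ν : ℝ) ^ 2 * √√(A / ν) ^ 2 = √(A * ν) := by
      rw [hr2, hc2, Real.sqrt_div' _ hν0.le, Real.sqrt_mul hA.le]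
      field_simp
      rw [hr2]
    have h := norm_integral_e_sub_fresnel_le hr hc hα hαβ
    rw [hB, hc4, hr2, show (ν : ℝ) * (A / ν) = A by field_simp] at h
    have hsg : (if ν ∈ Ico ⌈A / β ^ 2⌉₊ ⌈A / α ^ 2⌉₊ then (2 : ℂ) else 0) =
        sgn (√ν * (√β - √√(A / ν) ^ 2 / √β)) - sgn (√ν * (√α - √√(A / ν) ^ 2 / √α)) := by
      rw [sgn_mul_sub_eq hβ hν0, sgn_mul_sub_eq hα hν0]
      simp only [Finset.mem_Ico, Nat.ceil_le, Nat.lt_ceil]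
      have hmono : A / β ^ 2 ≤ A / α ^ 2 := by gcongr
      by_cases h1 : A / β ^ 2 ≤ ν <;> by_cases h2 : A / α ^ 2 ≤ ν
      · simp [h1, h2]
      · push Not at h2
        simp [h1, h2, not_le.mpr h2]; norm_num
      · exact absurd (hmono.trans h2) h1
      · simp [h1, h2]
    rw [hsg]
    set Tβ := √ν * (√β - √√(A / ν) ^ 2 / √β) with hTβ
    set Tα := √ν * (√α - √√(A / ν) ^ 2 / √α) with hTα
    set I := ∫ u in α..β, e (A / u + ν * u) with hI
    set g := (√√(A / ν) / √ν : ℝ) with hg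
    have hg0 : 0 ≤ g := by positivity
    have hid : I - g * e (2 * √(A * ν)) * (fresnelLim * (sgn Tβ - sgn Tα)) =
        (I - g * e (2 * √(A * ν)) * (fresnel Tβ - fresnel Tα)) +
        (g * e (2 * √(A * ν)) * (fresnel Tβ - fresnelLim * sgn Tβ) -
          g * e (2 * √(A * ν)) * (fresnel Tα - fresnelLim * sgn Tα)) := by ring
    have hn : ∀ z : ℂ, ‖(g : ℂ) * e (2 * √(A * ν)) * z‖ = g * ‖z‖ := fun z => by
      rw [norm_mul, norm_mul, norm_e, Complex.norm_real, Real.norm_of_nonneg hg0, mul_one]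
    rw [hid]
    refine (norm_add_le _ _).trans (add_le_add h ((norm_sub_le _ _).trans ?_))
    rw [hn, hn]
    rfl
  have hmain : ∑ ν ∈ Icc 1 V, (√√(A / ν) / √ν : ℝ) * e (2 * √(A * ν)) * (fresnelLim *
        (if ν ∈ Ico ⌈A / β ^ 2⌉₊ ⌈A / α ^ 2⌉₊ then (2 : ℂ) else 0)) =
      2 * fresnelLim * ∑ ν ∈ Ico ⌈A / β ^ 2⌉₊ ⌈A / α ^ 2⌉₊,
        (√√(A / ν) / √ν : ℝ) * e (2 * √(A * ν)) := by
    have hsub : Ico ⌈A / β ^ 2⌉₊ ⌈A / α ^ 2⌉₊ ⊆ Icc 1 V := by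
      intro ν hν
      rw [Finset.mem_Ico] at hν
      have h1 : 0 < ⌈A / β ^ 2⌉₊ := Nat.ceil_pos.mpr (by positivity)
      have h2 : ⌈A / α ^ 2⌉₊ ≤ V := Nat.ceil_le.mpr hV
      rw [Finset.mem_Icc]
      lia
    rw [mul_sum, ← sum_subset hsub (fun ν _ h => by rw [if_neg h]; simp)]
    refine sum_congr rfl fun ν hν => ?_
    rw [if_pos hν]
    ring
  have hdiff := norm_sum_le_of_le _ hpt
  rw [sum_sub_distrib, hmain, sum_add_distrib, sum_add_distrib] at hdiff
  have hβV : A / β ^ 2 ≤ V := le_trans (by gcongr) hV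
  have e1 := sum_fresnelError_le hA hβ hβV
  have e2 := sum_fresnelError_le hA hα hV
  have hsq : √α ≤ √β := Real.sqrt_le_sqrt hαβ
  set Y := ∑ ν ∈ Ico ⌈A / β ^ 2⌉₊ ⌈A / α ^ 2⌉₊, (√√(A / ν) / √ν : ℝ) * e (2 * √(A * ν)) with hY
  have hYn : ‖2 * fresnelLim * Y‖ ≤ 4 * ‖Y‖ := by
    rw [norm_mul, norm_mul]
    have := norm_fresnelLim_le
    have := norm_nonneg Y
    simp only [Complex.norm_ofNat]
    nlinarith
  have htri := norm_sub_norm_le (∑ ν ∈ Icc 1 V, ∫ u in α..β, e (A / u + ν * u))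
    (2 * fresnelLim * Y)
  linarith

lemma norm_sum_mul_le_of_antitone {g : ℕ → ℝ} {z : ℕ → ℂ} {B : ℝ} (hg : Antitone g)
    (hg0 : ∀ n, 0 ≤ g n) (l : ℕ) (hB : ∀ k ≤ l, ‖∑ n ∈ range k, z n‖ ≤ B) :
    ‖∑ n ∈ range l, g n * z n‖ ≤ g 0 * B := by
  have habel : ∀ l, ∑ n ∈ range l, g n * z n = g l * ∑ n ∈ range l, z n +
      ∑ n ∈ range l, ((g n - g (n + 1) : ℝ) : ℂ) * ∑ i ∈ range (n + 1), z i := by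
    intro l
    induction l with
    | zero => simp
    | succ l ih =>
      rw [sum_range_succ, ih, sum_range_succ (fun n => ((g n - g (n + 1) : ℝ) : ℂ) * _) l,
        sum_range_succ z l]
      push_cast
      ring
  have htele : ∑ n ∈ range l, (g n - g (n + 1)) * B = (g 0 - g l) * B := by
    rw [← sum_mul, sum_range_sub']
  rw [habel]
  calc _ ≤ g l * B + ∑ n ∈ range l, (g n - g (n + 1)) * B := by
        refine (norm_add_le _ _).trans (add_le_add ?_ (norm_sum_le_of_le _ fun n hn => ?_))
        · rw [norm_mul, Complex.norm_real, Real.norm_of_nonneg (hg0 l)]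
          exact mul_le_mul_of_nonneg_left (hB l le_rfl) (hg0 l)
        · have h : 0 ≤ g n - g (n + 1) := sub_nonneg.mpr (hg (Nat.le_succ n))
          rw [norm_mul, Complex.norm_real, Real.norm_of_nonneg h]
          exact mul_le_mul_of_nonneg_left (hB _ (Finset.mem_range.mp hn)) h
    _ = g 0 * B := by rw [htele]; ring

lemma exists_norm_dual_sum_le : ∃ C : ℝ, 0 ≤ C ∧ ∀ A α β : ℝ, 0 < A → 0 < α → α ≤ β → β ≤ 4 * α →
    ‖∑ ν ∈ Ico ⌈A / β ^ 2⌉₊ ⌈A / α ^ 2⌉₊, (√√(A / ν) / √ν : ℝ) * e (2 * √(A * ν))‖ ≤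
      C * (A ^ (2 / 5 : ℝ) * α ^ (-(11 / 40) : ℝ) + (A / α) ^ (19 / 40 : ℝ)) := by
  obtain ⟨C, hC, hmain⟩ := exists_norm_sum_e_sqrt_le
  refine ⟨8 * C, by positivity, fun A α β hA hα hαβ hβα => ?_⟩
  have hβ : 0 < β := hα.trans_le hαβ
  rcases le_or_gt ⌈A / α ^ 2⌉₊ ⌈A / β ^ 2⌉₊ with h | h
  · rw [Ico_eq_empty_of_le h]
    simp only [sum_empty, norm_zero]
    positivity
  set m := A / α ^ 2 with hm
  set ν₀ := ⌈A / β ^ 2⌉₊ with hν₀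
  have hm0 : 0 < m := by positivity
  have hν1 : 1 ≤ ν₀ := Nat.one_le_iff_ne_zero.mpr (Nat.ceil_pos.mpr (by positivity)).ne'
  have hν1' : (1 : ℝ) ≤ ν₀ := by exact_mod_cast hν1
  have hm1 : 1 < m := by
    by_contra! hcon
    have : ⌈m⌉₊ ≤ 1 := Nat.ceil_le.mpr (by exact_mod_cast hcon)
    lia
  have hν16 : m / 16 ≤ ν₀ := by
    refine le_trans ?_ (Nat.le_ceil _)
    rw [hm, div_div]
    gcongr
    nlinarith
  set u : ℝ := A ^ (-(1 / 10) : ℝ) * α ^ (9 / 40 : ℝ) with hu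
  set w : ℝ := m ^ (1 / 8 : ℝ) with hw
  have hu0 : 0 < u := by positivity
  have hw0 : 0 < w := by positivity
  have hw8 : w ^ 8 = m := by
    rw [hw, ← Real.rpow_natCast, ← Real.rpow_mul hm0.le]; norm_num
  have huA : u ^ 80 * m ^ 9 = A := by
    have h1 : (A ^ (-(1 / 10) : ℝ)) ^ 80 = (A ^ 8)⁻¹ := by
      rw [← Real.rpow_natCast, ← Real.rpow_mul hA.le, ← Real.rpow_natCast A 8,
        ← Real.rpow_neg hA.le]
      norm_num
    have h2 : (α ^ (9 / 40 : ℝ)) ^ 80 = α ^ 18 := by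
      rw [← Real.rpow_natCast, ← Real.rpow_mul hα.le, ← Real.rpow_natCast α 18]
      norm_num
    rw [hu, mul_pow, h1, h2, hm]
    field_simp
  have hpart : ∀ k ≤ ⌈m⌉₊ - ν₀, ‖∑ n ∈ range k, e (2 * √(A * ((ν₀ + n : ℕ) : ℝ)))‖ ≤
      C * m * (u + 1 / (u * w)) := by
    intro k hk
    have h1 := hmain m u w ν₀ k hm1.le hu0 hw0 hw8 hν16 (by
      have h2 : ((ν₀ + k : ℕ) : ℝ) ≤ ⌈m⌉₊ := by exact_mod_cast (by lia)
      have h3 := Nat.ceil_lt_add_one hm0.le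
      push_cast at h2
      linarith)
    rw [huA] at h1
    simpa using h1
  have hanti : Antitone fun n : ℕ => √√(A / ((ν₀ + n : ℕ) : ℝ)) / √((ν₀ + n : ℕ) : ℝ) := by
    intro i j hij
    have h1 : (0 : ℝ) < ((ν₀ + i : ℕ) : ℝ) := by exact_mod_cast (by lia)
    have h2 : ((ν₀ + i : ℕ) : ℝ) ≤ ((ν₀ + j : ℕ) : ℝ) := by exact_mod_cast (by lia)
    dsimp only
    gcongr
  have hab := norm_sum_mul_le_of_antitone hanti (fun n => by positivity) (⌈m⌉₊ - ν₀) hpart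
  rw [sum_Ico_eq_sum_range]
  refine hab.trans ?_
  have hw1 : √√(A / ((ν₀ + 0 : ℕ) : ℝ)) / √((ν₀ + 0 : ℕ) : ℝ) ≤ 8 * √α / √m := by
    have h1 : √√(A / ((ν₀ + 0 : ℕ) : ℝ)) ≤ 2 * √α := by
      rw [show (2 : ℝ) * √α = √(4 * α) by
        rw [Real.sqrt_mul (by norm_num), show (4 : ℝ) = 2 ^ 2 by norm_num,
          Real.sqrt_sq (by norm_num)]]
      refine Real.sqrt_le_sqrt ?_
      rw [add_zero, Real.sqrt_le_left (by positivity), div_le_iff₀ (by linarith)]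
      have hA' : A = m * α ^ 2 := by rw [hm]; field_simp
      have : 0 < α ^ 2 := by positivity
      nlinarith
    have h2 : √m / 4 ≤ √((ν₀ + 0 : ℕ) : ℝ) := by
      rw [show √m / 4 = √(m / 16) by
        rw [Real.sqrt_div hm0.le, show (16 : ℝ) = 4 ^ 2 by norm_num, Real.sqrt_sq (by norm_num)]]
      exact Real.sqrt_le_sqrt (by simpa using hν16)
    have h3 : 0 < √m := Real.sqrt_pos.mpr hm0
    calc _ ≤ 2 * √α / (√m / 4) := by gcongr
      _ = _ := by field_simp; norm_num
  have hAα : √α / √m * m = (A / α) ^ (1 / 2 : ℝ) := by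
    rw [← Real.sqrt_eq_rpow]
    have h3 : 0 < √m := Real.sqrt_pos.mpr hm0
    calc √α / √m * m = √α * √m := by
          rw [← Real.mul_self_sqrt hm0.le] ; field_simp; rw [Real.sqrt_sq h3.le]
      _ = √(A / α) := by
          rw [← Real.sqrt_mul hα.le, hm]
          congr 1
          field_simp
  calc _ ≤ 8 * √α / √m * (C * m * (u + 1 / (u * w))) := by gcongr
    _ = 8 * C * ((√α / √m * m) * u + (√α / √m * m) * (1 / (u * w))) := by ring
    _ = _ := by
      rw [hAα]
      congr 2
      · rw [hu, Real.div_rpow hA.le hα.le, div_eq_mul_inv, ← Real.rpow_neg hα.le,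
          show A ^ (1 / 2 : ℝ) * α ^ (-(1 / 2) : ℝ) * (A ^ (-(1 / 10) : ℝ) * α ^ (9 / 40 : ℝ)) =
            (A ^ (1 / 2 : ℝ) * A ^ (-(1 / 10) : ℝ)) *
              (α ^ (-(1 / 2) : ℝ) * α ^ (9 / 40 : ℝ)) by ring,
          ← Real.rpow_add hA, ← Real.rpow_add hα]
        norm_num
      · have huw : u * w = (A / α) ^ (1 / 40 : ℝ) := by
          rw [hu, hw, hm, Real.div_rpow hA.le (by positivity), Real.div_rpow hA.le hα.le,
            ← Real.rpow_natCast, ← Real.rpow_mul hα.le, div_eq_mul_inv (A ^ (1 / 8 : ℝ)),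
            div_eq_mul_inv (A ^ (1 / 40 : ℝ)), ← Real.rpow_neg hα.le, ← Real.rpow_neg hα.le,
            show A ^ (-(1 / 10) : ℝ) * α ^ (9 / 40 : ℝ) * (A ^ (1 / 8 : ℝ) *
              α ^ (-(((2 : ℕ) : ℝ) * (1 / 8))) ) =
            (A ^ (-(1 / 10) : ℝ) * A ^ (1 / 8 : ℝ)) * (α ^ (9 / 40 : ℝ) *
              α ^ (-(((2 : ℕ) : ℝ) * (1 / 8)))) by ring,
            ← Real.rpow_add hA, ← Real.rpow_add hα]
          norm_num
        rw [huw, one_div (_ ^ _), ← Real.rpow_neg (by positivity), ← Real.rpow_add (by positivity)]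
        norm_num

/-- The phase `A / u - μ u` has no stationary point. -/
lemma norm_integral_e_neg_le {A α β μ : ℝ} (hA : 0 < A) (hα : 0 < α) (hαβ : α ≤ β) (hμ : 0 ≤ μ) :
    ‖∫ u in α..β, e (A / u + -μ * u)‖ ≤ 1 / (A / β ^ 2 + μ) := by
  have hpos : ∀ u ∈ Set.Icc α β, 0 < u := fun u hu => hα.trans_le hu.1
  have hβ : 0 < β := hα.trans_le hαβ
  have h := norm_integral_mul_deriv_e_le (a := α) (b := β) (M := 1 / (A / β ^ 2 + μ))
    (H := fun u => -(u ^ 2 / (A + μ * u ^ 2)))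
    (H' := fun u => -(2 * u * A / (A + μ * u ^ 2) ^ 2))
    (φ := fun u => A / u + -μ * u) (φ' := fun u => -A / u ^ 2 + -μ) hαβ
    (fun u hu => by
      have hu0 := hpos u hu
      have h1 : HasDerivAt (fun u : ℝ => u ^ 2) (2 * u) u := by simpa using hasDerivAt_pow 2 u
      have := (h1.div ((h1.const_mul μ).const_add A) (by positivity)).neg
      refine this.congr_deriv ?_
      congr 2
      ring)
    (fun u hu => by
      have hu0 := hpos u hu
      have := (((hasDerivAt_id u).inv hu0.ne').const_mul A).add
        ((hasDerivAt_id u).const_mul (-μ))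
      refine this.congr_deriv ?_
      simp only [id]
      ring)
    (ContinuousOn.neg (ContinuousOn.div (by fun_prop) (by fun_prop) fun u hu => by
      have := hpos u hu
      positivity))
    ((ContinuousOn.div (by fun_prop) (by fun_prop) fun u hu => by
      have := hpos u hu
      positivity).add continuousOn_const)
    (fun u hu => by
      have hu0 := hpos u hu
      rw [abs_neg, abs_of_nonneg (by positivity)]
      have : u ^ 2 / (A + μ * u ^ 2) = 1 / (A / u ^ 2 + μ) := by field_simp
      rw [this]
      have := hu.2
      gcongr)
    (Or.inr fun u hu => by
      have hu0 := hpos u hu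
      rw [neg_nonpos]
      positivity)
  convert h using 2
  refine intervalIntegral.integral_congr fun u hu => ?_
  rw [Set.uIcc_of_le hαβ] at hu
  have hu0 := hpos u hu
  have : -(u ^ 2 / (A + μ * u ^ 2)) * (-A / u ^ 2 + -μ) = 1 := by field_simp; ring
  simp only [this]
  simp

/-! ### Poisson summation -/

/-- The trapezoid supported on `[a, b + 1]` and equal to `1` on `[a + 1, b]`. -/
noncomputable def trapezoid (a b u : ℝ) : ℝ := max 0 (min 1 (min (u - a) (b + 1 - u)))

lemma continuous_trapezoid (a b : ℝ) : Continuous (trapezoid a b) := by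
  unfold trapezoid; fun_prop

lemma trapezoid_eq_zero {a b u : ℝ} (h : u ≤ a ∨ b + 1 ≤ u) : trapezoid a b u = 0 := by
  unfold trapezoid
  refine max_eq_left ((min_le_right _ _).trans ?_)
  rcases h with h | h
  · exact (min_le_left _ _).trans (by linarith)
  · exact (min_le_right _ _).trans (by linarith)

lemma trapezoid_eq_one {a b u : ℝ} (h : a + 1 ≤ u) (h' : u ≤ b) : trapezoid a b u = 1 := by
  unfold trapezoid
  rw [min_eq_left (le_min (by linarith) (by linarith)), max_eq_right zero_le_one]

lemma trapezoid_eq_left {a b u : ℝ} (hab : a + 1 ≤ b) (h : a ≤ u) (h' : u ≤ a + 1) :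
    trapezoid a b u = u - a := by
  unfold trapezoid
  rw [min_eq_left (by linarith : u - a ≤ b + 1 - u), min_eq_right (by linarith),
    max_eq_right (by linarith)]

lemma trapezoid_eq_right {a b u : ℝ} (hab : a + 1 ≤ b) (h : b ≤ u) (h' : u ≤ b + 1) :
    trapezoid a b u = b + 1 - u := by
  unfold trapezoid
  rw [min_eq_right (by linarith : b + 1 - u ≤ u - a), min_eq_right (by linarith),
    max_eq_right (by linarith)]

lemma integral_trapezoid_mul {a b : ℝ} (hab : a + 1 ≤ b) {F : ℝ → ℂ} (hF : Continuous F) :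
    ∫ u, (trapezoid a b u : ℂ) * F u = ∫ s in (0 : ℝ)..1, ∫ u in (a + s)..(b + s), F u := by
  set P : ℝ → ℂ := fun x => ∫ u in a..x, F u with hP
  have dP : ∀ x, HasDerivAt P (F x) x := fun x =>
    integral_hasDerivAt_right (hF.intervalIntegrable _ _)
      hF.stronglyMeasurable.stronglyMeasurableAtFilter hF.continuousAt
  have cP : Continuous P := continuous_iff_continuousAt.mpr fun x => (dP x).continuousAt
  have hc : Continuous fun u => (trapezoid a b u : ℂ) * F u :=
    (Complex.continuous_ofReal.comp (continuous_trapezoid a b)).mul hF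
  have hi : ∀ x y, IntervalIntegrable (fun u => (trapezoid a b u : ℂ) * F u) volume x y :=
    fun x y => hc.intervalIntegrable x y
  have hsupp : Function.support (fun u => (trapezoid a b u : ℂ) * F u) ⊆ Set.Ioc a (b + 1) := by
    intro u hu
    by_contra hcon
    refine hu ?_
    have : trapezoid a b u = 0 := trapezoid_eq_zero (by
      rw [Set.mem_Ioc, not_and_or] at hcon
      rcases hcon with h | h
      · left; linarith
      · right; linarith)
    simp [this]
  rw [← integral_eq_integral_of_support_subset hsupp,
    ← integral_add_adjacent_intervals (hi a (a + 1)) (hi _ _),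
    ← integral_add_adjacent_intervals (hi (a + 1) b) (hi _ _)]
  have h1 : ∫ u in a..(a + 1), (trapezoid a b u : ℂ) * F u =
      P (a + 1) - ∫ u in a..(a + 1), P u := by
    have h := integral_mul_deriv_eq_deriv_mul (a := a) (b := a + 1)
      (u := fun u => ((u - a : ℝ) : ℂ))
      (v := P) (u' := fun _ => 1) (v' := F)
      (fun u _ => by simpa using ((hasDerivAt_id u).sub_const a).ofReal_comp) (fun u _ => dP u)
      (continuous_const.intervalIntegrable _ _) (hF.intervalIntegrable _ _)
    simp only [one_mul] at h
    rw [integral_congr (g := fun u => ((u - a : ℝ) : ℂ) * F u), h]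
    · simp
    · intro u hu
      rw [Set.uIcc_of_le (by linarith)] at hu
      simp only [trapezoid_eq_left hab hu.1 hu.2]
  have h2 : ∫ u in (a + 1)..b, (trapezoid a b u : ℂ) * F u = P b - P (a + 1) := by
    rw [integral_congr (g := F)]
    · exact integral_eq_sub_of_hasDerivAt (fun u _ => dP u) (hF.intervalIntegrable _ _)
    · intro u hu
      rw [Set.uIcc_of_le hab] at hu
      simp [trapezoid_eq_one hu.1 hu.2]
  have h3 : ∫ u in b..(b + 1), (trapezoid a b u : ℂ) * F u =
      -P b + ∫ u in b..(b + 1), P u := by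
    have h := integral_mul_deriv_eq_deriv_mul (a := b) (b := b + 1)
      (u := fun u => ((b + 1 - u : ℝ) : ℂ)) (v := P) (u' := fun _ => -1) (v' := F)
      (fun u _ => by simpa using ((hasDerivAt_id u).const_sub (b + 1)).ofReal_comp)
      (fun u _ => dP u)
      (continuous_const.intervalIntegrable _ _) (hF.intervalIntegrable _ _)
    simp only [neg_one_mul, intervalIntegral.integral_neg] at h
    rw [integral_congr (g := fun u => ((b + 1 - u : ℝ) : ℂ) * F u), h]
    · simp
    · intro u hu
      rw [Set.uIcc_of_le (by linarith)] at hu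
      simp only [trapezoid_eq_right hab hu.1 hu.2]
  have h4 : ∀ s, ∫ u in (a + s)..(b + s), F u = P (b + s) - P (a + s) := fun s =>
    integral_eq_sub_of_hasDerivAt (fun u _ => dP u) (hF.intervalIntegrable _ _)
  simp only [h4]
  have hshift : ∀ c, IntervalIntegrable (fun s => P (c + s)) volume 0 1 := fun c =>
    (cP.comp (continuous_const_add c)).intervalIntegrable _ _
  rw [h1, h2, h3, intervalIntegral.integral_sub (hshift b) (hshift a),
    intervalIntegral.integral_comp_add_left (fun x => P x) b,
    intervalIntegral.integral_comp_add_left (fun x => P x) a]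
  simp only [add_zero]
  ring

/-- The Fourier coefficient at `-ν` of the smoothed sum of `e(A / n)` over `(a, b]`. -/
noncomputable def poissonTerm (A a b ν : ℝ) : ℂ :=
  ∫ s in (0 : ℝ)..1, ∫ u in (a + s)..(b + s), e (A / max u 1 + ν * u)

lemma continuous_e_phase (A ν : ℝ) : Continuous fun u : ℝ => e (A / max u 1 + ν * u) := by
  refine continuous_e.comp (Continuous.add (continuous_const.div (by fun_prop) fun u => ?_)
    (by fun_prop))
  have : 1 ≤ max u 1 := le_max_right _ _
  linarith

lemma continuous_integral_shift {F : ℝ → ℂ} (hF : Continuous F) (a b : ℝ) :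
    Continuous fun s => ∫ u in (a + s)..(b + s), F u := by
  have h4 : ∀ s, ∫ u in (a + s)..(b + s), F u =
      (∫ u in (0 : ℝ)..(b + s), F u) - ∫ u in (0 : ℝ)..(a + s), F u := fun s =>
    (integral_interval_sub_left (hF.intervalIntegrable _ _) (hF.intervalIntegrable _ _)).symm
  simp only [h4]
  have := intervalIntegral.continuous_primitive (f := F) (μ := volume)
    (fun x y => hF.intervalIntegrable x y) 0
  exact (this.comp (continuous_const_add b)).sub (this.comp (continuous_const_add a))

lemma integral_phase_eq {A ν α β : ℝ} (hα : 1 ≤ α) (hαβ : α ≤ β) :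
    ∫ u in α..β, e (A / max u 1 + ν * u) = ∫ u in α..β, e (A / u + ν * u) := by
  refine integral_congr fun u hu => ?_
  rw [Set.uIcc_of_le hαβ] at hu
  simp only [max_eq_left (hα.trans hu.1)]

/-- Frequencies far from the range of the derivative of the phase. -/
lemma norm_poissonTerm_le_of_far {A a b ν : ℝ} (hA : 0 < A) (ha : 1 ≤ a) (hab : a ≤ b)
    (hν0 : ν ≠ 0) (hν : 2 * (A / a ^ 2) ≤ |ν|) :
    ‖poissonTerm A a b ν‖ ≤ 2 * (2 + A / a ^ 2) / ν ^ 2 := by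
  set m := A / a ^ 2 with hm
  have hm0 : 0 < m := by positivity
  have hν2 : 0 < |ν| := abs_pos.mpr hν0
  set φ : ℝ → ℝ := fun u => A / u + ν * u with hφ
  set φ' : ℝ → ℝ := fun u => -A / u ^ 2 + ν with hφ'
  set H : ℝ → ℝ := fun u => (φ' u)⁻¹ with hH
  set H' : ℝ → ℝ := fun u => -(2 * A / u ^ 3) / φ' u ^ 2 with hH'
  have hbig : ∀ u, a ≤ u → |ν| / 2 ≤ |φ' u| := by
    intro u hu
    have hu0 : 0 < u := by linarith
    have h1 : A / u ^ 2 ≤ m := by rw [hm]; gcongr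
    have h2 : |A / u ^ 2| = A / u ^ 2 := abs_of_pos (by positivity)
    have h3 := abs_sub_abs_le_abs_sub ν (A / u ^ 2)
    have h4 : φ' u = ν - A / u ^ 2 := by simp only [hφ']; ring
    rw [h4]
    linarith
  have hne : ∀ u, a ≤ u → φ' u ≠ 0 := fun u hu => abs_pos.mp (by linarith [hbig u hu])
  have hHle : ∀ u, a ≤ u → |H u| ≤ 2 / |ν| := by
    intro u hu
    simp only [hH]
    rw [abs_inv, inv_le_comm₀ (abs_pos.mpr (hne u hu)) (by positivity), inv_div]
    exact hbig u hu
  have hH2 : ∀ u, a ≤ u → |H u ^ 2| ≤ 4 / ν ^ 2 := by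
    intro u hu
    rw [abs_pow, ← sq_abs ν, show (4 : ℝ) / |ν| ^ 2 = (2 / |ν|) ^ 2 by ring]
    gcongr
    exact hHle u hu
  have dφ : ∀ u, a ≤ u → HasDerivAt φ (φ' u) u := fun u hu => by
    have hu0 : u ≠ 0 := by linarith
    have := (((hasDerivAt_id u).inv hu0).const_mul A).add ((hasDerivAt_id u).const_mul ν)
    refine this.congr_deriv ?_
    simp only [hφ', id]
    ring
  have dφ' : ∀ u, a ≤ u → HasDerivAt φ' (2 * A / u ^ 3) u := fun u hu => by
    have hu0 : u ≠ 0 := by linarith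
    have h1 : HasDerivAt (fun u : ℝ => u ^ 2) (2 * u) u := by simpa using hasDerivAt_pow 2 u
    have := ((h1.inv (pow_ne_zero 2 hu0)).const_mul (-A)).add_const ν
    refine this.congr_deriv ?_
    field_simp
  have dH : ∀ u, a ≤ u → HasDerivAt H (H' u) u := fun u hu => (dφ' u hu).inv (hne u hu)
  have cφ' : ContinuousOn φ' (Set.Ici a) := fun u hu =>
    (dφ' u hu).continuousAt.continuousWithinAt
  have cH : ContinuousOn H (Set.Ici a) := fun u hu =>
    (dH u hu).continuousAt.continuousWithinAt
  have ceφ : ContinuousOn (fun u => e (φ u)) (Set.Ici a) := fun u hu =>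
    (hasDerivAt_e_comp (dφ u hu)).continuousAt.continuousWithinAt
  have cH' : ContinuousOn H' (Set.Ici a) := by
    refine ContinuousOn.div (ContinuousOn.neg (continuousOn_const.div (by fun_prop) ?_))
      (cφ'.pow 2) fun u hu => pow_ne_zero 2 (hne u hu)
    intro u hu
    have : a ≤ u := hu
    have : 0 < u := by linarith
    positivity
  have hH'0 : ∀ u, a ≤ u → H' u ≤ 0 := by
    intro u hu
    have : 0 < u := by linarith
    simp only [hH']
    rw [neg_div, neg_nonpos]
    positivity
  set G : ℝ → ℝ → ℂ := fun γ s => H (γ + s) * e (φ (γ + s)) with hG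
  set I : ℝ → ℂ := fun s => ∫ u in (a + s)..(b + s), e (A / max u 1 + ν * u) with hI
  set R : ℝ → ℂ := fun s => G b s - G a s - 2 * Real.pi * Complex.I * I s with hR
  have cI : Continuous I := continuous_integral_shift (continuous_e_phase A ν) a b
  have cG : ∀ γ, a ≤ γ → ContinuousOn (G γ) (Set.uIcc 0 1) := by
    intro γ hγ
    have hmaps : Set.MapsTo (fun s => γ + s) (Set.uIcc (0 : ℝ) 1) (Set.Ici a) := by
      intro s hs
      rw [Set.uIcc_of_le zero_le_one] at hs
      exact Set.mem_Ici.mpr (by linarith [hs.1])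
    exact (Complex.continuous_ofReal.comp_continuousOn
      (cH.comp (by fun_prop) hmaps)).mul (ceφ.comp (by fun_prop) hmaps)
  have iG : ∀ γ, a ≤ γ → IntervalIntegrable (G γ) volume 0 1 := fun γ hγ =>
    (cG γ hγ).intervalIntegrable
  have iI : IntervalIntegrable I volume 0 1 := cI.intervalIntegrable _ _
  have hRle : ∀ s ∈ Set.uIoc (0 : ℝ) 1, ‖R s‖ ≤ 4 * m / ν ^ 2 := by
    intro s hs
    rw [Set.uIoc_of_le zero_le_one] at hs
    have has : a ≤ a + s := by linarith [hs.1]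
    have hle : a + s ≤ b + s := by linarith
    have hsub : Set.Icc (a + s) (b + s) ⊆ Set.Ici a := fun u hu => has.trans hu.1
    have hibp := integral_mul_deriv_e hle (H := H) (H' := H') (φ := φ) (φ' := φ')
      (fun u hu => dH u (hsub hu)) (fun u hu => dφ u (hsub hu)) (cH'.mono hsub) (cφ'.mono hsub)
    have hI' : I s = ∫ u in (a + s)..(b + s), (H u * φ' u : ℝ) * e (φ u) := by
      simp only [hI]
      rw [integral_phase_eq (ha.trans has) hle]
      refine integral_congr fun u hu => ?_
      rw [Set.uIcc_of_le hle] at hu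
      have : H u * φ' u = 1 := inv_mul_cancel₀ (hne u (hsub hu))
      simp [this, hφ]
    have hR' : R s = ∫ u in (a + s)..(b + s), H' u * e (φ u) := by
      simp only [hR, hG]
      rw [hI', hibp]
      ring
    rw [hR']
    refine (intervalIntegral.norm_integral_le_integral_norm hle).trans ?_
    have hftc : ∫ u in (a + s)..(b + s), H' u = H (b + s) - H (a + s) :=
      integral_eq_sub_of_hasDerivAt (fun u hu => dH u (hsub (Set.uIcc_of_le hle ▸ hu)))
        (ContinuousOn.intervalIntegrable (by rw [Set.uIcc_of_le hle]; exact cH'.mono hsub))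
    rw [integral_congr (g := fun u => -H' u), intervalIntegral.integral_neg, hftc]
    · have hb' : a ≤ b + s := has.trans hle
      have ha0 : 0 < a + s := by linarith
      have hb0 : 0 < b + s := by linarith
      have e1 : -(H (b + s) - H (a + s)) =
          (A / (a + s) ^ 2 - A / (b + s) ^ 2) * (-(H (a + s) * H (b + s))) * (-1) := by
        have n1 := hne _ has
        have n2 := hne _ hb'
        have : A / (a + s) ^ 2 - A / (b + s) ^ 2 = φ' (b + s) - φ' (a + s) := by
          simp only [hφ']; ring
        rw [this]
        simp only [hH]
        field_simp
        ring
      have e2 : |A / (a + s) ^ 2 - A / (b + s) ^ 2| ≤ m := by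
        have h1 : A / (b + s) ^ 2 ≤ A / (a + s) ^ 2 := by gcongr
        have h2 : A / (a + s) ^ 2 ≤ m := by rw [hm]; gcongr
        have h3 : 0 < A / (b + s) ^ 2 := by positivity
        rw [abs_of_nonneg (by linarith)]
        linarith
      calc _ ≤ |-(H (b + s) - H (a + s))| := le_abs_self _
        _ = |A / (a + s) ^ 2 - A / (b + s) ^ 2| * (|H (a + s)| * |H (b + s)|) := by
            rw [e1]; simp only [abs_mul, abs_neg, abs_one, mul_one]
        _ ≤ m * (2 / |ν| * (2 / |ν|)) := by
            gcongr
            · exact hHle _ has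
            · exact hHle _ hb'
        _ = 4 * m / ν ^ 2 := by rw [← sq_abs ν]; ring
    · intro u hu
      rw [Set.uIcc_of_le hle] at hu
      simp only [norm_mul, norm_e, mul_one, Complex.norm_real, Real.norm_eq_abs]
      exact abs_of_nonpos (hH'0 u (hsub hu))
  have hGle : ∀ γ, a ≤ γ → ‖∫ s in (0 : ℝ)..1, G γ s‖ ≤ 4 / ν ^ 2 := by
    intro γ hγ
    have hsub : Set.Icc γ (γ + 1) ⊆ Set.Ici a := fun u hu => hγ.trans hu.1
    have e1 : ∫ s in (0 : ℝ)..1, G γ s = ∫ u in γ..(γ + 1), (H u ^ 2 * φ' u : ℝ) * e (φ u) := by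
      simp only [hG]
      rw [intervalIntegral.integral_comp_add_left (fun u => (H u : ℂ) * e (φ u)) γ, add_zero]
      refine integral_congr fun u hu => ?_
      rw [Set.uIcc_of_le (by linarith)] at hu
      have : H u ^ 2 * φ' u = H u := by
        have n1 := hne u (hsub hu)
        simp only [hH]
        field_simp
      simp only [this]
    rw [e1]
    refine norm_integral_mul_deriv_e_le (H := fun u => H u ^ 2) (H' := fun u => 2 * H u * H' u)
      (by linarith)
      (fun u hu => ((dH u (hsub hu)).pow 2).congr_deriv (by simp))
      (fun u hu => dφ u (hsub hu))
      ((continuousOn_const.mul (cH.mono hsub)).mul (cH'.mono hsub)) (cφ'.mono hsub)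
      (fun u hu => hH2 u (hsub hu)) ?_
    have hsign : ∀ u, a ≤ u → (0 < ν → 0 ≤ H u) ∧ (ν < 0 → H u ≤ 0) := by
      intro u hu
      have hu0 : 0 < u := by linarith
      have h1 : A / u ^ 2 ≤ m := by rw [hm]; gcongr
      have h2 : 0 < A / u ^ 2 := by positivity
      have h4 : φ' u = ν - A / u ^ 2 := by simp only [hφ']; ring
      constructor
      · intro h
        rw [abs_of_pos h] at hν
        simp only [hH, inv_nonneg]
        linarith
      · intro h
        simp only [hH, inv_nonpos]
        linarith
    rcases lt_or_gt_of_ne hν0 with h | h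
    · left
      intro u hu
      have h1 := (hsign u (hsub hu)).2 h
      have h2 := hH'0 u (hsub hu)
      nlinarith
    · right
      intro u hu
      have h1 := (hsign u (hsub hu)).1 h
      have h2 := hH'0 u (hsub hu)
      nlinarith
  have hRint : ‖∫ s in (0 : ℝ)..1, R s‖ ≤ 4 * m / ν ^ 2 := by
    simpa using intervalIntegral.norm_integral_le_of_norm_le_const hRle
  have hR2 : ∫ s in (0 : ℝ)..1, R s = (∫ s in (0 : ℝ)..1, G b s) - (∫ s in (0 : ℝ)..1, G a s) -
      2 * Real.pi * Complex.I * poissonTerm A a b ν := by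
    simp only [hR]
    rw [intervalIntegral.integral_sub ((iG b hab).sub (iG a le_rfl)) (iI.const_mul _),
      intervalIntegral.integral_sub (iG b hab) (iG a le_rfl), intervalIntegral.integral_const_mul]
    rfl
  have hkey : ‖2 * Real.pi * Complex.I * poissonTerm A a b ν‖ ≤
      4 / ν ^ 2 + 4 / ν ^ 2 + 4 * m / ν ^ 2 := by
    rw [show 2 * Real.pi * Complex.I * poissonTerm A a b ν = (∫ s in (0 : ℝ)..1, G b s) -
      (∫ s in (0 : ℝ)..1, G a s) - ∫ s in (0 : ℝ)..1, R s by rw [hR2]; ring]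
    exact (norm_sub_le _ _).trans (add_le_add ((norm_sub_le _ _).trans
      (add_le_add (hGle b hab) (hGle a le_rfl))) hRint)
  rw [norm_mul, norm_two_pi_I] at hkey
  have e3 : 4 / ν ^ 2 + 4 / ν ^ 2 + 4 * m / ν ^ 2 = 2 * (2 * (2 + m) / ν ^ 2) := by ring
  have : 0 ≤ ‖poissonTerm A a b ν‖ := norm_nonneg _
  nlinarith [Real.pi_gt_three]

lemma summable_poissonTerm {A a b : ℝ} (hA : 0 < A) (ha : 1 ≤ a) (hab : a ≤ b) :
    Summable fun n : ℤ => poissonTerm A a b n := by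
  set m := A / a ^ 2 with hm
  have hs : Summable fun n : ℕ => 2 * (2 + m) / (n : ℝ) ^ 2 := by
    simpa [div_eq_mul_inv] using
      (Real.summable_one_div_nat_pow.mpr one_lt_two).mul_left (2 * (2 + m))
  refine Summable.of_nat_of_neg (Summable.of_norm_bounded_eventually_nat hs ?_)
    (Summable.of_norm_bounded_eventually_nat hs ?_)
  all_goals
    filter_upwards [eventually_ge_atTop ⌈2 * m⌉₊, eventually_ge_atTop 1] with n hn hn1
    have hn' : 2 * m ≤ (n : ℝ) := Nat.ceil_le.mp hn
    have hn0 : (0 : ℝ) < n := by exact_mod_cast hn1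
  · have := norm_poissonTerm_le_of_far (ν := n) hA ha hab hn0.ne' (by rwa [abs_of_pos hn0])
    simpa using this
  · have := norm_poissonTerm_le_of_far (ν := -n) hA ha hab (by simpa using hn0.ne')
      (by rwa [abs_neg, abs_of_pos hn0])
    simpa using this

lemma hasSum_poissonTerm {A : ℝ} {a b : ℕ} (hA : 0 < A) (ha : 1 ≤ a) (hab : a < b) :
    HasSum (fun n : ℤ => poissonTerm A a b n) (∑ n ∈ Finset.Ioc a b, e (A / n)) := by
  have ha' : (1 : ℝ) ≤ a := by exact_mod_cast ha
  have hab' : (a : ℝ) + 1 ≤ b := by exact_mod_cast hab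
  have hsum := summable_poissonTerm hA ha' (by linarith : (a : ℝ) ≤ b)
  set f : ℝ → ℂ := fun u => (trapezoid a b u : ℂ) * e (A / max u 1 + 0 * u) with hf
  have cf : Continuous f := (Complex.continuous_ofReal.comp (continuous_trapezoid a b)).mul
    (continuous_e_phase A 0)
  have hzero : ∀ u : ℝ, u ≤ a ∨ (b : ℝ) + 1 ≤ u → f u = 0 := fun u hu => by
    simp [hf, trapezoid_eq_zero hu]
  have hfour : ∀ n : ℤ, FourierTransform.fourier f (n : ℝ) = poissonTerm A a b (-n : ℤ) := by
    intro n
    rw [Real.fourier_real_eq_integral_exp_smul, poissonTerm,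
      ← integral_trapezoid_mul hab' (continuous_e_phase A _)]
    refine integral_congr_ae (ae_of_all _ fun u => ?_)
    have : Complex.exp (((-2 * Real.pi * u * n : ℝ) : ℂ) * Complex.I) = e (((-n : ℤ) : ℝ) * u) := by
      rw [e]; congr 2; push_cast; ring
    simp only [this, hf, smul_eq_mul, e_add, zero_mul, e_zero]
    ring
  have hdecay : f =O[cocompact ℝ] fun x => |x| ^ (-(2 : ℝ)) := by
    have h0 : f =ᶠ[cocompact ℝ] 0 := by
      filter_upwards [(isCompact_Icc (a := (a : ℝ)) (b := b + 1)).compl_mem_cocompact] with u hu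
      refine hzero u ?_
      rw [Set.mem_compl_iff, Set.mem_Icc, not_and_or] at hu
      rcases hu with h | h
      · left; linarith
      · right; linarith
    exact h0.trans_isBigO (Asymptotics.isBigO_zero _ _)
  have hneg : HasSum (fun n : ℤ => poissonTerm A a b (-n : ℤ)) (∑' n : ℤ, poissonTerm A a b n) :=
    (Equiv.neg ℤ).hasSum_iff.mpr hsum.hasSum
  have hP := Real.tsum_eq_tsum_fourier_of_rpow_decay_of_summable cf one_lt_two hdecay
    (by simpa only [hfour] using hneg.summable) 0
  simp only [hfour, zero_add, QuotientAddGroup.mk_zero, fourier_eval_zero, mul_one] at hP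
  rw [hneg.tsum_eq] at hP
  have hleft : ∑' n : ℤ, f n = ∑ n ∈ Finset.Ioc a b, e (A / n) := by
    rw [tsum_eq_sum (s := (Finset.Ioc a b).map Nat.castEmbedding), Finset.sum_map]
    · refine Finset.sum_congr rfl fun n hn => ?_
      rw [Finset.mem_Ioc] at hn
      have h1 : (a : ℝ) + 1 ≤ n := by exact_mod_cast hn.1
      have h2 : (n : ℝ) ≤ b := by exact_mod_cast hn.2
      simp [hf, trapezoid_eq_one h1 h2, max_eq_left (by linarith : (1 : ℝ) ≤ n)]
    · intro n hn
      refine hzero n ?_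
      by_contra! hcon
      refine hn ?_
      have h1 : (a : ℤ) < n := by exact_mod_cast hcon.1
      have h2 : n < (b : ℤ) + 1 := by exact_mod_cast hcon.2
      rw [Finset.mem_map]
      refine ⟨n.toNat, by rw [Finset.mem_Ioc]; omega, ?_⟩
      simp only [Nat.castEmbedding_apply]
      omega
  rw [← hleft, hP]
  exact hsum.hasSum

lemma norm_poissonTerm_neg_le {A a b μ : ℝ} (hA : 0 < A) (ha : 1 ≤ a) (hab : a ≤ b)
    (hμ : 0 ≤ μ) : ‖poissonTerm A a b (-μ)‖ ≤ 1 / (A / (b + 1) ^ 2 + μ) := by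
  have hb0 : 0 < b := by linarith
  have := intervalIntegral.norm_integral_le_of_norm_le_const (a := 0) (b := 1)
    (C := 1 / (A / (b + 1) ^ 2 + μ))
    (f := fun s => ∫ u in (a + s)..(b + s), e (A / max u 1 + -μ * u)) ?_
  · simpa [poissonTerm] using this
  · intro s hs
    rw [Set.uIoc_of_le zero_le_one] at hs
    have hs0 := hs.1
    rw [integral_phase_eq (by linarith) (by linarith)]
    refine (norm_integral_e_neg_le hA (by linarith) (by linarith) hμ).trans ?_
    have := hs.2
    gcongr

lemma norm_sum_le_of_hasSum_int {g : ℤ → ℂ} {S : ℂ} (hg : HasSum g S) {P Q R : ℝ} {V : ℕ}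
    (hP : ‖∑ n ∈ Finset.Icc 1 V, g n‖ ≤ P) (hQ : ‖g 0‖ + ∑ n ∈ Finset.Icc 1 V, ‖g (-n)‖ ≤ Q)
    (hR : ∀ n : ℕ, V < n → ‖g n‖ + ‖g (-n)‖ ≤ R / (n : ℝ) ^ 2) (hR0 : 0 ≤ R) :
    ‖S‖ ≤ P + Q + R * (2 / (V + 1)) := by
  have h1 := hg.nat_add_neg.tendsto_sum_nat
  have h2 : Tendsto (fun N : ℕ => ‖∑ n ∈ Finset.range N, (g n + g (-n)) - g 0‖) atTop
      (nhds ‖S‖) := by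
    have := (h1.sub_const (g 0)).norm
    simpa using this
  refine le_of_tendsto h2 ?_
  filter_upwards [eventually_ge_atTop (V + 1)] with N hN
  have hsplit : ∑ n ∈ Finset.range N, (g n + g (-n)) - g 0 = ∑ n ∈ Finset.Icc 1 V, g n +
      (g 0 + ∑ n ∈ Finset.Icc 1 V, g (-n)) + ∑ n ∈ Finset.Ioo V N, (g n + g (-n)) := by
    have e1 : Finset.Icc 1 V = Finset.Ico 1 (V + 1) := by ext; simp
    have e2 : Finset.Ioo V N = Finset.Ico (V + 1) N := by ext; simp
    have e3 := Finset.sum_Ico_consecutive (fun n : ℕ => g n + g (-n)) (Nat.zero_le 1)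
      (by omega : 1 ≤ N)
    have e4 := Finset.sum_Ico_consecutive (fun n : ℕ => g n + g (-n)) (by omega : 1 ≤ V + 1) hN
    rw [Finset.range_eq_Ico, ← e3, ← e4, e1, e2, Finset.sum_add_distrib (s := Finset.Ico 1 (V + 1))]
    simp
    ring
  rw [hsplit]
  refine (norm_add_le _ _).trans (add_le_add ((norm_add_le _ _).trans (add_le_add hP ?_)) ?_)
  · exact ((norm_add_le _ _).trans (add_le_add le_rfl (norm_sum_le _ _))).trans hQ
  · calc ‖∑ n ∈ Finset.Ioo V N, (g n + g (-n))‖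
        ≤ ∑ n ∈ Finset.Ioo V N, R * ((n : ℝ) ^ 2)⁻¹ := by
          refine (norm_sum_le _ _).trans (Finset.sum_le_sum fun n hn => ?_)
          rw [← div_eq_mul_inv]
          exact (norm_add_le _ _).trans (hR n (Finset.mem_Ioo.mp hn).1)
      _ ≤ R * (2 / (V + 1)) := by
          rw [← Finset.mul_sum]
          exact mul_le_mul_of_nonneg_left (sum_Ioo_inv_sq_le V N) hR0

/-- An exponent-pair type bound for the exponential sum with phase `A / n`. -/
lemma exists_norm_sum_e_div_le : ∃ C : ℝ, 0 ≤ C ∧ ∀ (A : ℝ) (a b : ℕ), 1 ≤ a → a < b → b ≤ 3 * a →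
    (a : ℝ) ^ 2 ≤ A → ‖∑ n ∈ Finset.Ioc a b, e (A / n)‖ ≤
      C * (A ^ (2 / 5 : ℝ) * (a : ℝ) ^ (-(11 / 40) : ℝ) + (A / a) ^ (19 / 40 : ℝ)) := by
  obtain ⟨C, hC, hdual⟩ := exists_norm_dual_sum_le
  refine ⟨4 * C + 300, by linarith, fun A a b ha hab hb3 haA => ?_⟩
  have ha' : (1 : ℝ) ≤ a := by exact_mod_cast ha
  have hab' : (a : ℝ) ≤ b := by exact_mod_cast hab.le
  have hb3' : (b : ℝ) ≤ 3 * a := by exact_mod_cast hb3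
  have hA : 0 < A := by nlinarith
  have ha0 : (0 : ℝ) < a := by linarith
  set m := A / (a : ℝ) ^ 2 with hm
  have hm1 : 1 ≤ m := by rw [hm, le_div_iff₀ (by positivity)]; linarith
  set V := ⌈2 * m⌉₊ with hV
  have hV2 : 2 * m ≤ V := Nat.le_ceil _
  have hV3 : (V : ℝ) ≤ 3 * m := by
    have := Nat.ceil_lt_add_one (by linarith : 0 ≤ 2 * m)
    linarith
  set Y := A ^ (2 / 5 : ℝ) * (a : ℝ) ^ (-(11 / 40) : ℝ) with hY
  set X := (A / a) ^ (19 / 40 : ℝ) with hX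
  set H := ∑ ν ∈ Finset.Icc 1 V, 1 / (ν : ℝ) with hH
  have hmA : m ≤ A / a := by
    rw [hm]
    gcongr
    nlinarith
  have hX1 : 1 ≤ X := Real.one_le_rpow (hm1.trans hmA) (by norm_num)
  have hYa : √(a : ℝ) ≤ Y := by
    have h1 : (a : ℝ) ^ (4 / 5 : ℝ) ≤ A ^ (2 / 5 : ℝ) := by
      calc (a : ℝ) ^ (4 / 5 : ℝ) = ((a : ℝ) ^ 2) ^ (2 / 5 : ℝ) := by
            rw [← Real.rpow_natCast, ← Real.rpow_mul ha0.le]; norm_num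
        _ ≤ A ^ (2 / 5 : ℝ) := by gcongr
    calc √(a : ℝ) = (a : ℝ) ^ (1 / 2 : ℝ) := Real.sqrt_eq_rpow _
      _ ≤ (a : ℝ) ^ (4 / 5 + -(11 / 40) : ℝ) := Real.rpow_le_rpow_of_exponent_le ha' (by norm_num)
      _ = (a : ℝ) ^ (4 / 5 : ℝ) * (a : ℝ) ^ (-(11 / 40) : ℝ) := Real.rpow_add ha0 _ _
      _ ≤ Y := by rw [hY]; gcongr
  have hHX : H ≤ 8 * X := by
    have hVpos : (0 : ℝ) < V := by linarith
    have h1 : H ≤ 1 + Real.log V := by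
      have := harmonic_le_one_add_log V
      rw [harmonic_eq_sum_Icc] at this
      push_cast at this
      simpa [hH] using this
    have h2 : Real.log V ≤ 7 * X := by
      have h3 : (3 : ℝ) ^ (19 / 40 : ℝ) ≤ 3 := by
        calc (3 : ℝ) ^ (19 / 40 : ℝ) ≤ 3 ^ (1 : ℝ) :=
              Real.rpow_le_rpow_of_exponent_le (by norm_num) (by norm_num)
          _ = 3 := Real.rpow_one 3
      calc Real.log V ≤ (V : ℝ) ^ (19 / 40 : ℝ) / (19 / 40) :=
            Real.log_le_rpow_div hVpos.le (by norm_num)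
        _ ≤ (3 * (A / a)) ^ (19 / 40 : ℝ) / (19 / 40) := by gcongr; linarith
        _ = 3 ^ (19 / 40 : ℝ) * X / (19 / 40) := by
            rw [Real.mul_rpow (by norm_num) (by positivity)]
        _ ≤ 3 * X / (19 / 40) := by gcongr
        _ ≤ 7 * X := by linarith
    linarith
  have hpos : ‖∑ ν ∈ Finset.Icc 1 V, poissonTerm A a b ((ν : ℤ) : ℝ)‖ ≤
      72 * √(a : ℝ) + 13 * H + 4 * (C * (Y + X)) := by
    have hex : ∑ ν ∈ Finset.Icc 1 V, poissonTerm A a b ((ν : ℤ) : ℝ) = ∫ s in (0 : ℝ)..1,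
        ∑ ν ∈ Finset.Icc 1 V, ∫ u in (a + s)..(b + s), e (A / max u 1 + ν * u) := by
      rw [intervalIntegral.integral_finsetSum]
      · simp [poissonTerm]
      · exact fun ν _ =>
          (continuous_integral_shift (continuous_e_phase A ν) a b).intervalIntegrable _ _
    rw [hex]
    have := intervalIntegral.norm_integral_le_of_norm_le_const (a := 0) (b := 1)
      (C := 72 * √(a : ℝ) + 13 * H + 4 * (C * (Y + X)))
      (f := fun s : ℝ => ∑ ν ∈ Finset.Icc 1 V,
        ∫ u in (a + s)..(b + s), e (A / max u 1 + ν * u)) ?_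
    · simpa using this
    · intro s hs
      rw [Set.uIoc_of_le zero_le_one] at hs
      obtain ⟨hs0, hs1⟩ := hs
      have hα : (0 : ℝ) < a + s := by linarith
      have hαβ : (a : ℝ) + s ≤ b + s := by linarith
      rw [Finset.sum_congr rfl fun (ν : ℕ) _ =>
        integral_phase_eq (A := A) (ν := ν) (by linarith : (1 : ℝ) ≤ a + s) hαβ]
      have hVs : A / ((a : ℝ) + s) ^ 2 ≤ V := by
        have : A / ((a : ℝ) + s) ^ 2 ≤ m := by rw [hm]; gcongr; linarith
        linarith
      refine (norm_sum_integral_le hA hα hαβ hVs).trans ?_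
      have hsq : √((b : ℝ) + s) ≤ 2 * √(a : ℝ) := by
        rw [show 2 * √(a : ℝ) = √(4 * a) by
          rw [Real.sqrt_mul (by norm_num), show (4 : ℝ) = 2 ^ 2 by norm_num,
            Real.sqrt_sq (by norm_num)]]
        exact Real.sqrt_le_sqrt (by linarith)
      have hd := hdual A (a + s) (b + s) hA hα hαβ (by linarith)
      have hd' : C * (A ^ (2 / 5 : ℝ) * ((a : ℝ) + s) ^ (-(11 / 40) : ℝ) +
          (A / (a + s)) ^ (19 / 40 : ℝ)) ≤ C * (Y + X) := by
        rw [hY, hX]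
        have : ((a : ℝ) + s) ^ (-(11 / 40) : ℝ) ≤ (a : ℝ) ^ (-(11 / 40) : ℝ) :=
          Real.rpow_le_rpow_of_nonpos ha0 (by linarith) (by norm_num)
        gcongr
        linarith
      linarith
  have hneg : ‖poissonTerm A a b ((0 : ℤ) : ℝ)‖ +
      ∑ n ∈ Finset.Icc 1 V, ‖poissonTerm A a b ((-n : ℤ) : ℝ)‖ ≤ 16 + H := by
    refine add_le_add ?_ (Finset.sum_le_sum fun n hn => ?_)
    · have := norm_poissonTerm_neg_le hA ha' hab' (le_refl 0)
      have h16 : 1 / (A / ((b : ℝ) + 1) ^ 2 + 0) ≤ 16 := by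
        rw [add_zero, one_div_div, div_le_iff₀ hA]
        nlinarith
      simpa using this.trans h16
    · have hn0 : (0 : ℝ) < n := by exact_mod_cast (Finset.mem_Icc.mp hn).1
      have := norm_poissonTerm_neg_le hA ha' hab' hn0.le
      have h1 : 1 / (A / ((b : ℝ) + 1) ^ 2 + n) ≤ 1 / n := by
        gcongr
        have : 0 ≤ A / ((b : ℝ) + 1) ^ 2 := by positivity
        linarith
      simpa using this.trans h1
  have hfar : ∀ n : ℕ, V < n → ‖poissonTerm A a b ((n : ℤ) : ℝ)‖ +
      ‖poissonTerm A a b ((-n : ℤ) : ℝ)‖ ≤ 4 * (2 + m) / (n : ℝ) ^ 2 := by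
    intro n hn
    have hn' : (V : ℝ) < n := by exact_mod_cast hn
    have hn0 : (0 : ℝ) < n := by linarith
    have h1 := norm_poissonTerm_le_of_far (ν := n) hA ha' hab' hn0.ne'
      (by rw [abs_of_pos hn0]; linarith)
    have h2 := norm_poissonTerm_le_of_far (ν := -n) hA ha' hab' (by simpa using hn0.ne')
      (by rw [abs_neg, abs_of_pos hn0]; linarith)
    rw [neg_sq] at h2
    have h3 := add_le_add h1 h2
    push_cast
    refine h3.trans (le_of_eq ?_)
    ring
  refine (norm_sum_le_of_hasSum_int (hasSum_poissonTerm hA ha hab) hpos hneg hfar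
    (by positivity)).trans ?_
  have hlast : 4 * (2 + m) * (2 / ((V : ℝ) + 1)) ≤ 12 := by
    rw [mul_div_assoc', div_le_iff₀ (by linarith)]
    linarith
  have hY0 : 0 ≤ Y := by positivity
  nlinarith

/-! ### The sawtooth function -/

/-- The sawtooth function `ψ(t) = {t} - 1/2`. -/
noncomputable def sawtooth (t : ℝ) : ℝ := Int.fract t - 1 / 2

/-- The periodic second Bernoulli function. -/
noncomputable def periodicBernoulliTwo (t : ℝ) : ℝ := Int.fract t ^ 2 - Int.fract t + 1 / 6

lemma abs_sawtooth_le (t : ℝ) : |sawtooth t| ≤ 1 / 2 := by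
  have h1 := Int.fract_nonneg t
  have h2 := (Int.fract_lt_one t).le
  rw [sawtooth, abs_le]
  constructor <;> linarith

lemma hasSum_periodicBernoulliTwo (t : ℝ) :
    HasSum (fun n : ℕ => 1 / (n : ℝ) ^ 2 * Real.cos (2 * Real.pi * n * t))
      (Real.pi ^ 2 * periodicBernoulliTwo t) := by
  have h := hasSum_one_div_nat_pow_mul_cos one_ne_zero
    (x := Int.fract t) ⟨Int.fract_nonneg t, (Int.fract_lt_one t).le⟩
  have hcos : ∀ n : ℕ, Real.cos (2 * Real.pi * n * Int.fract t) =
      Real.cos (2 * Real.pi * n * t) := by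
    intro n
    rw [← Real.cos_sub_int_mul_two_pi (2 * Real.pi * n * t) (n * ⌊t⌋), Int.fract]
    congr 1
    push_cast
    ring
  have hval : (-1 : ℝ) ^ (1 + 1) * (2 * Real.pi) ^ (2 * 1) / 2 / ((2 * 1).factorial : ℝ) *
      (Polynomial.map (algebraMap ℚ ℝ) (Polynomial.bernoulli (2 * 1))).eval (Int.fract t) =
      Real.pi ^ 2 * periodicBernoulliTwo t := by
    have : (2 * 1 : ℕ) = 2 := rfl
    rw [this, Polynomial.bernoulli]
    simp [periodicBernoulliTwo, Finset.sum_range_succ, bernoulli_two, Polynomial.eval_monomial]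
    ring
  rw [hval] at h
  simpa only [hcos, mul_one] using h

lemma sawtooth_mul_le {δ : ℝ} (hδ : 0 < δ) (hδ1 : δ < 1) (t : ℝ) :
    2 * δ * sawtooth t ≤ δ ^ 2 + (periodicBernoulliTwo t - periodicBernoulliTwo (t - δ)) := by
  have f0 := Int.fract_nonneg t
  have f1 := Int.fract_lt_one t
  have g0 := Int.fract_nonneg (t - δ)
  have g1 := Int.fract_lt_one (t - δ)
  obtain ⟨k, hk⟩ : ∃ k : ℤ, Int.fract t - Int.fract (t - δ) = δ - k :=
    ⟨⌊t⌋ - ⌊t - δ⌋, by simp only [Int.fract]; push_cast; ring⟩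
  have hk0 : -1 < k := by
    have : (-1 : ℝ) < k := by linarith
    exact_mod_cast this
  have hk2 : k < 2 := by
    have : (k : ℝ) < 2 := by linarith
    exact_mod_cast this
  simp only [sawtooth, periodicBernoulliTwo]
  obtain rfl | rfl : k = 0 ∨ k = 1 := by omega
  · have : Int.fract (t - δ) = Int.fract t - δ := by push_cast at hk; linarith
    rw [this]
    nlinarith
  · have : Int.fract (t - δ) = Int.fract t - δ + 1 := by push_cast at hk; linarith
    rw [this] at g1 ⊢
    nlinarith

lemma le_sawtooth_mul {δ : ℝ} (hδ : 0 < δ) (hδ1 : δ < 1) (t : ℝ) :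
    -δ ^ 2 + (periodicBernoulliTwo (t + δ) - periodicBernoulliTwo t) ≤ 2 * δ * sawtooth t := by
  have f0 := Int.fract_nonneg t
  have f1 := Int.fract_lt_one t
  have g0 := Int.fract_nonneg (t + δ)
  have g1 := Int.fract_lt_one (t + δ)
  obtain ⟨k, hk⟩ : ∃ k : ℤ, Int.fract (t + δ) - Int.fract t = δ - k :=
    ⟨⌊t + δ⌋ - ⌊t⌋, by simp only [Int.fract]; push_cast; ring⟩
  have hk0 : -1 < k := by
    have : (-1 : ℝ) < k := by linarith
    exact_mod_cast this
  have hk2 : k < 2 := by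
    have : (k : ℝ) < 2 := by linarith
    exact_mod_cast this
  simp only [sawtooth, periodicBernoulliTwo]
  obtain rfl | rfl : k = 0 ∨ k = 1 := by omega
  · have : Int.fract (t + δ) = Int.fract t + δ := by push_cast at hk; linarith
    rw [this]
    nlinarith
  · have : Int.fract (t + δ) = Int.fract t + δ - 1 := by push_cast at hk; linarith
    rw [this] at g0 ⊢
    nlinarith

lemma norm_e_sub_one_le (t : ℝ) : ‖e t - 1‖ ≤ 2 * Real.pi * |t| := by
  have h := Real.norm_exp_I_mul_ofReal_sub_one_le (x := 2 * Real.pi * t)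
  rw [mul_comm Complex.I] at h
  refine h.trans (le_of_eq ?_)
  rw [Real.norm_eq_abs, abs_mul, abs_of_pos Real.two_pi_pos]

lemma abs_sum_periodicBernoulliTwo_sub_le {s : Finset ℕ} {t : ℕ → ℝ} {d W : ℝ} (hd : d ≠ 0)
    (hW : ∀ N : ℕ, ∑ h ∈ range N, min (1 / (h : ℝ)) (1 / (|d| * (h : ℝ) ^ 2)) *
      ‖∑ n ∈ s, e (h * t n)‖ ≤ W) :
    |∑ n ∈ s, (periodicBernoulliTwo (t n + d) - periodicBernoulliTwo (t n))| ≤ 2 * |d| * W := by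
  have hd0 : 0 < |d| := abs_pos.mpr hd
  have hsum : HasSum (fun h : ℕ => 1 / (h : ℝ) ^ 2 *
      ((e (h * d) - 1) * ∑ n ∈ s, e (h * t n)).re)
      (Real.pi ^ 2 * ∑ n ∈ s, (periodicBernoulliTwo (t n + d) - periodicBernoulliTwo (t n))) := by
    rw [Finset.mul_sum]
    have := hasSum_sum (s := s) fun n _ => (hasSum_periodicBernoulliTwo (t n + d)).sub
      (hasSum_periodicBernoulliTwo (t n))
    simp only [← mul_sub] at this
    have hfun : (fun h : ℕ => 1 / (h : ℝ) ^ 2 * ((e (h * d) - 1) * ∑ n ∈ s, e (h * t n)).re) =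
        fun h : ℕ => ∑ n ∈ s, 1 / (h : ℝ) ^ 2 * (Real.cos (2 * Real.pi * h * (t n + d)) -
          Real.cos (2 * Real.pi * h * t n)) := by
      funext h
      rw [Finset.mul_sum, Complex.re_sum, Finset.mul_sum]
      refine Finset.sum_congr rfl fun n _ => ?_
      rw [sub_mul, one_mul, ← e_add, Complex.sub_re, e_eq, e_eq]
      simp only [Complex.add_re, Complex.ofReal_re, Complex.re_ofReal_mul, Complex.I_re, mul_zero,
        add_zero]
      congr 3 <;> ring_nf
    rw [hfun]
    exact this
  have hterm : ∀ h : ℕ, |1 / (h : ℝ) ^ 2 * ((e (h * d) - 1) * ∑ n ∈ s, e (h * t n)).re| ≤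
      2 * Real.pi * |d| * (min (1 / (h : ℝ)) (1 / (|d| * (h : ℝ) ^ 2)) *
        ‖∑ n ∈ s, e (h * t n)‖) := by
    intro h
    rcases Nat.eq_zero_or_pos h with rfl | hh
    · simp
    have hh0 : (0 : ℝ) < h := by exact_mod_cast hh
    have h1 : ‖e (h * d) - 1‖ ≤ 2 * Real.pi * (h * |d|) := by
      have := norm_e_sub_one_le (h * d)
      rwa [abs_mul, abs_of_pos hh0] at this
    have h2 : ‖e (h * d) - 1‖ ≤ 2 * Real.pi := by
      have := norm_sub_le (e (h * d)) 1
      rw [norm_e, norm_one] at this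
      linarith [Real.pi_gt_three]
    have h3 : 1 / (h : ℝ) ^ 2 * ‖e (h * d) - 1‖ ≤
        2 * Real.pi * |d| * min (1 / (h : ℝ)) (1 / (|d| * (h : ℝ) ^ 2)) := by
      rw [mul_min_of_nonneg _ _ (by positivity)]
      refine le_min ?_ ?_
      · calc 1 / (h : ℝ) ^ 2 * ‖e (h * d) - 1‖ ≤ 1 / (h : ℝ) ^ 2 * (2 * Real.pi * (h * |d|)) := by
              gcongr
          _ = _ := by field_simp
      · calc 1 / (h : ℝ) ^ 2 * ‖e (h * d) - 1‖ ≤ 1 / (h : ℝ) ^ 2 * (2 * Real.pi) := by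
              gcongr
          _ = _ := by field_simp
    rw [abs_mul, abs_of_nonneg (by positivity : 0 ≤ 1 / (h : ℝ) ^ 2), ← mul_assoc]
    refine (mul_le_mul_of_nonneg_left (Complex.abs_re_le_norm _) (by positivity)).trans ?_
    rw [norm_mul, ← mul_assoc]
    gcongr
  have hlim : |Real.pi ^ 2 *
      ∑ n ∈ s, (periodicBernoulliTwo (t n + d) - periodicBernoulliTwo (t n))| ≤
      2 * Real.pi * |d| * W := by
    refine le_of_tendsto hsum.tendsto_sum_nat.abs (Eventually.of_forall fun N => ?_)
    refine (Finset.abs_sum_le_sum_abs _ _).trans ((Finset.sum_le_sum fun h _ => hterm h).trans ?_)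
    rw [← Finset.mul_sum]
    gcongr
    exact hW N
  rw [abs_mul, abs_of_pos (by positivity)] at hlim
  have hW0 : 0 ≤ W := by simpa using hW 0
  have hpi := Real.pi_gt_three
  have h4 : Real.pi * (Real.pi *
      |∑ n ∈ s, (periodicBernoulliTwo (t n + d) - periodicBernoulliTwo (t n))|) ≤
      Real.pi * (2 * |d| * W) := by
    calc _ = Real.pi ^ 2 * |∑ n ∈ s, (periodicBernoulliTwo (t n + d) -
            periodicBernoulliTwo (t n))| := by ring
      _ ≤ _ := hlim
      _ = _ := by ring
  have h5 := le_of_mul_le_mul_left h4 Real.pi_pos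
  have h6 := abs_nonneg (∑ n ∈ s, (periodicBernoulliTwo (t n + d) - periodicBernoulliTwo (t n)))
  nlinarith

lemma abs_sum_sawtooth_le {s : Finset ℕ} {t : ℕ → ℝ} {δ W : ℝ} (hδ : 0 < δ) (hδ1 : δ < 1)
    (hW : ∀ N : ℕ, ∑ h ∈ range N, min (1 / (h : ℝ)) (1 / (δ * (h : ℝ) ^ 2)) *
      ‖∑ n ∈ s, e (h * t n)‖ ≤ W) :
    |∑ n ∈ s, sawtooth (t n)| ≤ δ / 2 * s.card + W := by
  have hup := abs_sum_periodicBernoulliTwo_sub_le (s := s) (t := t) (d := -δ) (W := W)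
    (by linarith) (by simpa only [abs_neg, abs_of_pos hδ] using hW)
  have hlo := abs_sum_periodicBernoulliTwo_sub_le (s := s) (t := t) (d := δ) (W := W)
    hδ.ne' (by simpa only [abs_of_pos hδ] using hW)
  rw [abs_neg, abs_of_pos hδ] at hup
  rw [abs_of_pos hδ] at hlo
  have h1 := Finset.sum_le_sum fun n (_ : n ∈ s) => sawtooth_mul_le hδ hδ1 (t n)
  have h2 := Finset.sum_le_sum fun n (_ : n ∈ s) => le_sawtooth_mul hδ hδ1 (t n)
  rw [← Finset.mul_sum, Finset.sum_add_distrib, Finset.sum_const, nsmul_eq_mul] at h1 h2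
  simp only [← sub_eq_add_neg, Finset.sum_sub_distrib] at hup hlo h1 h2
  rw [abs_le] at hup hlo ⊢
  constructor
  · refine le_of_mul_le_mul_left (a := 2 * δ) ?_ (by linarith)
    nlinarith
  · refine le_of_mul_le_mul_left (a := 2 * δ) ?_ (by linarith)
    nlinarith

lemma min_inv_le {h K α : ℝ} (hh : 0 < h) (hK : 0 < K) (hα : 0 ≤ α) (hα1 : α ≤ 1) :
    min (1 / h) (K / h ^ 2) ≤ K ^ α * h ^ (-(1 + α)) := by
  rcases le_total K h with hle | hle
  · refine (min_le_right _ _).trans ?_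
    have h1 : (K / h) ^ (1 : ℝ) ≤ (K / h) ^ α :=
      Real.rpow_le_rpow_of_exponent_ge (by positivity) ((div_le_one hh).mpr hle) hα1
    rw [Real.rpow_one, Real.div_rpow hK.le hh.le] at h1
    calc K / h ^ 2 = K / h * (1 / h) := by ring
      _ ≤ K ^ α / h ^ α * (1 / h) := by gcongr
      _ = _ := by
        rw [Real.rpow_neg hh.le, Real.rpow_add hh, Real.rpow_one]
        field_simp
  · refine (min_le_left _ _).trans ?_
    have h1 : 1 ≤ (K / h) ^ α := Real.one_le_rpow ((one_le_div hh).mpr hle) hα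
    rw [Real.div_rpow hK.le hh.le] at h1
    calc 1 / h = 1 * (1 / h) := by ring
      _ ≤ K ^ α / h ^ α * (1 / h) := by gcongr
      _ = _ := by
        rw [Real.rpow_neg hh.le, Real.rpow_add hh, Real.rpow_one]
        field_simp

lemma exists_abs_sum_sawtooth_block_le : ∃ C : ℝ, 0 ≤ C ∧ ∀ (x δ : ℝ) (a b : ℕ), 1 ≤ a → a < b →
    b ≤ 3 * a → (a : ℝ) ^ 2 ≤ x → 0 < δ → δ < 1 →
    |∑ n ∈ Finset.Ioc a b, sawtooth (x / n)| ≤ δ * a +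
      C * ((1 / δ) ^ (41 / 100 : ℝ) * (x ^ (2 / 5 : ℝ) * (a : ℝ) ^ (-(11 / 40) : ℝ)) +
        (1 / δ) ^ (97 / 200 : ℝ) * (x / a) ^ (19 / 40 : ℝ)) := by
  obtain ⟨C, hC, hexp⟩ := exists_norm_sum_e_div_le
  have hζ : Summable fun h : ℕ => (h : ℝ) ^ (-(101 / 100) : ℝ) :=
    Real.summable_nat_rpow.mpr (by norm_num)
  set Z := ∑' h : ℕ, (h : ℝ) ^ (-(101 / 100) : ℝ) with hZ
  have hZ0 : 0 ≤ Z := tsum_nonneg fun h => by positivity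
  refine ⟨C * Z, by positivity, fun x δ a b ha hab hb3 hax hδ hδ1 => ?_⟩
  have ha' : (1 : ℝ) ≤ a := by exact_mod_cast ha
  have hx : 0 < x := by nlinarith
  set Y := x ^ (2 / 5 : ℝ) * (a : ℝ) ^ (-(11 / 40) : ℝ) with hY
  set X := (x / a) ^ (19 / 40 : ℝ) with hX
  set B := (1 / δ) ^ (41 / 100 : ℝ) * Y + (1 / δ) ^ (97 / 200 : ℝ) * X with hB
  have hB0 : 0 ≤ B := by positivity
  have hterm : ∀ h : ℕ, min (1 / (h : ℝ)) (1 / (δ * (h : ℝ) ^ 2)) *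
      ‖∑ n ∈ Finset.Ioc a b, e (h * (x / n))‖ ≤ C * B * (h : ℝ) ^ (-(101 / 100) : ℝ) := by
    intro h
    rcases Nat.eq_zero_or_pos h with rfl | hh
    · simp
    have hh1 : (1 : ℝ) ≤ h := by exact_mod_cast hh
    have hh0 : (0 : ℝ) < h := by linarith
    have hS := hexp (h * x) a b ha hab hb3 (by nlinarith)
    simp only [mul_div_assoc] at hS
    rw [Real.mul_rpow hh0.le hx.le, Real.mul_rpow hh0.le (by positivity), mul_assoc, ← hY, ← hX]
      at hS
    have hw : ∀ α : ℝ, 0 ≤ α → α ≤ 1 → min (1 / (h : ℝ)) (1 / (δ * (h : ℝ) ^ 2)) ≤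
        (1 / δ) ^ α * (h : ℝ) ^ (-(1 + α)) := by
      intro α h0 h1
      have := min_inv_le hh0 (one_div_pos.mpr hδ) h0 h1
      rwa [div_div] at this
    have hmin0 : 0 ≤ min (1 / (h : ℝ)) (1 / (δ * (h : ℝ) ^ 2)) := by positivity
    have hw1 := hw (41 / 100) (by norm_num) (by norm_num)
    have hw2 := hw (97 / 200) (by norm_num) (by norm_num)
    have p1 : (h : ℝ) ^ (-(1 + 41 / 100) : ℝ) * (h : ℝ) ^ (2 / 5 : ℝ) =
        (h : ℝ) ^ (-(101 / 100) : ℝ) := by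
      rw [← Real.rpow_add hh0]; norm_num
    have p2 : (h : ℝ) ^ (-(1 + 97 / 200) : ℝ) * (h : ℝ) ^ (19 / 40 : ℝ) =
        (h : ℝ) ^ (-(101 / 100) : ℝ) := by
      rw [← Real.rpow_add hh0]; norm_num
    set w := min (1 / (h : ℝ)) (1 / (δ * (h : ℝ) ^ 2))
    calc w * ‖∑ n ∈ Finset.Ioc a b, e (h * (x / n))‖
        ≤ w * (C * ((h : ℝ) ^ (2 / 5 : ℝ) * Y + (h : ℝ) ^ (19 / 40 : ℝ) * X)) := by gcongr
      _ = C * (w * ((h : ℝ) ^ (2 / 5 : ℝ) * Y) + w * ((h : ℝ) ^ (19 / 40 : ℝ) * X)) := by ring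
      _ ≤ C * ((1 / δ) ^ (41 / 100 : ℝ) * (h : ℝ) ^ (-(1 + 41 / 100) : ℝ) *
            ((h : ℝ) ^ (2 / 5 : ℝ) * Y) + (1 / δ) ^ (97 / 200 : ℝ) *
            (h : ℝ) ^ (-(1 + 97 / 200) : ℝ) * ((h : ℝ) ^ (19 / 40 : ℝ) * X)) := by
          gcongr
      _ = C * ((1 / δ) ^ (41 / 100 : ℝ) * Y *
            ((h : ℝ) ^ (-(1 + 41 / 100) : ℝ) * (h : ℝ) ^ (2 / 5 : ℝ)) +
            (1 / δ) ^ (97 / 200 : ℝ) * X *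
            ((h : ℝ) ^ (-(1 + 97 / 200) : ℝ) * (h : ℝ) ^ (19 / 40 : ℝ))) := by ring
      _ = C * B * (h : ℝ) ^ (-(101 / 100) : ℝ) := by rw [p1, p2, hB]; ring
  refine (abs_sum_sawtooth_le (W := C * Z * B) hδ hδ1 fun N => ?_).trans ?_
  · refine (Finset.sum_le_sum fun h _ => hterm h).trans ?_
    rw [← Finset.mul_sum]
    calc C * B * ∑ h ∈ range N, (h : ℝ) ^ (-(101 / 100) : ℝ) ≤ C * B * Z := by
          gcongr
          exact hζ.sum_le_tsum _ fun h _ => by positivity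
      _ = C * Z * B := by ring
  · have hb3' : (b : ℝ) ≤ 3 * a := by exact_mod_cast hb3
    rw [Nat.card_Ioc, Nat.cast_sub hab.le]
    have : δ / 2 * ((b : ℝ) - a) ≤ δ * a := by nlinarith
    linarith

lemma exists_abs_sum_sawtooth_Ioc_le : ∃ C : ℝ, 1 ≤ C ∧ ∀ (x : ℝ) (a b : ℕ), 1 ≤ a → a < b →
    b ≤ 3 * a → (a : ℝ) ^ 2 ≤ x →
    |∑ n ∈ Finset.Ioc a b, sawtooth (x / n)| ≤ C * x ^ (997 / 3000 : ℝ) := by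
  obtain ⟨C, hC, hblock⟩ := exists_abs_sum_sawtooth_block_le
  refine ⟨2 * C + 1, by linarith, fun x a b ha hab hb3 hax => ?_⟩
  have ha' : (1 : ℝ) ≤ a := by exact_mod_cast ha
  have ha0 : (0 : ℝ) < a := by linarith
  have hx1 : 1 ≤ x := by nlinarith
  have hx0 : 0 < x := by linarith
  have hb3' : (b : ℝ) ≤ 3 * a := by exact_mod_cast hb3
  have hax' : (a : ℝ) ≤ x ^ (1 / 2 : ℝ) := by
    rw [← Real.sqrt_eq_rpow]
    exact Real.le_sqrt_of_sq_le hax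
  have hapow : ∀ c : ℝ, 0 ≤ c → (a : ℝ) ^ c ≤ x ^ (1 / 2 * c) := fun c hc => by
    rw [Real.rpow_mul hx0.le]
    exact Real.rpow_le_rpow ha0.le hax' hc
  set T := x ^ (997 / 3000 : ℝ) with hT
  have hT0 : 0 < T := by positivity
  rcases le_or_gt (a : ℝ) T with haT | haT
  · have h1 : |∑ n ∈ Finset.Ioc a b, sawtooth (x / n)| ≤ a := by
      refine (Finset.abs_sum_le_sum_abs _ _).trans
        ((Finset.sum_le_sum fun (n : ℕ) _ => abs_sawtooth_le (x / n)).trans ?_)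
      rw [Finset.sum_const, Nat.card_Ioc, nsmul_eq_mul, Nat.cast_sub hab.le]
      linarith
    nlinarith
  · have h := hblock x (T / a) a b ha hab hb3 hax (by positivity) ((div_lt_one ha0).mpr haT)
    rw [div_mul_cancel₀ _ ha0.ne', one_div_div] at h
    have hTpow : ∀ c : ℝ, T ^ c = x ^ (997 / 3000 * c) := fun c => by
      rw [hT, Real.rpow_mul hx0.le]
    have h1 : ((a : ℝ) / T) ^ (41 / 100 : ℝ) * (x ^ (2 / 5 : ℝ) * (a : ℝ) ^ (-(11 / 40) : ℝ)) ≤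
        T := by
      calc ((a : ℝ) / T) ^ (41 / 100 : ℝ) * (x ^ (2 / 5 : ℝ) * (a : ℝ) ^ (-(11 / 40) : ℝ))
          = (a : ℝ) ^ (27 / 200 : ℝ) * (x ^ (2 / 5 : ℝ) / x ^ (997 / 3000 * (41 / 100) : ℝ)) := by
            rw [Real.div_rpow ha0.le hT0.le, hTpow,
              show (27 / 200 : ℝ) = 41 / 100 + -(11 / 40) by norm_num, Real.rpow_add ha0]
            ring
        _ ≤ x ^ (1 / 2 * (27 / 200) : ℝ) *
              (x ^ (2 / 5 : ℝ) / x ^ (997 / 3000 * (41 / 100) : ℝ)) := by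
            gcongr
            exact hapow _ (by norm_num)
        _ = x ^ (1 / 2 * (27 / 200) + (2 / 5 - 997 / 3000 * (41 / 100)) : ℝ) := by
            rw [Real.rpow_add hx0, Real.rpow_sub hx0]
        _ ≤ T := Real.rpow_le_rpow_of_exponent_le hx1 (by norm_num)
    have h2 : ((a : ℝ) / T) ^ (97 / 200 : ℝ) * (x / a) ^ (19 / 40 : ℝ) ≤ T := by
      calc ((a : ℝ) / T) ^ (97 / 200 : ℝ) * (x / a) ^ (19 / 40 : ℝ)
          = (a : ℝ) ^ (1 / 100 : ℝ) * (x ^ (19 / 40 : ℝ) / x ^ (997 / 3000 * (97 / 200) : ℝ)) := by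
            rw [Real.div_rpow ha0.le hT0.le, Real.div_rpow hx0.le ha0.le, hTpow,
              show (1 / 100 : ℝ) = 97 / 200 - 19 / 40 by norm_num, Real.rpow_sub ha0]
            ring
        _ ≤ x ^ (1 / 2 * (1 / 100) : ℝ) *
              (x ^ (19 / 40 : ℝ) / x ^ (997 / 3000 * (97 / 200) : ℝ)) := by
            gcongr
            exact hapow _ (by norm_num)
        _ = x ^ (1 / 2 * (1 / 100) + (19 / 40 - 997 / 3000 * (97 / 200)) : ℝ) := by
            rw [Real.rpow_add hx0, Real.rpow_sub hx0]
        _ ≤ T := Real.rpow_le_rpow_of_exponent_le hx1 (by norm_num)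
    nlinarith

lemma exists_abs_sum_sawtooth_div_le : ∃ C : ℝ, 0 ≤ C ∧ ∀ (x : ℝ) (N : ℕ), 1 ≤ x →
    (N : ℝ) ^ 2 ≤ x → |∑ n ∈ Finset.Ioc 0 N, sawtooth (x / n)| ≤ C * x ^ (1 / 3 : ℝ) := by
  obtain ⟨C, hC, hblock⟩ := exists_abs_sum_sawtooth_Ioc_le
  have hdyadic : ∀ (x : ℝ), 1 ≤ x → ∀ N : ℕ, (N : ℝ) ^ 2 ≤ x →
      |∑ n ∈ Finset.Ioc 0 N, sawtooth (x / n)| ≤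
        C * x ^ (997 / 3000 : ℝ) * (1 + Nat.log 2 N) := by
    intro x hx N
    have hT1 : 1 ≤ x ^ (997 / 3000 : ℝ) := Real.one_le_rpow hx (by norm_num)
    induction N using Nat.strong_induction_on with
    | _ N ih =>
      intro hN
      rcases lt_or_ge N 2 with h2 | h2
      · have h1 : |∑ n ∈ Finset.Ioc 0 N, sawtooth (x / n)| ≤ 1 := by
          refine (Finset.abs_sum_le_sum_abs _ _).trans
            ((Finset.sum_le_sum fun (n : ℕ) _ => abs_sawtooth_le (x / n)).trans ?_)
          rw [Finset.sum_const, Nat.card_Ioc, nsmul_eq_mul, Nat.sub_zero]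
          have : (N : ℝ) ≤ 1 := by exact_mod_cast Nat.lt_succ_iff.mp h2
          linarith
        have h3 : (0 : ℝ) ≤ Nat.log 2 N := by positivity
        nlinarith [mul_nonneg (mul_nonneg (by linarith : 0 ≤ C) (by linarith : 0 ≤
          x ^ (997 / 3000 : ℝ))) h3]
      · have hle : N / 2 ≤ N := Nat.div_le_self N 2
        have hsq : ((N / 2 : ℕ) : ℝ) ^ 2 ≤ x := by
          have : ((N / 2 : ℕ) : ℝ) ≤ N := by exact_mod_cast hle
          exact le_trans (by gcongr) hN
        have h1 := ih (N / 2) (by omega) hsq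
        have h3 := hblock x (N / 2) N (by omega) (by omega) (by omega) hsq
        have hlog : Nat.log 2 N = Nat.log 2 (N / 2) + 1 := Nat.log_of_one_lt_of_le (by norm_num) h2
        rw [← Finset.sum_Ioc_consecutive _ (Nat.zero_le (N / 2)) hle, hlog]
        refine (abs_add_le _ _).trans ((add_le_add h1 h3).trans (le_of_eq ?_))
        push_cast
        ring
  refine ⟨C * 1001, by linarith, fun x N hx hN => (hdyadic x hx N hN).trans ?_⟩
  have hx0 : 0 < x := by linarith
  have hlogle : (1 + Nat.log 2 N : ℝ) ≤ 1001 * x ^ (1 / 1000 : ℝ) := by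
    have h1 : 1 ≤ x ^ (1 / 1000 : ℝ) := Real.one_le_rpow hx (by norm_num)
    have h2 : Real.log x ≤ x ^ (1 / 1000 : ℝ) / (1 / 1000) :=
      Real.log_le_rpow_div hx0.le (by norm_num)
    have h3 : (Nat.log 2 N : ℝ) ≤ Real.log x := by
      rcases Nat.eq_zero_or_pos N with rfl | hN0
      · simpa using Real.log_nonneg hx
      have hN1 : (1 : ℝ) ≤ N := by exact_mod_cast hN0
      have h4 : ((2 : ℝ) ^ Nat.log 2 N) ≤ N := by exact_mod_cast Nat.pow_log_le_self 2 hN0.ne'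
      have h5 : Real.log (((2 : ℝ) ^ Nat.log 2 N) ^ 2) ≤ Real.log x := by
        refine Real.log_le_log (by positivity) (le_trans ?_ hN)
        gcongr
      rw [Real.log_pow, Real.log_pow] at h5
      have h6 := Real.log_two_gt_d9
      have h7 : (0 : ℝ) ≤ Nat.log 2 N := by positivity
      push_cast at h5
      nlinarith
    linarith
  calc C * x ^ (997 / 3000 : ℝ) * (1 + Nat.log 2 N)
      ≤ C * x ^ (997 / 3000 : ℝ) * (1001 * x ^ (1 / 1000 : ℝ)) := by gcongr
    _ = C * 1001 * (x ^ (997 / 3000 : ℝ) * x ^ (1 / 1000 : ℝ)) := by ring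
    _ = C * 1001 * x ^ (1 / 3 : ℝ) := by rw [← Real.rpow_add hx0]; norm_num

/-! ### The hyperbola method and the main term -/

/-- The Dirichlet hyperbola identity for the summatory divisor function. -/
lemma sum_div_add_sq_sqrt (M : ℕ) :
    ∑ n ∈ Finset.Ioc 0 M, M / n + M.sqrt ^ 2 = 2 * ∑ n ∈ Finset.Ioc 0 M.sqrt, M / n := by
  set N := M.sqrt with hN
  have hNM : N ≤ M := Nat.sqrt_le_self M
  have hlt : M < (N + 1) * (N + 1) := Nat.lt_succ_sqrt M
  have hle : N * N ≤ M := Nat.sqrt_le M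
  have habove : ∀ n ∈ Finset.Ioc N M,
      #(Finset.bipartiteAbove (fun n m => n * m ≤ M) (Finset.Ioc 0 N) n) = M / n := by
    intro n hn
    rw [Finset.mem_Ioc] at hn
    have hn0 : 0 < n := by omega
    have hdiv : M / n ≤ N := by
      rw [← Nat.lt_succ_iff, Nat.div_lt_iff_lt_mul hn0]
      nlinarith
    have : Finset.bipartiteAbove (fun n m => n * m ≤ M) (Finset.Ioc 0 N) n =
        Finset.Ioc 0 (M / n) := by
      ext m
      rw [Finset.mem_bipartiteAbove, Finset.mem_Ioc, Finset.mem_Ioc, Nat.le_div_iff_mul_le hn0,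
        mul_comm n m, ← Nat.le_div_iff_mul_le hn0]
      omega
    rw [this, Nat.card_Ioc, Nat.sub_zero]
  have hbelow : ∀ m ∈ Finset.Ioc 0 N,
      #(Finset.bipartiteBelow (fun n m => n * m ≤ M) (Finset.Ioc N M) m) + N = M / m := by
    intro m hm
    rw [Finset.mem_Ioc] at hm
    have hdiv : N ≤ M / m := by
      rw [Nat.le_div_iff_mul_le hm.1]
      nlinarith
    have hself := Nat.div_le_self M m
    have : Finset.bipartiteBelow (fun n m => n * m ≤ M) (Finset.Ioc N M) m =
        Finset.Ioc N (M / m) := by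
      ext n
      rw [Finset.mem_bipartiteBelow, Finset.mem_Ioc, Finset.mem_Ioc, ← Nat.le_div_iff_mul_le hm.1]
      omega
    rw [this, Nat.card_Ioc, Nat.sub_add_cancel hdiv]
  have h1 : ∑ n ∈ Finset.Ioc N M, M / n + N ^ 2 = ∑ m ∈ Finset.Ioc 0 N, M / m := by
    rw [← Finset.sum_congr rfl habove,
      Finset.sum_card_bipartiteAbove_eq_sum_card_bipartiteBelow, ← Finset.sum_congr rfl hbelow,
      Finset.sum_add_distrib, Finset.sum_const, Nat.card_Ioc, smul_eq_mul]
    simp [sq]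
  rw [← Finset.sum_Ioc_consecutive _ (Nat.zero_le N) hNM]
  omega

lemma tendsto_harmonic_sub_log_sub_div (c d : ℝ) :
    Tendsto (fun n : ℕ => (harmonic n : ℝ) - Real.log n - c / (n : ℝ) + d / (n : ℝ) ^ 2) atTop
      (nhds Real.eulerMascheroniConstant) := by
  have h1 : Tendsto (fun n : ℕ => c / (n : ℝ)) atTop (nhds 0) :=
    tendsto_const_div_atTop_nhds_zero_nat c
  have h2 : Tendsto (fun n : ℕ => d / (n : ℝ) ^ 2) atTop (nhds 0) := by
    have := (tendsto_const_div_atTop_nhds_zero_nat d).mul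
      (tendsto_const_div_atTop_nhds_zero_nat 1)
    rw [mul_zero] at this
    refine this.congr fun n => ?_
    rw [div_mul_div_comm, mul_one, sq]
  simpa using (Real.tendsto_harmonic_sub_log.sub h1).add h2

lemma log_succ_sub_log_le {n : ℕ} (hn : 1 ≤ n) :
    Real.log (n + 1 : ℕ) - Real.log n ≤ (1 / (n : ℝ) + 1 / (n + 1)) / 2 := by
  have hn0 : (0 : ℝ) < n := by exact_mod_cast hn
  have hy : (0 : ℝ) < ((n : ℝ) + 1) / n := by positivity
  have hy1 : 1 ≤ ((n : ℝ) + 1) / n := by rw [one_le_div hn0]; linarith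
  have h := Real.self_le_sinh_iff.mpr (Real.log_nonneg hy1)
  rw [Real.sinh_log hy] at h
  push_cast
  rw [← Real.log_div (by positivity) hn0.ne']
  refine h.trans (le_of_eq ?_)
  field_simp
  ring

lemma le_log_succ_sub_log {n : ℕ} (hn : 1 ≤ n) :
    2 / (2 * (n : ℝ) + 1) ≤ Real.log (n + 1 : ℕ) - Real.log n := by
  have hn0 : (0 : ℝ) < n := by exact_mod_cast hn
  have h := Real.le_log_one_add_of_nonneg (x := 1 / (n : ℝ)) (by positivity)
  push_cast
  rw [← Real.log_div (by positivity) hn0.ne']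
  convert h using 1
  · field_simp
    ring
  · congr 1
    field_simp

lemma abs_harmonic_sub_le {N : ℕ} (hN : 1 ≤ N) :
    |(harmonic N : ℝ) - Real.log N - Real.eulerMascheroniConstant - 1 / (2 * N)| ≤
      1 / (8 * (N : ℝ) ^ 2) := by
  set u : ℝ → ℕ → ℝ := fun d n =>
    (harmonic n : ℝ) - Real.log n - (1 / 2) / (n : ℝ) + d / (n : ℝ) ^ 2 with hu
  have hmono : ∀ n, 1 ≤ n → u 0 n ≤ u 0 (n + 1) := by
    intro n hn
    have hn0 : (0 : ℝ) < n := by exact_mod_cast hn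
    have h := log_succ_sub_log_le hn
    simp only [hu, harmonic_succ]
    push_cast at h ⊢
    have e1 : (1 / 2 : ℝ) / n = (1 / n) / 2 := by ring
    have e2 : (1 / 2 : ℝ) / (n + 1) = (1 / (n + 1)) / 2 := by ring
    rw [e1, e2, zero_div, zero_div, ← one_div]
    linarith
  have hanti : ∀ n, 1 ≤ n → u (1 / 8) (n + 1) ≤ u (1 / 8) n := by
    intro n hn
    have hn0 : (0 : ℝ) < n := by exact_mod_cast hn
    have h := le_log_succ_sub_log hn
    have key : 1 / ((n : ℝ) + 1) - 1 / 2 / (n + 1) + 1 / 8 / ((n : ℝ) + 1) ^ 2 + 1 / 2 / n -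
        1 / 8 / (n : ℝ) ^ 2 - 2 / (2 * n + 1) ≤ 0 := by
      have : 1 / ((n : ℝ) + 1) - 1 / 2 / (n + 1) + 1 / 8 / ((n : ℝ) + 1) ^ 2 + 1 / 2 / n -
        1 / 8 / (n : ℝ) ^ 2 - 2 / (2 * n + 1) =
          -1 / (8 * (n : ℝ) ^ 2 * (n + 1) ^ 2 * (2 * n + 1)) := by
        field_simp
        ring
      rw [this, neg_div, neg_nonpos]
      positivity
    simp only [hu, harmonic_succ]
    push_cast at h ⊢
    rw [← one_div]
    linarith
  have hlow : u 0 N ≤ Real.eulerMascheroniConstant := by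
    refine ge_of_tendsto (tendsto_harmonic_sub_log_sub_div (1 / 2) 0) ?_
    filter_upwards [eventually_ge_atTop N] with n hn
    exact Nat.le_induction (m := N) (P := fun n _ => u 0 N ≤ u 0 n) le_rfl
      (fun k hk ih => ih.trans (hmono k (hN.trans hk))) n hn
  have hup : Real.eulerMascheroniConstant ≤ u (1 / 8) N := by
    refine le_of_tendsto (tendsto_harmonic_sub_log_sub_div (1 / 2) (1 / 8)) ?_
    filter_upwards [eventually_ge_atTop N] with n hn
    exact Nat.le_induction (m := N) (P := fun n _ => u (1 / 8) n ≤ u (1 / 8) N) le_rfl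
      (fun k hk ih => (hanti k (hN.trans hk)).trans ih) n hn
  simp only [hu, div_div, zero_div, add_zero] at hlow hup
  have : (0 : ℝ) ≤ 1 / (8 * (N : ℝ) ^ 2) := by positivity
  rw [abs_le]
  constructor <;> linarith

lemma abs_main_term_sub_le {x : ℝ} {N : ℕ} (hN : 1 ≤ N) (h1 : (N : ℝ) ^ 2 ≤ x)
    (h2 : x ≤ ((N : ℝ) + 1) ^ 2) :
    |2 * x * harmonic N - N - (N : ℝ) ^ 2 -
      (x * Real.log x + (2 * Real.eulerMascheroniConstant - 1) * x)| ≤ 11 := by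
  have hN1 : (1 : ℝ) ≤ N := by exact_mod_cast hN
  have hN0 : (0 : ℝ) < N := by linarith
  have hx0 : 0 < x := by nlinarith
  have hH := abs_harmonic_sub_le hN
  set R := (harmonic N : ℝ) - Real.log N - Real.eulerMascheroniConstant - 1 / (2 * N) with hR
  have hR1 : |2 * x * R| ≤ 1 := by
    rw [abs_mul, abs_of_pos (by linarith)]
    calc 2 * x * |R| ≤ 2 * x * (1 / (8 * (N : ℝ) ^ 2)) := by gcongr
      _ ≤ 1 := by
        rw [mul_one_div, div_le_one (by positivity)]
        nlinarith
  set s := √x with hs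
  have hss : s ^ 2 = x := Real.sq_sqrt hx0.le
  have hsN : (N : ℝ) ≤ s := Real.le_sqrt_of_sq_le h1
  have hsN1 : s ≤ N + 1 :=
    (Real.sqrt_le_sqrt h2).trans_eq (Real.sqrt_sq (by linarith))
  have hs0 : 0 < s := by linarith
  set L := Real.log (s / N) with hL
  have hlog : Real.log x = 2 * L + 2 * Real.log N := by
    rw [hL, Real.log_div hs0.ne' hN0.ne', ← hss, Real.log_pow]
    push_cast
    ring
  have hLup : L ≤ s / N - 1 := Real.log_le_sub_one_of_pos (by positivity)
  have hLlo : 1 - (s / N)⁻¹ ≤ L := Real.one_sub_inv_le_log_of_pos (by positivity)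
  obtain ⟨r, hr⟩ : ∃ r, s = N * (1 + r) := ⟨s / N - 1, by field_simp; ring⟩
  have hr0 : 0 ≤ r := by nlinarith
  have hNr : N * r ≤ 1 := by nlinarith
  have hr1 : r ≤ 1 := by nlinarith
  have hsdiv : s / N = 1 + r := by rw [hr]; field_simp
  rw [hsdiv] at hLup hLlo
  have hxr : x = N ^ 2 * (1 + r) ^ 2 := by rw [← hss, hr]; ring
  have hNr2 : (N * r) ^ 2 ≤ 1 := pow_le_one₀ (by positivity) hNr
  have hL1 : x * L ≤ N ^ 2 * r + 3 := by
    calc x * L ≤ x * r := by gcongr; linarith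
      _ = N ^ 2 * r + (N * r) ^ 2 * (2 + r) := by rw [hxr]; ring
      _ ≤ N ^ 2 * r + 1 * (2 + 1) := by gcongr
      _ = _ := by ring
  have hL2 : N ^ 2 * r ≤ x * L := by
    calc N ^ 2 * r ≤ N ^ 2 * ((1 + r) * r) := by gcongr; nlinarith
      _ = x * (1 - (1 + r)⁻¹) := by rw [hxr]; field_simp; ring
      _ ≤ x * L := by gcongr
  have hxN : x / N - N ≤ 3 ∧ 0 ≤ x / N - N := by
    constructor
    · rw [sub_le_iff_le_add, div_le_iff₀ hN0]; nlinarith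
    · rw [sub_nonneg, le_div_iff₀ hN0]; nlinarith
  have hx2 : x - N ^ 2 - 2 * (N ^ 2 * r) = (N * r) ^ 2 := by rw [hxr]; ring
  have hx3 : 0 ≤ (N * r) ^ 2 := by positivity
  have hfinal : 2 * x * harmonic N - N - (N : ℝ) ^ 2 -
      (x * Real.log x + (2 * Real.eulerMascheroniConstant - 1) * x) =
      2 * x * R + (x / N - N) + (x - N ^ 2 - 2 * (x * L)) := by
    rw [hlog, hR]
    field_simp
    ring
  rw [hfinal]
  rw [abs_le] at hR1 ⊢
  constructor <;> linarith [hxN.1, hxN.2, hR1.1, hR1.2]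

lemma sum_floor_div_eq {x : ℝ} (hx : 0 ≤ x) :
    ∑ n ∈ Finset.Icc 1 ⌊x⌋₊, (⌊x / (n : ℝ)⌋₊ : ℝ) =
      2 * x * harmonic ⌊x⌋₊.sqrt - ⌊x⌋₊.sqrt - (⌊x⌋₊.sqrt : ℝ) ^ 2 -
        2 * ∑ n ∈ Finset.Ioc 0 ⌊x⌋₊.sqrt, sawtooth (x / n) := by
  have h := sum_div_add_sq_sqrt ⌊x⌋₊
  have h' : (∑ n ∈ Finset.Ioc 0 ⌊x⌋₊, (⌊x / (n : ℝ)⌋₊ : ℝ)) + (⌊x⌋₊.sqrt : ℝ) ^ 2 =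
      2 * ∑ n ∈ Finset.Ioc 0 ⌊x⌋₊.sqrt, (⌊x / (n : ℝ)⌋₊ : ℝ) := by
    simp only [Nat.floor_div_natCast]
    exact_mod_cast h
  have hterm : ∀ n ∈ Finset.Ioc 0 ⌊x⌋₊.sqrt,
      (⌊x / (n : ℝ)⌋₊ : ℝ) = x * (n : ℝ)⁻¹ - 1 / 2 - sawtooth (x / n) := by
    intro n _
    rw [natCast_floor_eq_intCast_floor (by positivity), sawtooth, Int.fract]
    ring
  have hIcc : ∀ k, Finset.Icc 1 k = Finset.Ioc 0 k := fun k => by ext; simp [Nat.succ_le_iff]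
  have hharm : (harmonic ⌊x⌋₊.sqrt : ℝ) = ∑ n ∈ Finset.Ioc 0 ⌊x⌋₊.sqrt, (n : ℝ)⁻¹ := by
    rw [harmonic_eq_sum_Icc, hIcc]
    push_cast
    rfl
  rw [Finset.sum_congr rfl hterm, Finset.sum_sub_distrib, Finset.sum_sub_distrib,
    ← Finset.mul_sum, ← hharm, Finset.sum_const, Nat.card_Ioc, nsmul_eq_mul, Nat.sub_zero] at h'
  rw [hIcc]
  linarith

end DivisorProblem

/-- `∑_{n ≤ x} ⌊x/n⌋ = x log x + (2γ − 1) x + O(x^{1/3})` as `x → ∞`. -/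
theorem sum_floor_div_asymptotic :
    (fun x : ℝ => (∑ n ∈ Finset.Icc 1 ⌊x⌋₊, (⌊x / (n : ℝ)⌋₊ : ℝ)) -
      (x * Real.log x + (2 * Real.eulerMascheroniConstant - 1) * x))
    =O[atTop] fun x : ℝ => x ^ ((1 : ℝ) / 3) := by
  obtain ⟨C, hC, hψ⟩ := DivisorProblem.exists_abs_sum_sawtooth_div_le
  refine Asymptotics.IsBigO.of_bound (2 * C + 11) ?_
  filter_upwards [eventually_ge_atTop 1] with x hx
  have hx0 : 0 ≤ x := by linarith
  set N := ⌊x⌋₊.sqrt with hN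
  have hN1 : 1 ≤ N := Nat.sqrt_pos.mpr (Nat.floor_pos.mpr hx)
  have hlo : (N : ℝ) ^ 2 ≤ x := by
    have h1 : ((N ^ 2 : ℕ) : ℝ) ≤ ⌊x⌋₊ := by exact_mod_cast Nat.sqrt_le' ⌊x⌋₊
    have h2 := Nat.floor_le hx0
    push_cast at h1
    linarith
  have hhi : x ≤ ((N : ℝ) + 1) ^ 2 := by
    have h1 : ⌊x⌋₊ + 1 ≤ (N + 1) ^ 2 := Nat.lt_succ_sqrt' ⌊x⌋₊
    have h2 : ((⌊x⌋₊ : ℝ) + 1) ≤ ((N : ℝ) + 1) ^ 2 := by exact_mod_cast h1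
    linarith [Nat.lt_floor_add_one x]
  have hm := DivisorProblem.abs_main_term_sub_le hN1 hlo hhi
  have hs := hψ x N hx hlo
  have hT1 : 1 ≤ x ^ ((1 : ℝ) / 3) := Real.one_le_rpow hx (by norm_num)
  rw [DivisorProblem.sum_floor_div_eq hx0, ← hN, Real.norm_eq_abs, Real.norm_eq_abs,
    abs_of_pos (by linarith : 0 < x ^ ((1 : ℝ) / 3))]
  rw [abs_le] at hm hs ⊢
  constructor <;> linarith [hm.1, hm.2, hs.1, hs.2]
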